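/- arXiv:2012.06529 — 3 statements merged into one kernel-verified Lean document; each statement's English description precedes it below -/
import Mathlib

section
/- Let Φ be a uniformly contracting C^{1+γ} smooth IFS on a compact interval I (γ > 0), with two maps having distinct fixed points, let p be a strictly positive probability vector, and assume Λ_c = {0}. Then for every ε > 0 there exists M (depending only on ε, p, Φ) such that for all k, h, h' > 0 with min(h, k−h) ≥ M and every cell A_η of the partition 𝒜^h, there exists a measurable subset Ā ⊆ A_η with: (i) ℙ(Ā) ≥ (1−ε)·ℙ(A_η); (ii) ℙ(𝒜_k^{h,h'}(ξ)) > 0 for every ξ ∈ Ā; (iii) for every ξ ∈ Ā and every subinterval J ⊆ [kχ, kχ+D'], |ℙ_{𝒜_k^{h,h'}(ξ)}({ω : S_{τ_k(ω)}(ω) ∈ J}) − Γ_{𝒜_k^{h,h'}(ξ)}(J)| ≤ ε. -/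
/-!
The derivative cocycle `c` turns `S_m` into a walk whose increments lie in a compact subset of
`(0, ∞)`, and the claim is a uniform renewal theorem for its overshoot over the level `kχ`. The
estimate holds at every point of a cell, so `Ā` can be taken to be the whole cell `A_η`: by bounded
distortion the walk is at height at most `hχ` plus a constant when it leaves the prefix `η`, and a
large `k - h` leaves it room to equidistribute.

Read from the last letter to the first, the walk is the Markov chain `(ω, s) ↦ (aω, s - c(a, ω))` on
`Ω × ℝ`, with transition operator `T`. Since the level is crossed exactly once, the probability of
crossing it with given prefix, tail and landing interval is a potential `∑ᵢ Tⁱ F` of an indicator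
function of time, up to a bounded Lipschitz recentring of time. It remains to see that such
potentials converge, uniformly, to a multiple of the length of the interval.

* Bounded Lipschitz harmonic functions are constant. By a maximum principle applied to limits of
  translates, the holonomies of all loops at a fixed point `aaa…` are periods of every such
  function. If these holonomies were contained in some `tℤ`, the stable holonomy of `aaa…` would be
  a Lipschitz transfer function putting `2π / t` into `Λ_c`. So the periods are dense, the function
  does not depend on time, and it is constant because prepending letters contracts `Ω`.
* By compactness, the potentials of Lipschitz test functions converge at infinity, uniformly over
  the test functions. Monotonicity and additivity of the renewal function force the limit for an
  interval to be a constant multiple of its length; the constant is positive and cancels in the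
  conditional probability.
-/

open MeasureTheory Filter Set
open scoped ENNReal Topology

noncomputable section

/-- `wordComp f ω m = f_{ω 0} ∘ f_{ω 1} ∘ ⋯ ∘ f_{ω (m-1)}`. -/
def wordComp {ι : Type*} (f : ι → ℝ → ℝ) (ω : ℕ → ι) : ℕ → ℝ → ℝ
  | 0 => id
  | m + 1 => wordComp f ω m ∘ f (ω m)

/-- Prepend a symbol to an infinite word. -/
def prepend {ι : Type*} (a : ι) (ω : ℕ → ι) : ℕ → ι := fun m =>
  match m with
  | 0 => a
  | k + 1 => ω k

/-- The metric `d_ρ` on the symbolic space. -/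
def dMet {ι : Type*} (ρ : ℝ) (ω ω' : ℕ → ι) : ℝ :=
  haveI := Classical.propDecidable (ω = ω')
  if ω = ω' then 0 else ρ ^ sInf {m : ℕ | ω m ≠ ω' m}

/-- `κ`-Hölder continuity with respect to the metric `d_ρ`. -/
def IsHolderW {ι : Type*} (κ ρ : ℝ) (φ : (ℕ → ι) → ℂ) : Prop :=
  ∃ H : ℝ, ∀ ω ω', ‖φ ω - φ ω'‖ ≤ H * dMet ρ ω ω' ^ κ

/-- The derivative cocycle `c(a, ω) = -log |f_a'(x_ω)|`. -/
def derivCocycle {ι : Type*} (f : ι → ℝ → ℝ) (xc : (ℕ → ι) → ℝ) (a : ι) (ω : ℕ → ι) : ℝ :=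
  -Real.log |deriv (f a) (xc ω)|

/-- The set `Λ_c` of periods of the derivative cocycle. -/
def LambdaC {ι : Type*} (f : ι → ℝ → ℝ) (xc : (ℕ → ι) → ℝ) (ρ κ : ℝ) : Set ℝ :=
  {θ | ∃ (φ : (ℕ → ι) → ℂ) (u : ℂ), IsHolderW κ ρ φ ∧ (∀ ω, ‖φ ω‖ = 1) ∧ ‖u‖ = 1 ∧
    ∀ (a : ι) (ω : ℕ → ι),
      φ (prepend a ω) = u * Complex.exp (-(((θ * derivCocycle f xc a ω : ℝ) : ℂ)) * Complex.I) * φ ω}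

/-- The left shift on the symbolic space. -/
def shift {ι : Type*} (ω : ℕ → ι) : ℕ → ι := fun i => ω (i + 1)

/-- The random walk `S_m(ω) = -log |f'_{ω|m}(x_{σ^m ω})|`. -/
def Sw {ι : Type*} (f : ι → ℝ → ℝ) (xc : (ℕ → ι) → ℝ) (m : ℕ) (ω : ℕ → ι) : ℝ :=
  -Real.log |deriv (wordComp f ω m) (xc (shift^[m] ω))|

/-- `S̃_m(ω) = -log max_{x ∈ I} |f'_{ω|m}(x)|`. -/
def Swt {ι : Type*} (f : ι → ℝ → ℝ) (a b : ℝ) (m : ℕ) (ω : ℕ → ι) : ℝ :=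
  -Real.log (sSup {s : ℝ | ∃ x ∈ Set.Icc a b, s = |deriv (wordComp f ω m) x|})

/-- The random variable `τ_k(ω) = min {m : S_m(ω) ≥ kχ}`. -/
def tauS {ι : Type*} (f : ι → ℝ → ℝ) (xc : (ℕ → ι) → ℝ) (χ k : ℝ) (ω : ℕ → ι) : ℕ :=
  sInf {m : ℕ | k * χ ≤ Sw f xc m ω}

/-- The stopping time `τ̃_h(ω) = min {m : S̃_m(ω) ≥ hχ}`. -/
def tauT {ι : Type*} (f : ι → ℝ → ℝ) (a b : ℝ) (χ h : ℝ) (ω : ℕ → ι) : ℕ :=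
  sInf {m : ℕ | h * χ ≤ Swt f a b m ω}

/-- The cell of the partition `𝒜^h` containing `ξ`, i.e. the cylinder `A_{ξ|τ̃_h(ξ)}`. -/
def cellA {ι : Type*} (f : ι → ℝ → ℝ) (a b χ h : ℝ) (ξ : ℕ → ι) : Set (ℕ → ι) :=
  {ω | ∀ i < tauT f a b χ h ξ, ω i = ξ i}

/-- The cell `𝒜_k^{h,h'}(ξ) = A_{k,η,η'}` of the partition `𝒜_k^{h,h'}` containing `ξ`. -/
def cell2 {ι : Type*} (f : ι → ℝ → ℝ) (xc : (ℕ → ι) → ℝ) (a b χ k h h' : ℝ)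
    (ξ : ℕ → ι) : Set (ℕ → ι) :=
  {ω | ω ∈ cellA f a b χ h ξ ∧
    shift^[tauS f xc χ k ω - 1] ω ∈ cellA f a b χ h' (shift^[tauS f xc χ k ξ - 1] ξ)}

/-- `X₁(ω) = -log |f'_{ω₁}(x_{σω})|`. -/
def Xone {ι : Type*} (f : ι → ℝ → ℝ) (xc : (ℕ → ι) → ℝ) (ω : ℕ → ι) : ℝ :=
  -Real.log |deriv (f (ω 0)) (xc (shift ω))|

/-- The value `Γ_{A_{k,η,η'}}(J)` of the limiting distribution on a set `J ⊆ ℝ`,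
where `B = A_{η'}`. -/
def GammaVal {ι : Type*} [MeasurableSpace ι] (P : MeasureTheory.Measure (ℕ → ι))
    (f : ι → ℝ → ℝ) (xc : (ℕ → ι) → ℝ) (B : Set (ℕ → ι)) (χ k : ℝ) (J : Set ℝ) : ℝ :=
  (∫ ω in B, (MeasureTheory.volume (Set.Icc (k * χ) (k * χ + Xone f xc ω) ∩ J)).toReal ∂P) /
    (∫ ω in B, Xone f xc ω ∂P)

/-- Conditional probability `ℙ_B(A)` as a real number. -/
def condP {ι : Type*} [MeasurableSpace ι] (P : MeasureTheory.Measure (ℕ → ι))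
    (B A : Set (ℕ → ι)) : ℝ :=
  (P (B ∩ A)).toReal / (P B).toReal

/-! ### Words -/

section Words

variable {ι : Type*} {ρ : ℝ}

theorem dMet_self (ρ : ℝ) (ω : ℕ → ι) : dMet ρ ω ω = 0 := by
  simp [dMet]

theorem dMet_of_ne {ω ω' : ℕ → ι} (h : ω ≠ ω') : dMet ρ ω ω' = ρ ^ sInf {m | ω m ≠ ω' m} := by
  simp [dMet, h]

theorem dMet_nonneg (hρ : 0 ≤ ρ) (ω ω' : ℕ → ι) : 0 ≤ dMet ρ ω ω' := by
  unfold dMet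
  split_ifs <;> positivity

theorem dMet_le_pow (h0 : 0 ≤ ρ) (h1 : ρ ≤ 1) {m : ℕ} {ω ω' : ℕ → ι}
    (h : ∀ i < m, ω i = ω' i) : dMet ρ ω ω' ≤ ρ ^ m := by
  unfold dMet
  split_ifs with he
  · positivity
  · refine pow_le_pow_of_le_one h0 h1 (le_csInf (Function.ne_iff.mp he) fun j hj => ?_)
    exact not_lt.mp fun hlt => hj (h j hlt)

theorem dMet_le_one (h0 : 0 ≤ ρ) (h1 : ρ ≤ 1) (ω ω' : ℕ → ι) : dMet ρ ω ω' ≤ 1 := by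
  simpa using dMet_le_pow h0 h1 (m := 0) (ω := ω) (ω' := ω') (by simp)

theorem dMet_prepend_le (h0 : 0 ≤ ρ) (h1 : ρ ≤ 1) (a : ι) (ω ω' : ℕ → ι) :
    dMet ρ (prepend a ω) (prepend a ω') ≤ ρ * dMet ρ ω ω' := by
  rcases eq_or_ne ω ω' with rfl | he
  · simp only [dMet_self, mul_zero, le_refl]
  · rw [dMet_of_ne he, ← pow_succ']
    refine dMet_le_pow h0 h1 fun i hi => ?_
    cases i with
    | zero => rfl
    | succ j => exact not_not.mp (Nat.notMem_of_lt_sInf (Nat.lt_of_succ_lt_succ hi))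

theorem prepend_shift (ω : ℕ → ι) : prepend (ω 0) (shift ω) = ω :=
  funext fun i => by cases i <;> rfl

/-- Prepend a finite word to an infinite word. -/
def wordAppend (u : List ι) (ω : ℕ → ι) : ℕ → ι := u.foldr prepend ω

/-- The prefix of length `m` of an infinite word. -/
def wordPrefix (m : ℕ) (ω : ℕ → ι) : List ι := (List.range m).map ω

theorem wordAppend_append (u v : List ι) (ω : ℕ → ι) :
    wordAppend (u ++ v) ω = wordAppend u (wordAppend v ω) := by
  simp only [wordAppend, List.foldr_append]

theorem wordPrefix_succ (m : ℕ) (ω : ℕ → ι) :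
    wordPrefix (m + 1) ω = ω 0 :: wordPrefix m (shift ω) := by
  simp only [wordPrefix, List.range_succ_eq_map, List.map_cons, List.map_map]
  rfl

theorem wordPrefix_const (m : ℕ) (a : ι) : wordPrefix m (fun _ => a) = List.replicate m a := by
  simp [wordPrefix]

theorem wordPrefix_congr {m : ℕ} {ξ ω : ℕ → ι} (h : ∀ i < m, ω i = ξ i) :
    wordPrefix m ω = wordPrefix m ξ :=
  List.map_congr_left fun i hi => h i (List.mem_range.mp hi)

theorem wordAppend_wordPrefix_apply {m i : ℕ} (hi : i < m) (ξ ω : ℕ → ι) :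
    wordAppend (wordPrefix m ξ) ω i = ξ i := by
  induction m generalizing ξ i with
  | zero => omega
  | succ m ih =>
    rw [wordPrefix_succ]
    cases i with
    | zero => rfl
    | succ j => exact ih (Nat.lt_of_succ_lt_succ hi) (shift ξ)

theorem wordAppend_wordPrefix_shift (m : ℕ) (ω : ℕ → ι) :
    wordAppend (wordPrefix m ω) (shift^[m] ω) = ω := by
  induction m generalizing ω with
  | zero => rfl
  | succ m ih =>
    rw [Function.iterate_succ_apply, wordPrefix_succ]
    exact (congrArg (prepend (ω 0)) (ih (shift ω))).trans (prepend_shift ω)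

theorem wordAppend_replicate_const (a : ι) (j : ℕ) :
    wordAppend (List.replicate j a) (fun _ => a) = fun _ => a := by
  induction j with
  | zero => rfl
  | succ j ih =>
    rw [List.replicate_succ]
    exact (congrArg (prepend a) ih).trans (prepend_shift fun _ => a)

/-- The sum of the cocycle `c` along the letters of a finite word `u` followed by `ω`. -/
def wordSum (c : ι → (ℕ → ι) → ℝ) : List ι → (ℕ → ι) → ℝ
  | [], _ => 0
  | a :: u, ω => c a (wordAppend u ω) + wordSum c u ω

theorem wordSum_append (c : ι → (ℕ → ι) → ℝ) (u v : List ι) (ω : ℕ → ι) :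
    wordSum c (u ++ v) ω = wordSum c u (wordAppend v ω) + wordSum c v ω := by
  induction u with
  | nil => simp only [List.nil_append, wordSum, zero_add]
  | cons a u ih => simp only [List.cons_append, wordSum, ih, wordAppend_append, add_assoc]

end Words

section WordTopology

variable {ι : Type*} [TopologicalSpace ι] {ρ : ℝ}

theorem continuous_prepend (a : ι) : Continuous (prepend a) :=
  continuous_pi fun i => match i with
    | 0 => continuous_const
    | j + 1 => continuous_apply j

theorem tendsto_wordAppend_wordPrefix (ω x : ℕ → ι) :
    Tendsto (fun j => wordAppend (wordPrefix j ω) x) atTop (𝓝 ω) := by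
  refine tendsto_pi_nhds.mpr fun i => tendsto_const_nhds.congr' ?_
  filter_upwards [eventually_gt_atTop i] with j hj
  exact (wordAppend_wordPrefix_apply hj ω x).symm

theorem tendsto_wordAppend_replicate (a : ι) (x : ℕ → ι) :
    Tendsto (fun j => wordAppend (List.replicate j a) x) atTop (𝓝 fun _ => a) := by
  simpa only [wordPrefix_const] using tendsto_wordAppend_wordPrefix (fun _ => a) x

theorem denseRange_wordAppend (x : ℕ → ι) : DenseRange fun u => wordAppend u x := fun ω =>
  mem_closure_of_tendsto (tendsto_wordAppend_wordPrefix ω x)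
    (Eventually.of_forall fun _ => mem_range_self _)

theorem tendsto_dMet [DiscreteTopology ι] (h0 : 0 ≤ ρ) (h1 : ρ < 1) (ω : ℕ → ι) :
    Tendsto (fun ω' => dMet ρ ω' ω) (𝓝 ω) (𝓝 0) := by
  refine tendsto_order.mpr ⟨fun ε hε => Eventually.of_forall fun _ => hε.trans_le
    (dMet_nonneg h0 _ _), fun ε hε => ?_⟩
  obtain ⟨m, hm⟩ := exists_pow_lt_of_lt_one hε h1
  have hagree : ∀ᶠ ω' in 𝓝 ω, ∀ i ∈ Finset.range m, ω' i = ω i := by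
    refine (Filter.eventually_all_finset _).mpr fun i _ => ?_
    exact (continuousAt_apply i ω).eventually_mem ((isOpen_discrete {ω i}).mem_nhds rfl)
  filter_upwards [hagree] with ω' hω'
  exact (dMet_le_pow h0 h1.le fun i hi => hω' i (Finset.mem_range.mpr hi)).trans_lt hm

theorem continuous_of_abs_sub_le_dMet [DiscreteTopology ι] (h0 : 0 ≤ ρ) (h1 : ρ < 1) {K : ℝ}
    {g : (ℕ → ι) → ℝ} (hg : ∀ ω ω', |g ω - g ω'| ≤ K * dMet ρ ω ω') : Continuous g := by
  refine continuous_iff_continuousAt.mpr fun ω => tendsto_iff_dist_tendsto_zero.mpr ?_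
  refine squeeze_zero (fun _ => dist_nonneg) (fun ω' => hg ω' ω) ?_
  simpa using (tendsto_dMet h0 h1 ω).const_mul K

end WordTopology

/-! ### The transfer operator of the backward walk -/

section Transfer

variable {ι : Type*}

/-- The metric `|s - s'| + C d_ρ(ω, ω')` on `Ω × ℝ`. -/
def skewDist (C ρ : ℝ) (ω ω' : ℕ → ι) (s s' : ℝ) : ℝ := |s - s'| + C * dMet ρ ω ω'

theorem skewDist_nonneg {C ρ : ℝ} (hC : 0 ≤ C) (hρ : 0 ≤ ρ) (ω ω' : ℕ → ι) (s s' : ℝ) :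
    0 ≤ skewDist C ρ ω ω' s s' :=
  add_nonneg (abs_nonneg _) (mul_nonneg hC (dMet_nonneg hρ _ _))

theorem skewDist_add_right (C ρ : ℝ) (ω ω' : ℕ → ι) (s s' t : ℝ) :
    skewDist C ρ ω ω' (s + t) (s' + t) = skewDist C ρ ω ω' s s' := by
  rw [skewDist, add_sub_add_right_eq_sub, skewDist]

/-- The standing assumptions on the increments of the walk: the letters have positive
probabilities `q`, the cocycle `c` takes values in `[D, E]` with `D > 0`, and `c` is Lipschitz for
`d_ρ`. The Lipschitz constant is written as `C (1 - ρ)`, so that the sums of `c` along finite words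
are `C`-Lipschitz. -/
structure IsRenewalCocycle [Fintype ι] (q : ι → ℝ) (c : ι → (ℕ → ι) → ℝ) (D E ρ C : ℝ) :
    Prop where
  weight_pos : ∀ a, 0 < q a
  sum_weight : ∑ a, q a = 1
  D_pos : 0 < D
  le_cocycle : ∀ a ω, D ≤ c a ω
  cocycle_le : ∀ a ω, c a ω ≤ E
  ρ_pos : 0 < ρ
  ρ_lt_one : ρ < 1
  C_nonneg : 0 ≤ C
  lipschitz : ∀ a ω ω', |c a ω - c a ω'| ≤ C * (1 - ρ) * dMet ρ ω ω'

/-- The transition operator of the backward walk `(ω, s) ↦ (aω, s - c(a, ω))` on `Ω × ℝ`, in which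
the letter `a` has probability `q a`. -/
def transferOp [Fintype ι] (q : ι → ℝ) (c : ι → (ℕ → ι) → ℝ) :
    Module.End ℝ ((ℕ → ι) → ℝ → ℝ) where
  toFun F := fun ω s => ∑ a, q a * F (prepend a ω) (s - c a ω)
  map_add' F G := by
    funext ω s
    simp only [Pi.add_apply, mul_add, Finset.sum_add_distrib]
  map_smul' r F := by
    funext ω s
    simp only [Pi.smul_apply, smul_eq_mul, RingHom.id_apply, Finset.mul_sum, mul_left_comm]

variable [Fintype ι] {q : ι → ℝ} {c : ι → (ℕ → ι) → ℝ} {D E ρ C : ℝ}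

theorem transferOp_apply (F : (ℕ → ι) → ℝ → ℝ) (ω : ℕ → ι) (s : ℝ) :
    transferOp q c F ω s = ∑ a, q a * F (prepend a ω) (s - c a ω) := rfl

theorem transferOp_pow_succ (m : ℕ) (F : (ℕ → ι) → ℝ → ℝ) :
    (transferOp q c ^ (m + 1)) F = transferOp q c ((transferOp q c ^ m) F) := by
  rw [pow_succ', Module.End.mul_apply]

theorem transferOp_pow_mono (hq : ∀ a, 0 ≤ q a) (m : ℕ) :
    Monotone ⇑(transferOp q c ^ m) := by
  intro F G h
  induction m with
  | zero => simpa using h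
  | succ m ih =>
    rw [transferOp_pow_succ, transferOp_pow_succ]
    exact fun ω s => Finset.sum_le_sum fun a _ => mul_le_mul_of_nonneg_left (ih _ _) (hq a)

theorem transferOp_pow_nonneg (hq : ∀ a, 0 ≤ q a) (m : ℕ) {F : (ℕ → ι) → ℝ → ℝ} (h : 0 ≤ F) :
    0 ≤ (transferOp q c ^ m) F := by
  simpa only [map_zero] using transferOp_pow_mono (c := c) hq m h

theorem transferOp_comp_add_right (F : (ℕ → ι) → ℝ → ℝ) (t : ℝ) (ω : ℕ → ι) (s : ℝ) :
    transferOp q c (fun ω s => F ω (s + t)) ω s = transferOp q c F ω (s + t) := by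
  simp only [transferOp_apply, sub_add_eq_add_sub]

namespace IsRenewalCocycle

theorem weight_nonneg (hc : IsRenewalCocycle q c D E ρ C) (a : ι) : 0 ≤ q a :=
  (hc.weight_pos a).le

theorem sum_weight_mul (hc : IsRenewalCocycle q c D E ρ C) (x : ℝ) : ∑ a, q a * x = x := by
  rw [← Finset.sum_mul, hc.sum_weight, one_mul]

theorem nonempty (hc : IsRenewalCocycle q c D E ρ C) : Nonempty ι := by
  by_contra h
  rw [not_nonempty_iff] at h
  simpa using hc.sum_weight

theorem skewDist_prepend_le (hc : IsRenewalCocycle q c D E ρ C) (a : ι) (ω ω' : ℕ → ι)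
    (s s' : ℝ) :
    skewDist C ρ (prepend a ω) (prepend a ω') (s - c a ω) (s' - c a ω') ≤
      skewDist C ρ ω ω' s s' := by
  have h1 : |s - c a ω - (s' - c a ω')| ≤ |s - s'| + |c a ω - c a ω'| := by
    rw [sub_sub_sub_comm]
    exact abs_sub _ _
  have h2 := mul_le_mul_of_nonneg_left
    (dMet_prepend_le hc.ρ_pos.le hc.ρ_lt_one.le a ω ω') hc.C_nonneg
  have h3 := hc.lipschitz a ω ω'
  simp only [skewDist]
  linarith

theorem skewDist_wordAppend_le (hc : IsRenewalCocycle q c D E ρ C) (u : List ι) (ω ω' : ℕ → ι) :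
    skewDist C ρ (wordAppend u ω) (wordAppend u ω') (-wordSum c u ω) (-wordSum c u ω') ≤
      C * dMet ρ ω ω' := by
  induction u with
  | nil => simp [skewDist, wordSum, wordAppend]
  | cons a u ih =>
    refine le_trans (le_of_eq ?_) ((hc.skewDist_prepend_le a _ _ _ _).trans ih)
    simp only [wordSum, neg_add_rev, ← sub_eq_add_neg]
    rfl

theorem abs_wordSum_sub_le (hc : IsRenewalCocycle q c D E ρ C) (u : List ι) (ω ω' : ℕ → ι) :
    |wordSum c u ω - wordSum c u ω'| ≤ C * dMet ρ ω ω' := by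
  refine le_trans ?_ (hc.skewDist_wordAppend_le u ω ω')
  rw [skewDist, neg_sub_neg, abs_sub_comm]
  exact le_add_of_nonneg_right (mul_nonneg hc.C_nonneg (dMet_nonneg hc.ρ_pos.le _ _))

end IsRenewalCocycle

end Transfer

/-! ### Bounded harmonic functions are constant -/

section Harmonic

variable {ι : Type*} {q : ι → ℝ} {c : ι → (ℕ → ι) → ℝ} {D E ρ C B L : ℝ} {G : (ℕ → ι) → ℝ → ℝ}

/-- The group of periods of a function on `Ω × ℝ` in the real variable. -/
def timePeriods (G : (ℕ → ι) → ℝ → ℝ) : AddSubgroup ℝ where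
  carrier := {r | ∀ ω s, G ω (s + r) = G ω s}
  add_mem' h h' ω s := by rw [← add_assoc, h' ω, h ω]
  zero_mem' ω s := by rw [add_zero]
  neg_mem' h ω s := by rw [← h ω, neg_add_cancel_right]

/-- The stable holonomy of the fixed point `aaa…`: the limit of `S(aʲ, y) - S(aʲ, aaa…)`, where
`S(u, y)` denotes `wordSum c u y`. -/
def holonomy (c : ι → (ℕ → ι) → ℝ) (a : ι) (y : ℕ → ι) : ℝ :=
  limUnder atTop fun j =>
    wordSum c (List.replicate j a) y - wordSum c (List.replicate j a) fun _ => a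

/-- The limit of `S(aʲ u, aaa…) - S(aʲ, aaa…)`, where `S(u, y)` denotes `wordSum c u y`. -/
def returnTime (c : ι → (ℕ → ι) → ℝ) (a : ι) (u : List ι) : ℝ :=
  holonomy c a (wordAppend u fun _ => a) + wordSum c u fun _ => a

/-- Nonarithmeticity of the walk: `c` is not cohomologous, through a `C`-Lipschitz transfer
function, to a cocycle with values in a cyclic subgroup of `ℝ`. -/
def IsNonarithmetic (c : ι → (ℕ → ι) → ℝ) (ρ C : ℝ) : Prop :=
  ∀ (t : ℝ) (ψ : (ℕ → ι) → ℝ), (∀ y z, |ψ y - ψ z| ≤ C * dMet ρ y z) →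
    ∃ b y, ψ (prepend b y) + c b y - ψ y ∉ AddSubgroup.zmultiples t

theorem tendsto_skewDist [TopologicalSpace ι] [DiscreteTopology ι] (h0 : 0 ≤ ρ) (h1 : ρ < 1)
    {l : Filter ℕ} {w : ℕ → ℕ → ι} {t : ℕ → ℝ} {ω : ℕ → ι} {s : ℝ} (hw : Tendsto w l (𝓝 ω))
    (ht : Tendsto t l (𝓝 s)) : Tendsto (fun j => skewDist C ρ (w j) ω (t j) s) l (𝓝 0) := by
  simpa [skewDist] using ((ht.sub_const s).abs).add (((tendsto_dMet h0 h1 ω).comp hw).const_mul C)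

theorem exists_tendsto_hyperfilter_of_abs_le {x : ℕ → ℝ} (h : ∀ j, |x j| ≤ B) :
    ∃ y, |y| ≤ B ∧ Tendsto x (hyperfilter ℕ) (𝓝 y) := by
  obtain ⟨y, hy, hlim⟩ := isCompact_Icc.ultrafilter_le_nhds ((hyperfilter ℕ).map x)
    (tendsto_principal.mpr (Eventually.of_forall fun j => abs_le.mp (h j)))
  exact ⟨y, abs_le.mpr hy, hlim⟩

theorem exists_tendsto_hyperfilter_of_compactSpace {X : Type*} [TopologicalSpace X] [CompactSpace X]
    (x : ℕ → X) : ∃ y, Tendsto x (hyperfilter ℕ) (𝓝 y) := by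
  obtain ⟨y, -, hy⟩ := isCompact_univ.ultrafilter_le_nhds ((hyperfilter ℕ).map x) (by simp)
  exact ⟨y, hy⟩

variable [Fintype ι]

/-- Harmonic functions of the backward walk with sup norm at most `B` and Lipschitz constant at most
`L` for `skewDist C ρ`. -/
structure IsHarmonic (q : ι → ℝ) (c : ι → (ℕ → ι) → ℝ) (ρ C B L : ℝ) (G : (ℕ → ι) → ℝ → ℝ) :
    Prop where
  abs_le : ∀ ω s, |G ω s| ≤ B
  abs_sub_le : ∀ ω ω' s s', |G ω s - G ω' s'| ≤ L * skewDist C ρ ω ω' s s'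
  transferOp_eq : transferOp q c G = G

theorem IsHarmonic.comp_add_right (hG : IsHarmonic q c ρ C B L G) (t : ℝ) :
    IsHarmonic q c ρ C B L fun ω s => G ω (s + t) where
  abs_le ω s := hG.abs_le ω (s + t)
  abs_sub_le ω ω' s s' := by
    simpa only [skewDist_add_right] using hG.abs_sub_le ω ω' (s + t) (s' + t)
  transferOp_eq := by
    funext ω s
    rw [transferOp_comp_add_right, hG.transferOp_eq]

theorem IsHarmonic.neg (hG : IsHarmonic q c ρ C B L G) : IsHarmonic q c ρ C B L (-G) where
  abs_le ω s := by simpa only [Pi.neg_apply, abs_neg] using hG.abs_le ω s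
  abs_sub_le ω ω' s s' := by
    simpa only [Pi.neg_apply, neg_sub_neg, abs_sub_comm] using hG.abs_sub_le ω ω' s s'
  transferOp_eq := by rw [map_neg, hG.transferOp_eq]

theorem IsHarmonic.apply_eq_apply_zero (hG : IsHarmonic q c ρ C B L G)
    (hd : Dense (timePeriods G : Set ℝ)) (ω : ℕ → ι) (s : ℝ) : G ω s = G ω 0 := by
  have hcont : Continuous (G ω) := by
    refine (LipschitzWith.of_dist_le' (K := L) fun s s' => ?_).continuous
    simpa [skewDist, dMet_self, Real.dist_eq] using hG.abs_sub_le ω ω s s'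
  refine congrFun (hcont.ext_on hd continuous_const fun r hr => ?_) s
  simpa only [zero_add] using hr ω 0

namespace IsRenewalCocycle

theorem eq_of_transferOp_eq_of_le (hc : IsRenewalCocycle q c D E ρ C) {M : ℝ} {V : (ℕ → ι) → ℝ → ℝ}
    (hV : transferOp q c V = V) (hle : ∀ ω s, V ω s ≤ M) {ω : ℕ → ι} {s : ℝ} (h : V ω s = M)
    (u : List ι) : V (wordAppend u ω) (s - wordSum c u ω) = M := by
  induction u with
  | nil => simpa [wordAppend, wordSum] using h
  | cons a u ih =>
    rw [← hV, transferOp_apply, ← hc.sum_weight_mul M,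
      Finset.sum_eq_sum_iff_of_le fun b _ => mul_le_mul_of_nonneg_left (hle _ _)
        (hc.weight_nonneg b)] at ih
    have := mul_left_cancel₀ (hc.weight_pos a).ne' (ih a (Finset.mem_univ a))
    rwa [sub_sub, add_comm (wordSum c u ω)] at this

theorem increment_wordAppend (hc : IsRenewalCocycle q c D E ρ C) {M r : ℝ}
    (hG : transferOp q c G = G) (hle : ∀ ω s, G ω (s + r) - G ω s ≤ M) {ω : ℕ → ι} {s : ℝ}
    (h : G ω (s + r) - G ω s = M) (u : List ι) :
    G (wordAppend u ω) (s - wordSum c u ω + r) - G (wordAppend u ω) (s - wordSum c u ω) = M := by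
  refine hc.eq_of_transferOp_eq_of_le (V := (fun ω s => G ω (s + r)) - G) ?_ hle h u
  rw [map_sub, hG]
  congr 1
  funext ω s
  rw [transferOp_comp_add_right, hG]

theorem tendsto_holonomy (hc : IsRenewalCocycle q c D E ρ C) (a : ι) (y : ℕ → ι) :
    Tendsto (fun j => wordSum c (List.replicate j a) y - wordSum c (List.replicate j a) fun _ => a)
      atTop (𝓝 (holonomy c a y)) := by
  refine (cauchySeq_of_le_tendsto_0' (fun i => C * ρ ^ i) ?_ ?_).tendsto_limUnder
  · intro i j hij
    obtain ⟨m, rfl⟩ := Nat.exists_eq_add_of_le hij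
    rw [add_comm i m, List.replicate_add, wordSum_append, wordSum_append,
      wordAppend_replicate_const, dist_comm, Real.dist_eq, add_sub_add_comm, add_sub_cancel_right]
    refine (hc.abs_wordSum_sub_le _ _ _).trans (mul_le_mul_of_nonneg_left ?_ hc.C_nonneg)
    refine dMet_le_pow hc.ρ_pos.le hc.ρ_lt_one.le fun k hk => ?_
    rw [← wordPrefix_const, wordAppend_wordPrefix_apply hk]
  · simpa using (tendsto_pow_atTop_nhds_zero_of_lt_one hc.ρ_pos.le hc.ρ_lt_one).const_mul C

theorem abs_holonomy_sub_le (hc : IsRenewalCocycle q c D E ρ C) (a : ι) (y z : ℕ → ι) :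
    |holonomy c a y - holonomy c a z| ≤ C * dMet ρ y z := by
  refine le_of_tendsto ((hc.tendsto_holonomy a y).sub (hc.tendsto_holonomy a z)).abs
    (Eventually.of_forall fun j => ?_)
  rw [sub_sub_sub_cancel_right]
  exact hc.abs_wordSum_sub_le _ _ _

theorem returnTime_nil (hc : IsRenewalCocycle q c D E ρ C) (a : ι) : returnTime c a [] = 0 := by
  rw [returnTime, wordSum, add_zero]
  exact tendsto_nhds_unique (hc.tendsto_holonomy a _) (by simp [wordAppend])

end IsRenewalCocycle

section Compactness

variable [TopologicalSpace ι] [DiscreteTopology ι]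

theorem exists_isHarmonic_limit (hc : IsRenewalCocycle q c D E ρ C) {G : ℕ → (ℕ → ι) → ℝ → ℝ}
    (hB : ∀ j ω s, |G j ω s| ≤ B)
    (hL : ∀ j ω ω' s s', |G j ω s - G j ω' s'| ≤ L * skewDist C ρ ω ω' s s')
    (hT : ∀ ω s, ∀ᶠ j in atTop, transferOp q c (G j) ω s = G j ω s) :
    ∃ H, IsHarmonic q c ρ C B L H ∧ ∀ {w : ℕ → ℕ → ι} {t : ℕ → ℝ} {ω s},
      Tendsto w (hyperfilter ℕ) (𝓝 ω) → Tendsto t (hyperfilter ℕ) (𝓝 s) →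
        Tendsto (fun j => G j (w j) (t j)) (hyperfilter ℕ) (𝓝 (H ω s)) := by
  choose H hHB hH using fun ω s => exists_tendsto_hyperfilter_of_abs_le fun j => hB j ω s
  refine ⟨H, ⟨hHB, fun ω ω' s s' => ?_, ?_⟩, fun {w t ω s} hw ht => ?_⟩
  · exact le_of_tendsto ((hH ω s).sub (hH ω' s')).abs (Eventually.of_forall fun j => hL j ω ω' s s')
  · funext ω s
    have hlim : Tendsto (fun j => transferOp q c (G j) ω s) (hyperfilter ℕ)
        (𝓝 (transferOp q c H ω s)) :=
      tendsto_finsetSum _ fun a _ => (hH (prepend a ω) (s - c a ω)).const_mul (q a)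
    exact tendsto_nhds_unique (hlim.congr' (Nat.hyperfilter_le_atTop (hT ω s))) (hH ω s)
  · have hdiff : Tendsto (fun j => G j (w j) (t j) - G j ω s) (hyperfilter ℕ) (𝓝 0) := by
      refine squeeze_zero_norm (fun j => hL j _ _ _ _) ?_
      simpa using (tendsto_skewDist hc.ρ_pos.le hc.ρ_lt_one hw ht).const_mul L
    simpa using hdiff.add (hH ω s)

theorem IsHarmonic.exists_translate_limit (hc : IsRenewalCocycle q c D E ρ C)
    {G : ℕ → (ℕ → ι) → ℝ → ℝ} (hG : ∀ j, IsHarmonic q c ρ C B L (G j)) (T : ℕ → ℝ) :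
    ∃ H, IsHarmonic q c ρ C B L H ∧ ∀ {w : ℕ → ℕ → ι} {t : ℕ → ℝ} {ω s},
      Tendsto w (hyperfilter ℕ) (𝓝 ω) → Tendsto t (hyperfilter ℕ) (𝓝 s) →
        Tendsto (fun j => G j (w j) (t j + T j)) (hyperfilter ℕ) (𝓝 (H ω s)) :=
  exists_isHarmonic_limit hc (fun j => ((hG j).comp_add_right (T j)).abs_le)
    (fun j => ((hG j).comp_add_right (T j)).abs_sub_le)
    fun ω s => Eventually.of_forall fun j =>
      congrFun₂ ((hG j).comp_add_right (T j)).transferOp_eq ω s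

namespace IsRenewalCocycle

theorem exists_isHarmonic_max_increment (hc : IsRenewalCocycle q c D E ρ C)
    (hG : IsHarmonic q c ρ C B L G) (r : ℝ) :
    ∃ H ω, IsHarmonic q c ρ C B L H ∧
      ∀ G', IsHarmonic q c ρ C B L G' → ∀ ω' s, G' ω' (s + r) - G' ω' s ≤ H ω r - H ω 0 := by
  obtain ⟨a⟩ := hc.nonempty
  let S : Set ℝ := {x | ∃ G ω s, IsHarmonic q c ρ C B L G ∧ G ω (s + r) - G ω s = x}
  have hSne : S.Nonempty := ⟨_, G, fun _ => a, 0, hG, rfl⟩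
  have hSbdd : BddAbove S := by
    refine ⟨B + B, ?_⟩
    rintro _ ⟨G, ω, s, hG, rfl⟩
    linarith [(abs_le.mp (hG.abs_le ω (s + r))).2, (abs_le.mp (hG.abs_le ω s)).1]
  obtain ⟨x, -, hx, hxS⟩ := exists_seq_tendsto_sSup hSne hSbdd
  choose K w T hK hKx using hxS
  obtain ⟨ω, hω⟩ := exists_tendsto_hyperfilter_of_compactSpace w
  obtain ⟨H, hH, hlim⟩ := IsHarmonic.exists_translate_limit hc hK T
  refine ⟨H, ω, hH, fun G' hG' ω' s => ?_⟩
  suffices H ω r - H ω 0 = sSup S from this ▸ le_csSup hSbdd ⟨G', ω', s, hG', rfl⟩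
  refine tendsto_nhds_unique ?_ (hx.mono_left Nat.hyperfilter_le_atTop)
  refine ((hlim hω tendsto_const_nhds).sub (hlim hω tendsto_const_nhds)).congr fun j => ?_
  rw [← hKx, add_comm r, zero_add]

theorem exists_isHarmonic_increment_const (hc : IsRenewalCocycle q c D E ρ C) {M r : ℝ}
    (hle : ∀ G, IsHarmonic q c ρ C B L G → ∀ ω s, G ω (s + r) - G ω s ≤ M)
    (hG : IsHarmonic q c ρ C B L G) {ω : ℕ → ι} (h : G ω r - G ω 0 = M) (a : ι) :
    ∃ H, IsHarmonic q c ρ C B L H ∧ H (fun _ => a) r - H (fun _ => a) 0 = M := by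
  obtain ⟨H, hH, hlim⟩ := IsHarmonic.exists_translate_limit hc (fun _ => hG)
    fun j => -wordSum c (List.replicate j a) ω
  have hw := (tendsto_wordAppend_replicate a ω).mono_left Nat.hyperfilter_le_atTop
  refine ⟨H, hH, tendsto_nhds_unique ((hlim hw tendsto_const_nhds).sub (hlim hw
    tendsto_const_nhds)) (tendsto_const_nhds.congr fun j => ?_)⟩
  rw [← hc.increment_wordAppend hG.transferOp_eq (hle G hG) (s := 0) (by rwa [zero_add])
    (List.replicate j a)]
  ring_nf

-- The maximum propagates to all preimages of `(aaa…, s)`. Those under `aʲ u` and under `aʲ`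
-- converge, after a translation depending only on `j`, to points whose heights differ by
-- `returnTime c a u`.

theorem exists_isHarmonic_increment_returnTime (hc : IsRenewalCocycle q c D E ρ C) {M r : ℝ}
    (hle : ∀ ω s, G ω (s + r) - G ω s ≤ M) (hG : IsHarmonic q c ρ C B L G) (a : ι) :
    ∃ H, IsHarmonic q c ρ C B L H ∧ ∀ s, G (fun _ => a) (s + r) - G (fun _ => a) s = M → ∀ u,
      H (fun _ => a) (s - returnTime c a u + r) - H (fun _ => a) (s - returnTime c a u) = M := by
  obtain ⟨H, hH, hlim⟩ := IsHarmonic.exists_translate_limit hc (fun _ => hG)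
    fun j => -wordSum c (List.replicate j a) fun _ => a
  refine ⟨H, hH, fun s hs u => ?_⟩
  set y := wordAppend u fun _ => a
  have hw : Tendsto (fun j => wordAppend (List.replicate j a) y) (hyperfilter ℕ) (𝓝 fun _ => a) :=
    (tendsto_wordAppend_replicate a y).mono_left Nat.hyperfilter_le_atTop
  have ht : Tendsto (fun j => s - (wordSum c (List.replicate j a) y -
      wordSum c (List.replicate j a) (fun _ => a) + wordSum c u fun _ => a)) (hyperfilter ℕ)
      (𝓝 (s - returnTime c a u)) :=
    (((hc.tendsto_holonomy a y).mono_left Nat.hyperfilter_le_atTop).add_const _).const_sub s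
  refine tendsto_nhds_unique ((hlim hw (ht.add_const r)).sub (hlim hw ht))
    (tendsto_const_nhds.congr fun j => ?_)
  rw [← hc.increment_wordAppend hG.transferOp_eq hle hs (List.replicate j a ++ u),
    wordAppend_append, wordSum_append]
  congr 2 <;> ring

theorem exists_isHarmonic_increment_chain (hc : IsRenewalCocycle q c D E ρ C) {M : ℝ} (a : ι)
    (u : List ι)
    (hle : ∀ G, IsHarmonic q c ρ C B L G → ∀ ω s, G ω (s + returnTime c a u) - G ω s ≤ M)
    (hG : IsHarmonic q c ρ C B L G) {ω : ℕ → ι}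
    (h : G ω (returnTime c a u) - G ω 0 = M) (N : ℕ) :
    ∃ H, IsHarmonic q c ρ C B L H ∧ ∀ i ≤ N, H (fun _ => a) (-(i * returnTime c a u) +
      returnTime c a u) - H (fun _ => a) (-(i * returnTime c a u)) = M := by
  induction N with
  | zero =>
    obtain ⟨H, hH, hHM⟩ := hc.exists_isHarmonic_increment_const hle hG h a
    exact ⟨H, hH, fun i hi => by simpa [Nat.le_zero.mp hi] using hHM⟩
  | succ N ih =>
    obtain ⟨H, hH, hHM⟩ := ih
    obtain ⟨H', hH', hstep⟩ := hc.exists_isHarmonic_increment_returnTime (hle H hH) hH a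
    refine ⟨H', hH', fun i hi => ?_⟩
    cases i with
    | zero => simpa [hc.returnTime_nil] using hstep _ (hHM 0 (Nat.zero_le N)) []
    | succ i =>
      have h := hstep _ (hHM i (Nat.le_of_succ_le_succ hi)) u
      rwa [show -(i * returnTime c a u) - returnTime c a u = -((i + 1 : ℕ) * returnTime c a u) by
        push_cast; ring] at h

theorem increment_returnTime_nonpos (hc : IsRenewalCocycle q c D E ρ C)
    (hG : IsHarmonic q c ρ C B L G) (a : ι) (u : List ι) (ω : ℕ → ι) (s : ℝ) :
    G ω (s + returnTime c a u) - G ω s ≤ 0 := by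
  obtain ⟨K, ω₀, hK, hle⟩ := hc.exists_isHarmonic_max_increment hG (returnTime c a u)
  refine (hle G hG ω s).trans (not_lt.mp fun hpos => ?_)
  obtain ⟨N, hN⟩ := exists_lt_nsmul hpos (B + B)
  obtain ⟨H, hH, hHM⟩ := hc.exists_isHarmonic_increment_chain a u hle hK rfl N
  let f : ℕ → ℝ := fun i => H (fun _ => a) (-(i * returnTime c a u) + returnTime c a u)
  have htele : N • (K ω₀ (returnTime c a u) - K ω₀ 0) = f 0 - f N := by
    rw [← Finset.sum_range_sub', ← Finset.card_range N, ← Finset.sum_const, Finset.card_range]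
    refine Finset.sum_congr rfl fun i hi => ?_
    rw [← hHM i (Finset.mem_range.mp hi).le]
    simp only [f]
    push_cast
    ring_nf
  linarith [(abs_le.mp (hH.abs_le (fun _ => a) _ : |f 0| ≤ B)).2,
    (abs_le.mp (hH.abs_le (fun _ => a) _ : |f N| ≤ B)).1]

theorem returnTime_mem_timePeriods (hc : IsRenewalCocycle q c D E ρ C)
    (hG : IsHarmonic q c ρ C B L G) (a : ι) (u : List ι) : returnTime c a u ∈ timePeriods G := by
  intro ω s
  have h₁ := hc.increment_returnTime_nonpos hG a u ω s
  have h₂ := hc.increment_returnTime_nonpos hG.neg a u ω s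
  simp only [Pi.neg_apply] at h₂
  linarith

theorem dense_timePeriods (hc : IsRenewalCocycle q c D E ρ C) (hN : IsNonarithmetic c ρ C)
    (hG : IsHarmonic q c ρ C B L G) : Dense (timePeriods G : Set ℝ) := by
  obtain ⟨a⟩ := hc.nonempty
  rcases (timePeriods G).dense_or_cyclic with hd | ⟨t, ht⟩
  · exact hd
  have hψ := hc.abs_holonomy_sub_le a
  obtain ⟨b, y, hby⟩ := hN t (holonomy c a) hψ
  refine absurd ?_ hby
  have hcont := continuous_of_abs_sub_le_dMet hc.ρ_pos.le hc.ρ_lt_one hψ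
  have hclosed : IsClosed {y | holonomy c a (prepend b y) + c b y - holonomy c a y ∈
      (AddSubgroup.zmultiples t : Set ℝ)} :=
    (AddSubgroup.isClosed_of_discrete (H := AddSubgroup.zmultiples t)).preimage
      (((hcont.comp (continuous_prepend b)).add
        (continuous_of_abs_sub_le_dMet hc.ρ_pos.le hc.ρ_lt_one (hc.lipschitz b))).sub hcont)
  refine (denseRange_wordAppend fun _ => a).induction_on y hclosed fun u => ?_
  rw [← AddSubgroup.zmultiples_eq_closure] at ht
  have h := sub_mem (hc.returnTime_mem_timePeriods hG a (b :: u))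
    (hc.returnTime_mem_timePeriods hG a u)
  rw [ht] at h
  convert h using 1
  simp only [returnTime, wordSum, wordAppend, List.foldr_cons]
  ring

end IsRenewalCocycle

end Compactness

theorem IsHarmonic.exists_eq_const (hc : IsRenewalCocycle q c D E ρ C) (hN : IsNonarithmetic c ρ C)
    (hG : IsHarmonic q c ρ C B L G) : ∃ k, ∀ ω s, G ω s = k := by
  let : TopologicalSpace ι := ⊥
  have : DiscreteTopology ι := ⟨rfl⟩
  have htime := hG.apply_eq_apply_zero (hc.dense_timePeriods hN hG)
  have hcont : Continuous fun ω => G ω 0 :=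
    continuous_of_abs_sub_le_dMet (K := L * C) hc.ρ_pos.le hc.ρ_lt_one fun ω ω' => by
      simpa [skewDist, mul_assoc] using hG.abs_sub_le ω ω' 0 0
  obtain ⟨a⟩ := hc.nonempty
  obtain ⟨ω₀, -, hmax⟩ :=
    isCompact_univ.exists_isMaxOn ⟨fun _ => a, mem_univ _⟩ hcont.continuousOn
  refine ⟨G ω₀ 0, fun ω s => (htime ω s).trans (congrFun (hcont.ext_on (denseRange_wordAppend ω₀)
    continuous_const ?_) ω)⟩
  rintro _ ⟨u, rfl⟩
  refine (htime _ _).symm.trans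
    (hc.eq_of_transferOp_eq_of_le hG.transferOp_eq (fun ω s => ?_) rfl u)
  exact (htime ω s).trans_le (hmax (mem_univ ω))

end Harmonic

/-! ### Potentials of the backward walk -/

section Potential

variable {ι : Type*} {q : ι → ℝ} {c : ι → (ℕ → ι) → ℝ} {D E ρ C L W : ℝ} {F : (ℕ → ι) → ℝ → ℝ}

/-- The indicator function of the time window `[α, β]`. -/
def timeWindow (α β : ℝ) : (ℕ → ι) → ℝ → ℝ := fun _ => (Icc α β).indicator 1

/-- The class of test functions for the renewal theorem: functions with values in `[0, 1]`,
supported in the time window `[-W, W]` and `L`-Lipschitz for `skewDist C ρ`. The renewal theorem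
holds uniformly over each such class. -/
structure IsTestFunction (ρ C L W : ℝ) (F : (ℕ → ι) → ℝ → ℝ) : Prop where
  nonneg : 0 ≤ F
  le_timeWindow : F ≤ timeWindow (-W) W
  abs_sub_le : ∀ ω ω' s s', |F ω s - F ω' s'| ≤ L * skewDist C ρ ω ω' s s'

theorem timeWindow_nonneg (α β : ℝ) : 0 ≤ (timeWindow α β : (ℕ → ι) → ℝ → ℝ) :=
  fun _ s => indicator_nonneg (fun _ _ => zero_le_one) s

namespace IsTestFunction

theorem eq_zero (hF : IsTestFunction ρ C L W F) {ω : ℕ → ι} {s : ℝ} (hs : s ∉ Icc (-W) W) :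
    F ω s = 0 :=
  le_antisymm ((hF.le_timeWindow ω s).trans_eq (indicator_of_notMem hs _)) (hF.nonneg ω s)

theorem eq_zero_of_lt (hF : IsTestFunction ρ C L W F) (ω : ℕ → ι) (s : ℝ) (hs : s < -W) :
    F ω s = 0 :=
  hF.eq_zero fun h => hs.not_ge h.1

theorem abs_sub_le_timeWindow (hF : IsTestFunction ρ C L W F) (ω ω' : ℕ → ι) (s s' : ℝ) :
    |F ω s - F ω' s'| ≤
      L * skewDist C ρ ω ω' s s' * (timeWindow (-W) W ω s + timeWindow (-W) W ω' s') := by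
  have hL := (abs_nonneg _).trans (hF.abs_sub_le ω ω' s s')
  have hw := timeWindow_nonneg (-W) W ω s
  have hw' := timeWindow_nonneg (-W) W ω' s'
  by_cases h : s ∈ Icc (-W) W ∨ s' ∈ Icc (-W) W
  · refine (hF.abs_sub_le ω ω' s s').trans (le_mul_of_one_le_right hL ?_)
    rcases h with h | h
    · exact le_add_of_le_of_nonneg (indicator_of_mem h (1 : ℝ → ℝ)).ge hw'
    · exact le_add_of_nonneg_of_le hw (indicator_of_mem h (1 : ℝ → ℝ)).ge
  · rw [not_or] at h
    rw [hF.eq_zero h.1, hF.eq_zero h.2, sub_self, abs_zero]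
    exact mul_nonneg hL (add_nonneg hw hw')

end IsTestFunction

variable [Fintype ι]

theorem sum_transferOp_pow_le (hq : ∀ a, 0 ≤ q a) {Φ : (ℕ → ι) → ℝ → ℝ} (hΦ : 0 ≤ Φ)
    (h : F ≤ Φ - transferOp q c Φ) (N : ℕ) : ∑ i ∈ Finset.range N, (transferOp q c ^ i) F ≤ Φ :=
  calc ∑ i ∈ Finset.range N, (transferOp q c ^ i) F
      ≤ ∑ i ∈ Finset.range N, (transferOp q c ^ i) (Φ - transferOp q c Φ) :=
        Finset.sum_le_sum fun i _ => transferOp_pow_mono hq i h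
    _ = ∑ i ∈ Finset.range N, ((transferOp q c ^ i) Φ - (transferOp q c ^ (i + 1)) Φ) :=
        Finset.sum_congr rfl fun i _ => by rw [map_sub, pow_succ, Module.End.mul_apply]
    _ = Φ - (transferOp q c ^ N) Φ := by rw [Finset.sum_range_sub', pow_zero, Module.End.one_apply]
    _ ≤ Φ := sub_le_self _ (transferOp_pow_nonneg hq N hΦ)

/-- The potential `∑ᵢ Tⁱ F` of `F`, for the transition operator `T` of the backward walk. -/
def potential (q : ι → ℝ) (c : ι → (ℕ → ι) → ℝ) (F : (ℕ → ι) → ℝ → ℝ) (ω : ℕ → ι) (s : ℝ) : ℝ :=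
  ∑' i, (transferOp q c ^ i) F ω s

theorem transferOp_pow_comp_add_right (F : (ℕ → ι) → ℝ → ℝ) (t : ℝ) (i : ℕ) :
    (transferOp q c ^ i) (fun ω s => F ω (s + t)) =
      fun ω s => (transferOp q c ^ i) F ω (s + t) := by
  induction i with
  | zero => rfl
  | succ i ih =>
    rw [transferOp_pow_succ, ih, transferOp_pow_succ]
    exact funext₂ fun ω s => transferOp_comp_add_right _ t ω s

theorem potential_comp_add_right (F : (ℕ → ι) → ℝ → ℝ) (t : ℝ) (ω : ℕ → ι) (s : ℝ) :
    potential q c (fun ω s => F ω (s + t)) ω s = potential q c F ω (s + t) := by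
  simp only [potential, transferOp_pow_comp_add_right]

theorem potential_nonneg (hq : ∀ a, 0 ≤ q a) (hF : 0 ≤ F) : 0 ≤ potential q c F := fun ω s =>
  tsum_nonneg fun i => transferOp_pow_nonneg hq i hF ω s

namespace IsRenewalCocycle

theorem transferOp_pow_eq_zero (hc : IsRenewalCocycle q c D E ρ C) {α : ℝ}
    (hF : ∀ ω s, s < α → F ω s = 0) (m : ℕ) :
    ∀ ω s, s < α + m * D → (transferOp q c ^ m) F ω s = 0 := by
  induction m with
  | zero => simpa using hF
  | succ m ih =>
    intro ω s hs
    push_cast at hs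
    rw [transferOp_pow_succ, transferOp_apply]
    refine Finset.sum_eq_zero fun a _ => ?_
    rw [ih _ _ (by linarith [hc.le_cocycle a ω]), mul_zero]

theorem exists_lt_add_nat_mul (hc : IsRenewalCocycle q c D E ρ C) (α s : ℝ) :
    ∃ N : ℕ, s < α + N * D := by
  obtain ⟨N, hN⟩ := exists_lt_nsmul hc.D_pos (s - α)
  exact ⟨N, by rwa [← sub_lt_iff_lt_add', ← nsmul_eq_mul]⟩

theorem potential_eq_sum (hc : IsRenewalCocycle q c D E ρ C) {α : ℝ}
    (hF : ∀ ω s, s < α → F ω s = 0) {N : ℕ} {s : ℝ} (hN : s < α + N * D) (ω : ℕ → ι) :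
    potential q c F ω s = ∑ i ∈ Finset.range N, (transferOp q c ^ i) F ω s := by
  refine tsum_eq_sum fun i hi => hc.transferOp_pow_eq_zero hF i ω s (hN.trans_le ?_)
  rw [Finset.mem_range, not_lt] at hi
  have := hc.D_pos
  gcongr

theorem potential_eq (hc : IsRenewalCocycle q c D E ρ C) {α : ℝ}
    (hF : ∀ ω s, s < α → F ω s = 0) (ω : ℕ → ι) (s : ℝ) :
    potential q c F ω s = F ω s + transferOp q c (potential q c F) ω s := by
  obtain ⟨N, hN⟩ := hc.exists_lt_add_nat_mul α s
  have hN' : s < α + (N + 1 : ℕ) * D := by push_cast; linarith [hc.D_pos]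
  rw [hc.potential_eq_sum hF hN', Finset.sum_range_succ', transferOp_apply, add_comm]
  congr 1
  simp only [transferOp_pow_succ, transferOp_apply]
  rw [Finset.sum_comm]
  refine Finset.sum_congr rfl fun a _ => ?_
  rw [hc.potential_eq_sum hF (N := N) (by linarith [hc.le_cocycle a ω, hc.D_pos]), Finset.mul_sum]

theorem potential_mono (hc : IsRenewalCocycle q c D E ρ C) {G : (ℕ → ι) → ℝ → ℝ} {α : ℝ}
    (hF : ∀ ω s, s < α → F ω s = 0) (hG : ∀ ω s, s < α → G ω s = 0) (h : F ≤ G) (ω : ℕ → ι)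
    (s : ℝ) : potential q c F ω s ≤ potential q c G ω s := by
  obtain ⟨N, hN⟩ := hc.exists_lt_add_nat_mul α s
  rw [hc.potential_eq_sum hF hN, hc.potential_eq_sum hG hN]
  exact Finset.sum_le_sum fun i _ => transferOp_pow_mono hc.weight_nonneg i h ω s

theorem potential_sub (hc : IsRenewalCocycle q c D E ρ C) {G : (ℕ → ι) → ℝ → ℝ} {α : ℝ}
    (hF : ∀ ω s, s < α → F ω s = 0) (hG : ∀ ω s, s < α → G ω s = 0) (ω : ℕ → ι) (s : ℝ) :
    potential q c (F - G) ω s = potential q c F ω s - potential q c G ω s := by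
  obtain ⟨N, hN⟩ := hc.exists_lt_add_nat_mul α s
  have hFG : ∀ ω s, s < α → (F - G) ω s = 0 := fun ω s hs => by
    rw [Pi.sub_apply, Pi.sub_apply, hF ω s hs, hG ω s hs, sub_zero]
  rw [hc.potential_eq_sum hF hN, hc.potential_eq_sum hG hN, hc.potential_eq_sum hFG hN,
    ← Finset.sum_sub_distrib]
  exact Finset.sum_congr rfl fun i _ => by rw [map_sub, Pi.sub_apply, Pi.sub_apply]

theorem sum_transferOp_pow_timeWindow_le (hc : IsRenewalCocycle q c D E ρ C) {α β : ℝ}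
    (hαβ : α ≤ β) (N : ℕ) (ω : ℕ → ι) (s : ℝ) :
    ∑ i ∈ Finset.range N, (transferOp q c ^ i) (timeWindow α β) ω s ≤ (β - α) / D + 1 := by
  have hD := hc.D_pos
  let φ : ℝ → ℝ := fun s => (max (min s β) (α - D) - (α - D)) / D
  have hφ_mono : Monotone φ := fun s t hst => by simp only [φ]; gcongr
  have hφ_le : φ s ≤ (β - α) / D + 1 := by
    rw [div_add_one hD.ne']
    have : max (min s β) (α - D) ≤ β := max_le (min_le_right _ _) (by linarith)
    exact div_le_div_of_nonneg_right (by linarith) hD.le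
  have hφ_jump : ∀ s ∈ Icc α β, ∀ d, D ≤ d → 1 ≤ φ s - φ (s - d) := by
    intro s hs d hd
    rw [← sub_div, le_div_iff₀ hD, min_eq_left hs.2, max_eq_left (by linarith [hs.1])]
    have : max (min (s - d) β) (α - D) ≤ s - D :=
      max_le ((min_le_left _ _).trans (by linarith)) (by linarith [hs.1])
    linarith
  have hwin : (timeWindow α β : (ℕ → ι) → ℝ → ℝ) ≤
      (fun _ => φ) - transferOp q c (fun _ => φ) := by
    intro ω s
    rw [Pi.sub_apply, Pi.sub_apply, transferOp_apply, ← hc.sum_weight_mul (φ s),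
      ← hc.sum_weight_mul (timeWindow α β ω s), ← Finset.sum_sub_distrib]
    refine Finset.sum_le_sum fun a _ => ?_
    rw [← mul_sub]
    refine mul_le_mul_of_nonneg_left ?_ (hc.weight_nonneg a)
    by_cases hs : s ∈ Icc α β
    · exact (indicator_of_mem hs _).trans_le (hφ_jump s hs _ (hc.le_cocycle a ω))
    · rw [timeWindow, indicator_of_notMem hs]
      exact sub_nonneg.mpr (hφ_mono (by linarith [hc.le_cocycle a ω]))
  have hsum := sum_transferOp_pow_le hc.weight_nonneg
    (fun _ s => div_nonneg (sub_nonneg.mpr (le_max_right _ _)) hD.le) hwin N ω s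
  simp only [Finset.sum_apply] at hsum
  exact hsum.trans hφ_le

theorem abs_transferOp_pow_sub_le (hc : IsRenewalCocycle q c D E ρ C) (hL : 0 ≤ L)
    {V : (ℕ → ι) → ℝ → ℝ} (hV : 0 ≤ V) (hF : ∀ ω ω' s s', |F ω s - F ω' s'| ≤
      L * skewDist C ρ ω ω' s s' * (V ω s + V ω' s')) (i : ℕ) :
    ∀ ω ω' s s', |(transferOp q c ^ i) F ω s - (transferOp q c ^ i) F ω' s'| ≤
      L * skewDist C ρ ω ω' s s' *
        ((transferOp q c ^ i) V ω s + (transferOp q c ^ i) V ω' s') := by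
  induction i with
  | zero => simpa using hF
  | succ i ih =>
    intro ω ω' s s'
    have hVi := transferOp_pow_nonneg (c := c) hc.weight_nonneg i hV
    simp only [transferOp_pow_succ, transferOp_apply]
    rw [← Finset.sum_sub_distrib, ← Finset.sum_add_distrib, Finset.mul_sum]
    refine (Finset.abs_sum_le_sum_abs _ _).trans (Finset.sum_le_sum fun a _ => ?_)
    rw [← mul_sub, abs_mul, abs_of_pos (hc.weight_pos a), ← mul_add, mul_left_comm]
    refine mul_le_mul_of_nonneg_left ((ih _ _ _ _).trans ?_) (hc.weight_nonneg a)
    exact mul_le_mul_of_nonneg_right (mul_le_mul_of_nonneg_left (hc.skewDist_prepend_le a _ _ _ _)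
      hL) (add_nonneg (hVi _ _) (hVi _ _))

theorem abs_potential_le (hc : IsRenewalCocycle q c D E ρ C) (hW : 0 ≤ W)
    (hF : IsTestFunction ρ C L W F) (ω : ℕ → ι) (s : ℝ) :
    |potential q c F ω s| ≤ (W - -W) / D + 1 := by
  obtain ⟨N, hN⟩ := hc.exists_lt_add_nat_mul (-W) s
  rw [hc.potential_eq_sum hF.eq_zero_of_lt hN, abs_of_nonneg
    (Finset.sum_nonneg fun i _ => transferOp_pow_nonneg hc.weight_nonneg i hF.nonneg ω s)]
  refine (Finset.sum_le_sum fun i _ => ?_).trans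
    (hc.sum_transferOp_pow_timeWindow_le (neg_le_self hW) N ω s)
  exact transferOp_pow_mono hc.weight_nonneg i hF.le_timeWindow ω s

theorem abs_potential_sub_le (hc : IsRenewalCocycle q c D E ρ C) (hL : 0 ≤ L) (hW : 0 ≤ W)
    (hF : IsTestFunction ρ C L W F) (ω ω' : ℕ → ι) (s s' : ℝ) :
    |potential q c F ω s - potential q c F ω' s'| ≤
      L * (2 * ((W - -W) / D + 1)) * skewDist C ρ ω ω' s s' := by
  obtain ⟨N, hN⟩ := hc.exists_lt_add_nat_mul (-W) (max s s')
  have hvisits := hc.sum_transferOp_pow_timeWindow_le (neg_le_self hW) N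
  rw [hc.potential_eq_sum hF.eq_zero_of_lt ((le_max_left _ _).trans_lt hN),
    hc.potential_eq_sum hF.eq_zero_of_lt ((le_max_right _ _).trans_lt hN),
    ← Finset.sum_sub_distrib]
  calc |∑ i ∈ Finset.range N, ((transferOp q c ^ i) F ω s - (transferOp q c ^ i) F ω' s')|
      ≤ ∑ i ∈ Finset.range N, L * skewDist C ρ ω ω' s s' *
          ((transferOp q c ^ i) (timeWindow (-W) W) ω s +
            (transferOp q c ^ i) (timeWindow (-W) W) ω' s') :=
        (Finset.abs_sum_le_sum_abs _ _).trans (Finset.sum_le_sum fun i _ =>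
          hc.abs_transferOp_pow_sub_le hL (timeWindow_nonneg _ _) hF.abs_sub_le_timeWindow
            i _ _ _ _)
    _ ≤ L * skewDist C ρ ω ω' s s' * (2 * ((W - -W) / D + 1)) := by
        rw [← Finset.mul_sum, Finset.sum_add_distrib, two_mul]
        exact mul_le_mul_of_nonneg_left (add_le_add (hvisits ω s) (hvisits ω' s'))
          (mul_nonneg hL (skewDist_nonneg hc.C_nonneg hc.ρ_pos.le _ _ _ _))
    _ = _ := mul_right_comm _ _ _

theorem le_of_transferOp_le (hc : IsRenewalCocycle q c D E ρ C) {V : (ℕ → ι) → ℝ → ℝ} {T k : ℝ}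
    (hV : ∀ ω s, T < s → transferOp q c V ω s ≤ V ω s) (hT : ∀ ω, ∀ s ∈ Icc (T - E) T, k ≤ V ω s)
    (ω : ℕ → ι) (s : ℝ) (hs : T - E ≤ s) : k ≤ V ω s := by
  have key : ∀ m : ℕ, ∀ ω, ∀ s ∈ Icc (T - E) (T + m * D), k ≤ V ω s := by
    intro m
    induction m with
    | zero => simpa using hT
    | succ m ih =>
      rintro ω s ⟨h₁, h₂⟩
      rcases le_or_gt s T with h | h
      · exact hT ω s ⟨h₁, h⟩
      · push_cast at h₂
        refine le_trans ?_ (hV ω s h)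
        rw [transferOp_apply, ← hc.sum_weight_mul k]
        exact Finset.sum_le_sum fun a _ => mul_le_mul_of_nonneg_left (ih _ _
          ⟨by linarith [hc.cocycle_le a ω], by linarith [hc.le_cocycle a ω]⟩) (hc.weight_nonneg a)
  obtain ⟨m, hm⟩ := hc.exists_lt_add_nat_mul T s
  exact key m ω s ⟨hs, hm.le⟩

theorem abs_sub_le_of_eq_transferOp (hc : IsRenewalCocycle q c D E ρ C) {V : (ℕ → ι) → ℝ → ℝ}
    {T k ε : ℝ} (hV : ∀ ω s, T < s → V ω s = transferOp q c V ω s)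
    (hT : ∀ ω, ∀ s ∈ Icc (T - E) T, |V ω s - k| ≤ ε) (ω : ℕ → ι) (s : ℝ) (hs : T - E ≤ s) :
    |V ω s - k| ≤ ε := by
  have hlower : k - ε ≤ V ω s := hc.le_of_transferOp_le (fun ω s h => (hV ω s h).ge)
    (fun ω s h => sub_le_of_abs_sub_le_left (hT ω s h)) ω s hs
  have hupper : -(k + ε) ≤ (-V) ω s := by
    refine hc.le_of_transferOp_le (fun ω s h => ?_) (fun ω s h => ?_) ω s hs
    · rw [map_neg]
      exact neg_le_neg (hV ω s h).le
    · exact neg_le_neg (by linarith [le_of_abs_le (hT ω s h)])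
  exact abs_le.mpr ⟨by linarith, by linarith [show (-V) ω s = -V ω s from rfl]⟩

theorem potential_eq_transferOp (hc : IsRenewalCocycle q c D E ρ C) (hF : IsTestFunction ρ C L W F)
    (ω : ℕ → ι) {s : ℝ} (hs : W < s) :
    potential q c F ω s = transferOp q c (potential q c F) ω s := by
  rw [hc.potential_eq hF.eq_zero_of_lt, hF.eq_zero fun h => hs.not_ge h.2, zero_add]

theorem exists_limit_translate_potential (hc : IsRenewalCocycle q c D E ρ C)
    (hN : IsNonarithmetic c ρ C) (hL : 0 ≤ L) (hW : 0 ≤ W) {F : ℕ → (ℕ → ι) → ℝ → ℝ}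
    (hF : ∀ j, IsTestFunction ρ C L W (F j)) : ∃ k, ∀ (w : ℕ → ℕ → ι) (t : ℕ → ℝ) (A : ℝ),
      (∀ j, |t j| ≤ A) →
        Tendsto (fun j => potential q c (F j) (w j) (t j + j)) (hyperfilter ℕ) (𝓝 k) := by
  let : TopologicalSpace ι := ⊥
  have : DiscreteTopology ι := ⟨rfl⟩
  have hharm (ω : ℕ → ι) (s : ℝ) : ∀ᶠ j : ℕ in atTop,
      transferOp q c (fun ω s => potential q c (F j) ω (s + j)) ω s =
        potential q c (F j) ω (s + j) := by
    filter_upwards [tendsto_natCast_atTop_atTop.eventually_gt_atTop (W - s)] with j hj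
    rw [transferOp_comp_add_right, hc.potential_eq_transferOp (hF j) ω (by linarith)]
  obtain ⟨H, hH, hlim⟩ := exists_isHarmonic_limit hc
    (fun j ω s => hc.abs_potential_le hW (hF j) ω (s + j))
    (fun j ω ω' s s' => by
      simpa only [skewDist_add_right] using
        hc.abs_potential_sub_le hL hW (hF j) ω ω' (s + j) (s' + j))
    hharm
  obtain ⟨k, hk⟩ := hH.exists_eq_const hc hN
  refine ⟨k, fun w t A ht => ?_⟩
  obtain ⟨ω, hω⟩ := exists_tendsto_hyperfilter_of_compactSpace w
  obtain ⟨s, -, hs⟩ := exists_tendsto_hyperfilter_of_abs_le ht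
  simpa only [hk] using hlim hω hs

theorem exists_forall_abs_potential_sub_le (hc : IsRenewalCocycle q c D E ρ C)
    (hN : IsNonarithmetic c ρ C) (hL : 0 ≤ L) (hW : 0 ≤ W) {ε : ℝ} (hε : 0 < ε) :
    ∃ T : ℝ, ∀ F, IsTestFunction ρ C L W F → ∃ k, ∀ ω s, T ≤ s → |potential q c F ω s - k| ≤ ε := by
  suffices h : ∃ j : ℕ, ∀ F, IsTestFunction ρ C L W F → ∃ k, ∀ ω, ∀ s ∈ Icc (W + j - E) (W + j),
      |potential q c F ω s - k| ≤ ε by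
    obtain ⟨j, h⟩ := h
    refine ⟨W + j - E, fun F hF => (h F hF).imp fun k hk => hc.abs_sub_le_of_eq_transferOp
      (fun ω s hs => hc.potential_eq_transferOp hF ω ?_) hk⟩
    linarith [Nat.cast_nonneg (α := ℝ) j]
  by_contra! hcon
  choose F hF hbad using hcon
  obtain ⟨k, hk⟩ := hc.exists_limit_translate_potential hN hL hW hF
  choose w t ht hbad using fun j => hbad j k
  have hlim := hk w (fun j => t j - j) (W + |E|) fun j => abs_le.mpr
    ⟨by linarith [(ht j).1, le_abs_self E], by linarith [(ht j).2, abs_nonneg E]⟩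
  simp only [sub_add_cancel] at hlim
  have hlim' : Tendsto (fun j => |potential q c (F j) (w j) (t j) - k|) (hyperfilter ℕ) (𝓝 0) := by
    simpa using (hlim.sub_const k).abs
  exact hε.not_ge (ge_of_tendsto' hlim' fun j => (hbad j).le)

theorem exists_forall_abs_potential_sub_potential_le (hc : IsRenewalCocycle q c D E ρ C)
    (hN : IsNonarithmetic c ρ C) (hL : 0 ≤ L) (hW : 0 ≤ W) {ε : ℝ} (hε : 0 < ε) :
    ∃ T : ℝ, ∀ F, IsTestFunction ρ C L W F → ∀ ω ω' s s', T ≤ s → T ≤ s' →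
      |potential q c F ω s - potential q c F ω' s'| ≤ ε := by
  obtain ⟨T, hT⟩ := hc.exists_forall_abs_potential_sub_le hN hL hW (half_pos hε)
  refine ⟨T, fun F hF ω ω' s s' hs hs' => ?_⟩
  obtain ⟨k, hk⟩ := hT F hF
  calc |potential q c F ω s - potential q c F ω' s'|
      ≤ |potential q c F ω s - k| + |k - potential q c F ω' s'| := abs_sub_le _ _ _
    _ ≤ ε / 2 + ε / 2 := add_le_add (hk ω s hs) ((abs_sub_comm _ _).trans_le (hk ω' s' hs'))
    _ = ε := add_halves ε

theorem exists_forall_abs_potential_sub_limit_le (hc : IsRenewalCocycle q c D E ρ C)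
    (hN : IsNonarithmetic c ρ C) (hL : 0 ≤ L) (hW : 0 ≤ W) {ε : ℝ} (hε : 0 < ε) :
    ∃ T : ℝ, ∀ F, IsTestFunction ρ C L W F → ∀ ω₀ k, Tendsto (potential q c F ω₀) atTop (𝓝 k) →
      ∀ ω s, T ≤ s → |potential q c F ω s - k| ≤ ε := by
  obtain ⟨T, hT⟩ := hc.exists_forall_abs_potential_sub_potential_le hN hL hW hε
  refine ⟨T, fun F hF ω₀ k hk ω s hs => le_of_tendsto ((hk.const_sub _).abs) ?_⟩
  filter_upwards [eventually_ge_atTop T] with s' hs' using hT F hF ω ω₀ s s' hs hs'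

theorem exists_tendsto_potential (hc : IsRenewalCocycle q c D E ρ C) (hN : IsNonarithmetic c ρ C)
    (hL : 0 ≤ L) (hW : 0 ≤ W) (hF : IsTestFunction ρ C L W F) :
    ∃ k, ∀ ω, Tendsto (potential q c F ω) atTop (𝓝 k) := by
  have := hc.nonempty
  obtain ⟨ω₀⟩ : Nonempty (ℕ → ι) := inferInstance
  obtain ⟨k, hk⟩ : ∃ k, Tendsto (potential q c F ω₀) atTop (𝓝 k) := by
    refine cauchySeq_tendsto_of_complete (Metric.cauchySeq_iff.mpr fun ε hε => ?_)
    obtain ⟨T, hT⟩ := hc.exists_forall_abs_potential_sub_potential_le hN hL hW (half_pos hε)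
    exact ⟨T, fun s hs s' hs' => (hT F hF ω₀ ω₀ s s' hs hs').trans_lt (half_lt_self hε)⟩
  refine ⟨k, fun ω => Metric.tendsto_atTop.mpr fun ε hε => ?_⟩
  obtain ⟨T, hT⟩ := hc.exists_forall_abs_potential_sub_limit_le hN hL hW (half_pos hε)
  exact ⟨T, fun s hs => (hT F hF ω₀ k hk ω s hs).trans_lt (half_lt_self hε)⟩

end IsRenewalCocycle

end Potential

/-! ### The renewal theorem for intervals -/

section RealLine

theorem tendsto_div_natCast_of_tendsto_sub {f : ℝ → ℝ} {x u : ℝ} (hx : 0 < x)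
    (hf : Tendsto (fun s => f (s + x) - f s) atTop (𝓝 u)) :
    Tendsto (fun n : ℕ => f (n * x) / n) atTop (𝓝 u) := by
  have hmean := (hf.comp (tendsto_natCast_atTop_atTop.atTop_mul_const hx)).cesaro
  have hsum (n : ℕ) : ∑ i ∈ Finset.range n, (f (i * x + x) - f (i * x)) = f (n * x) - f 0 := by
    simpa [add_mul] using Finset.sum_range_sub (fun i : ℕ => f (i * x)) n
  have h0 := tendsto_inv_atTop_nhds_zero_nat (𝕜 := ℝ) |>.mul_const (f 0)
  have hlim := hmean.add h0
  simp only [Function.comp_apply, hsum, zero_mul, add_zero] at hlim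
  exact hlim.congr fun n => by rw [← mul_add, sub_add_cancel, inv_mul_eq_div]

theorem tendsto_div_of_monotone {f : ℝ → ℝ} (hmono : Monotone f) {x u : ℝ} (hx : 0 < x)
    (hf : Tendsto (fun s => f (s + x) - f s) atTop (𝓝 u)) :
    Tendsto (fun s => f s / s) atTop (𝓝 (u / x)) := by
  have hx' : 0 < x⁻¹ := inv_pos.mpr hx
  have hlim := tendsto_div_natCast_of_tendsto_sub hx hf
  have hatTop : Tendsto (fun s : ℝ => x⁻¹ * s) atTop atTop := tendsto_id.const_mul_atTop hx'
  have hfloor := (hlim.comp (tendsto_nat_floor_atTop.comp hatTop)).mul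
    (tendsto_nat_floor_mul_div_atTop hx'.le)
  have hceil := (hlim.comp (tendsto_nat_ceil_atTop.comp hatTop)).mul
    (tendsto_nat_ceil_mul_div_atTop hx'.le)
  rw [← div_eq_mul_inv] at hfloor hceil
  refine tendsto_of_tendsto_of_tendsto_of_le_of_le' hfloor hceil ?_ ?_
  all_goals
    filter_upwards [eventually_ge_atTop x] with s hs
    have hs0 := hx.trans_le hs
    have h1 : 1 ≤ x⁻¹ * s := by rwa [inv_mul_eq_div, one_le_div hx]
    simp only [Function.comp_apply]
  · rw [div_mul_div_cancel₀ (Nat.cast_ne_zero.mpr (Nat.floor_pos.mpr h1).ne')]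
    gcongr
    apply hmono
    have := Nat.floor_le (zero_le_one.trans h1)
    rwa [inv_mul_eq_div, le_div_iff₀ hx, ← inv_mul_eq_div] at this
  · rw [div_mul_div_cancel₀ (Nat.cast_ne_zero.mpr (Nat.ceil_pos.mpr (one_pos.trans_le h1)).ne')]
    gcongr
    apply hmono
    have := Nat.le_ceil (x⁻¹ * s)
    rwa [inv_mul_eq_div, div_le_iff₀ hx, ← inv_mul_eq_div] at this

theorem exists_Ioo_subset_subset_Icc {I : Set ℝ} (hI : I.OrdConnected) {a b : ℝ}
    (hab : a ≤ b) (hsub : I ⊆ Icc a b) :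
    ∃ α β, a ≤ α ∧ α ≤ β ∧ β ≤ b ∧ Ioo α β ⊆ I ∧ I ⊆ Icc α β := by
  rcases I.eq_empty_or_nonempty with rfl | hne
  · exact ⟨a, a, le_rfl, le_rfl, hab, by simp, by simp⟩
  have hbelow : BddBelow I := bddBelow_Icc.mono hsub
  have habove : BddAbove I := bddAbove_Icc.mono hsub
  exact ⟨sInf I, sSup I, le_csInf hne fun x hx => (hsub hx).1, csInf_le_csSup hne hbelow habove,
    csSup_le hne fun x hx => (hsub hx).2,
    IsConnected.Ioo_csInf_csSup_subset ⟨hne, hI.isPreconnected⟩ hbelow habove,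
    subset_Icc_csInf_csSup hbelow habove⟩

theorem volume_real_eq_of_Ioo_subset {I : Set ℝ} {α β : ℝ} (hαβ : α ≤ β) (h : Ioo α β ⊆ I)
    (h' : I ⊆ Icc α β) : volume.real I = β - α := by
  have hfin : volume (Icc α β) ≠ ∞ := measure_Icc_lt_top.ne
  rw [← Real.volume_real_Icc_of_le hαβ]
  refine (measureReal_mono h' hfin).antisymm ?_
  rw [Real.volume_real_Icc_of_le hαβ, ← Real.volume_real_Ioo_of_le hαβ]
  exact measureReal_mono h (measure_ne_top_of_subset h' hfin)

end RealLine

section Ramp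

variable {δ y y' : ℝ}

/-- The piecewise linear function that vanishes on `(-∞, 0]` and equals `1` on `[δ, ∞)`: a
continuous substitute for the indicator function of `[0, ∞)`. -/
def ramp (δ y : ℝ) : ℝ := max 0 (min 1 (y / δ))

theorem ramp_nonneg (δ y : ℝ) : 0 ≤ ramp δ y := le_max_left _ _

theorem ramp_le_one (δ y : ℝ) : ramp δ y ≤ 1 := max_le zero_le_one (min_le_left _ _)

theorem ramp_of_nonpos (hδ : 0 < δ) (hy : y ≤ 0) : ramp δ y = 0 :=
  max_eq_left ((min_le_right _ _).trans (div_nonpos_of_nonpos_of_nonneg hy hδ.le))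

theorem ramp_of_le (hδ : 0 < δ) (hy : δ ≤ y) : ramp δ y = 1 := by
  rw [ramp, min_eq_left ((one_le_div hδ).mpr hy), max_eq_right zero_le_one]

theorem ramp_le_ramp (hδ : 0 < δ) (h : y ≤ y') : ramp δ y ≤ ramp δ y' := by
  unfold ramp
  gcongr

theorem abs_ramp_sub_le (hδ : 0 < δ) (y y' : ℝ) : |ramp δ y - ramp δ y'| ≤ |y - y'| / δ := by
  calc |ramp δ y - ramp δ y'|
      ≤ |min 1 (y / δ) - min 1 (y' / δ)| := by
        simpa [ramp] using abs_max_sub_max_le_max 0 (min 1 (y / δ)) 0 (min 1 (y' / δ))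
    _ ≤ |y / δ - y' / δ| := by simpa using abs_min_sub_min_le_max 1 (y / δ) 1 (y' / δ)
    _ = |y - y'| / δ := by rw [← sub_div, abs_div, abs_of_pos hδ]

end Ramp

section Renewal

variable {ι : Type*} {q : ι → ℝ} {c : ι → (ℕ → ι) → ℝ} {D E ρ C δ α β : ℝ} {g : (ℕ → ι) → ℝ}

/-- A change of the time origin depending on the point of the symbolic space, controlled in the
same way as the differences `wordSum c u ω - wordSum c u x`. -/
structure IsRecentring (ρ C : ℝ) (g : (ℕ → ι) → ℝ) : Prop where
  abs_le : ∀ ω, |g ω| ≤ C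
  abs_sub_le : ∀ ω ω', |g ω - g ω'| ≤ C * dMet ρ ω ω'

/-- The trapezoidal function of `s - g ω` rising on `[α, α + δ]` and falling on `[β, β + δ]`. -/
def trapezoid (δ : ℝ) (g : (ℕ → ι) → ℝ) (α β : ℝ) (ω : ℕ → ι) (s : ℝ) : ℝ :=
  ramp δ (s - g ω - α) - ramp δ (s - g ω - β)

theorem isTestFunction_trapezoid (hg : IsRecentring ρ C g) (hδ : 0 < δ) {W : ℝ} (hα : -W ≤ α)
    (hαβ : α ≤ β) (hβ : β ≤ W) :
    IsTestFunction ρ C (2 / δ) (W + C + δ) (trapezoid δ g α β) where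
  nonneg ω s := sub_nonneg.mpr (ramp_le_ramp hδ (by linarith))
  le_timeWindow ω s := by
    have hgω := abs_le.mp (hg.abs_le ω)
    by_cases hs : s ∈ Icc (-(W + C + δ)) (W + C + δ)
    · rw [timeWindow, indicator_of_mem hs, trapezoid]
      exact (sub_le_self _ (ramp_nonneg _ _)).trans (ramp_le_one _ _)
    · rw [timeWindow, indicator_of_notMem hs, trapezoid]
      rw [mem_Icc, not_and_or, not_le, not_le] at hs
      rcases hs with hs | hs
      · rw [ramp_of_nonpos hδ (by linarith), ramp_of_nonpos hδ (by linarith), sub_zero]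
      · rw [ramp_of_le hδ (by linarith), ramp_of_le hδ (by linarith), sub_self]
  abs_sub_le ω ω' s s' := by
    have hshift (x : ℝ) : |s - g ω - x - (s' - g ω' - x)| ≤ skewDist C ρ ω ω' s s' := by
      rw [sub_sub_sub_cancel_right, sub_sub_sub_comm]
      exact (abs_sub _ _).trans (add_le_add_right (hg.abs_sub_le ω ω') _)
    rw [trapezoid, trapezoid, sub_sub_sub_comm, show 2 / δ * skewDist C ρ ω ω' s s' =
      skewDist C ρ ω ω' s s' / δ + skewDist C ρ ω ω' s s' / δ by ring]
    refine (abs_sub _ _).trans (add_le_add ?_ ?_)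
    all_goals exact (abs_ramp_sub_le hδ _ _).trans (div_le_div_of_nonneg_right (hshift _) hδ.le)

/-- The indicator function of `I`, as a function of the recentred time `s - g ω`. -/
def recentredIndicator (g : (ℕ → ι) → ℝ) (I : Set ℝ) (ω : ℕ → ι) (s : ℝ) : ℝ :=
  I.indicator 1 (s - g ω)

theorem recentredIndicator_nonneg (g : (ℕ → ι) → ℝ) (I : Set ℝ) : 0 ≤ recentredIndicator g I :=
  fun _ _ => indicator_nonneg (fun _ _ => zero_le_one) _

theorem recentredIndicator_of_lt (hg : IsRecentring ρ C g) {I : Set ℝ} (hI : I ⊆ Ici 0)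
    (ω : ℕ → ι) (s : ℝ) (hs : s < -C) : recentredIndicator g I ω s = 0 :=
  indicator_of_notMem
    (fun h => by linarith [mem_Ici.mp (hI h), neg_le_of_abs_le (hg.abs_le ω)]) _

theorem trapezoid_le_recentredIndicator (g : (ℕ → ι) → ℝ) (hδ : 0 < δ) {I : Set ℝ}
    (hI : Ioo α β ⊆ I) : trapezoid δ g α (β - δ) ≤ recentredIndicator g I := by
  intro ω s
  rw [recentredIndicator]
  by_cases h : s - g ω ∈ Ioo α β
  · rw [indicator_of_mem (hI h)]
    exact (sub_le_self _ (ramp_nonneg _ _)).trans (ramp_le_one _ _)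
  · refine le_trans ?_ (indicator_nonneg (fun _ _ => zero_le_one) _)
    rw [trapezoid, sub_nonpos]
    rcases not_and_or.mp h with h | h
    · rw [ramp_of_nonpos hδ (by linarith)]
      exact ramp_nonneg _ _
    · rw [ramp_of_le hδ (y := _ - (β - δ)) (by linarith)]
      exact ramp_le_one _ _

theorem recentredIndicator_le_trapezoid (g : (ℕ → ι) → ℝ) (hδ : 0 < δ) (hαβ : α ≤ β) {I : Set ℝ}
    (hI : I ⊆ Icc α β) : recentredIndicator g I ≤ trapezoid δ g (α - δ) β := by
  intro ω s
  rw [recentredIndicator]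
  by_cases h : s - g ω ∈ I
  · have := hI h
    rw [trapezoid, ramp_of_le hδ (by linarith [this.1]), ramp_of_nonpos hδ (by linarith [this.2]),
      sub_zero]
    exact (indicator_of_mem h _).le
  · rw [indicator_of_notMem h]
    exact sub_nonneg.mpr (ramp_le_ramp hδ (by linarith))

variable [Fintype ι]

/-- The renewal function of the walk, smoothed on the scale `δ`. -/
def renewalFun (q : ι → ℝ) (c : ι → (ℕ → ι) → ℝ) (δ : ℝ) (g : (ℕ → ι) → ℝ) (ω : ℕ → ι) (s : ℝ) :
    ℝ :=
  potential q c (fun ω s => ramp δ (s - g ω)) ω s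

namespace IsRenewalCocycle

variable (hc : IsRenewalCocycle q c D E ρ C)
include hc

theorem potential_trapezoid (hg : IsRecentring ρ C g) (hδ : 0 < δ) (α β : ℝ) (ω : ℕ → ι) (s : ℝ) :
    potential q c (trapezoid δ g α β) ω s =
      renewalFun q c δ g ω (s - α) - renewalFun q c δ g ω (s - β) := by
  have hramp (x : ℝ) : (fun (ω : ℕ → ι) s => ramp δ (s - g ω - x)) =
      fun ω s => ramp δ (s + -x - g ω) :=
    funext₂ fun ω s => by ring_nf
  have hzero {x : ℝ} (hx : min α β ≤ x) (ω : ℕ → ι) (s : ℝ) (hs : s < min α β - C) :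
      ramp δ (s - g ω - x) = 0 :=
    ramp_of_nonpos hδ (by linarith [neg_le_of_abs_le (hg.abs_le ω)])
  refine (hc.potential_sub (hzero (min_le_left _ _)) (hzero (min_le_right _ _)) ω s).trans ?_
  rw [hramp, hramp, potential_comp_add_right (fun ω s => ramp δ (s - g ω)),
    potential_comp_add_right (fun ω s => ramp δ (s - g ω))]
  rfl

theorem renewalFun_le_renewalFun {δ' K : ℝ} {g' : (ℕ → ι) → ℝ} (hδ : 0 < δ) (hδ' : 0 < δ')
    (h : ∀ ω s, ramp δ (s - g ω) ≤ ramp δ' (s + K - g' ω))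
    (hg : IsRecentring ρ C g) (hg' : IsRecentring ρ C g') (ω : ℕ → ι) (s : ℝ) :
    renewalFun q c δ g ω s ≤ renewalFun q c δ' g' ω (s + K) := by
  unfold renewalFun
  rw [← potential_comp_add_right]
  refine hc.potential_mono (α := min 0 (-K) - C) (fun ω s hs => ?_) (fun ω s hs => ?_) h ω s
  · exact ramp_of_nonpos hδ (by linarith [neg_le_of_abs_le (hg.abs_le ω), min_le_left 0 (-K)])
  · exact ramp_of_nonpos hδ' (by linarith [neg_le_of_abs_le (hg'.abs_le ω), min_le_right 0 (-K)])

theorem monotone_renewalFun (hg : IsRecentring ρ C g) (hδ : 0 < δ) (ω : ℕ → ι) :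
    Monotone (renewalFun q c δ g ω) := fun s t hst => by
  have := hc.renewalFun_le_renewalFun (K := t - s) hδ hδ
    (fun ω r => ramp_le_ramp hδ (by linarith)) hg hg ω s
  rwa [add_sub_cancel] at this

theorem exists_tendsto_renewalFun_sub (hN : IsNonarithmetic c ρ C) (hg : IsRecentring ρ C g)
    (hδ : 0 < δ) {x : ℝ} (hx : 0 < x) : ∃ u, ∀ ω,
      Tendsto (fun s => renewalFun q c δ g ω (s + x) - renewalFun q c δ g ω s) atTop (𝓝 u) := by
  have hC := hc.C_nonneg
  refine (hc.exists_tendsto_potential hN (by positivity) (by positivity)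
    (isTestFunction_trapezoid hg hδ le_rfl (neg_nonpos.mpr hx.le) hx.le)).imp fun u hu ω => ?_
  simpa only [funext (hc.potential_trapezoid hg hδ _ _ ω), sub_neg_eq_add, sub_zero] using hu ω

theorem renewalFun_slope_le {δ' x y u v : ℝ} {g' : (ℕ → ι) → ℝ} (hg : IsRecentring ρ C g)
    (hg' : IsRecentring ρ C g') (hδ : 0 < δ) (hδ' : 0 < δ') (hx : 0 < x) (hy : 0 < y) {ω : ℕ → ι}
    (hu : Tendsto (fun s => renewalFun q c δ g ω (s + x) - renewalFun q c δ g ω s) atTop (𝓝 u))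
    (hv : Tendsto (fun s => renewalFun q c δ' g' ω (s + y) - renewalFun q c δ' g' ω s) atTop
      (𝓝 v)) : u / x ≤ v / y := by
  have hcompare (ω : ℕ → ι) (s : ℝ) : ramp δ (s - g ω) ≤ ramp δ' (s + (2 * C + δ') - g' ω) := by
    rcases le_or_gt (s - g ω) 0 with h | h
    · exact (ramp_of_nonpos hδ h).trans_le (ramp_nonneg _ _)
    · rw [ramp_of_le hδ' (y := s + (2 * C + δ') - g' ω)]
      · exact ramp_le_one _ _
      · linarith [neg_le_of_abs_le (hg.abs_le ω), le_of_abs_le (hg'.abs_le ω)]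
  have hmono' := hc.monotone_renewalFun hg' hδ' ω
  have hshift : Tendsto (fun s => renewalFun q c δ' g' ω (s + (2 * C + δ') + y) -
      renewalFun q c δ' g' ω (s + (2 * C + δ'))) atTop (𝓝 v) :=
    hv.comp (tendsto_atTop_add_const_right _ _ tendsto_id)
  have hlim := tendsto_div_of_monotone (f := fun s => renewalFun q c δ' g' ω (s + (2 * C + δ')))
    (fun s t hst => hmono' (add_le_add_left hst _)) hy
    (by simpa only [add_right_comm _ y] using hshift)
  refine le_of_tendsto_of_tendsto
    (tendsto_div_of_monotone (hc.monotone_renewalFun hg hδ ω) hx hu) hlim ?_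
  filter_upwards [eventually_gt_atTop 0] with s hs
  exact div_le_div_of_nonneg_right
    (hc.renewalFun_le_renewalFun hδ hδ' hcompare hg hg' ω s) hs.le

theorem isRecentring_zero : IsRecentring ρ C (0 : (ℕ → ι) → ℝ) :=
  ⟨fun ω => by simpa using hc.C_nonneg, fun ω ω' => by
    simpa using mul_nonneg hc.C_nonneg (dMet_nonneg hc.ρ_pos.le ω ω')⟩

theorem exists_tendsto_potential_trapezoid (hN : IsNonarithmetic c ρ C) :
    ∃ κ, ∀ δ g α β, 0 < δ → IsRecentring ρ C g → α < β → ∀ ω,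
      Tendsto (potential q c (trapezoid δ g α β) ω) atTop (𝓝 (κ * (β - α))) := by
  have hg₀ := hc.isRecentring_zero
  obtain ⟨κ, hκ⟩ := hc.exists_tendsto_renewalFun_sub hN hg₀ one_pos one_pos
  refine ⟨κ, fun δ g α β hδ hg hαβ ω => ?_⟩
  have hx := sub_pos.mpr hαβ
  obtain ⟨u, hu⟩ := hc.exists_tendsto_renewalFun_sub hN hg hδ hx
  have hslope : u / (β - α) = κ / 1 :=
    (hc.renewalFun_slope_le hg hg₀ hδ one_pos hx one_pos (hu ω) (hκ ω)).antisymm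
      (hc.renewalFun_slope_le hg₀ hg one_pos hδ one_pos hx (hκ ω) (hu ω))
  rw [div_one, div_eq_iff hx.ne'] at hslope
  rw [← hslope]
  refine ((hu ω).comp (tendsto_atTop_add_const_right _ (-β) tendsto_id)).congr fun s => ?_
  rw [hc.potential_trapezoid hg hδ, Function.comp_apply, id, ← sub_eq_add_neg, sub_add_sub_cancel]

theorem exists_pos_tendsto_potential_trapezoid (hN : IsNonarithmetic c ρ C) :
    ∃ κ, 0 < κ ∧ ∀ δ g α β, 0 < δ → IsRecentring ρ C g → α < β → ∀ ω,
      Tendsto (potential q c (trapezoid δ g α β) ω) atTop (𝓝 (κ * (β - α))) := by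
  obtain ⟨κ, hκ⟩ := hc.exists_tendsto_potential_trapezoid hN
  refine ⟨κ, ?_, hκ⟩
  have hg₀ := hc.isRecentring_zero
  have hne := hc.nonempty
  obtain ⟨ω₀⟩ : Nonempty (ℕ → ι) := inferInstance
  obtain ⟨a₀⟩ := hne
  have hE : 0 < E := hc.D_pos.trans_le ((hc.le_cocycle a₀ ω₀).trans (hc.cocycle_le a₀ ω₀))
  have hF := isTestFunction_trapezoid hg₀ one_pos (W := 1 + E) (α := -1) (β := E)
    (by linarith) (by linarith) (by linarith)
  -- Before jumping over the window `[0, E]` the backward walk visits it.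
  have hvisit (ω : ℕ → ι) (s : ℝ) (hs : E - E ≤ s) :
      1 ≤ potential q c (trapezoid 1 0 (-1) E) ω s := by
    refine hc.le_of_transferOp_le (fun ω s _ => ?_) (fun ω s hs => ?_) ω s hs
    all_goals rw [hc.potential_eq hF.eq_zero_of_lt ω s]
    · exact le_add_of_nonneg_left (hF.nonneg ω s)
    · have hone : trapezoid 1 0 (-1) E ω s = 1 := by
        rw [trapezoid, Pi.zero_apply, ramp_of_le one_pos (by linarith [hs.1]),
          ramp_of_nonpos one_pos (by linarith [hs.2]), sub_zero]
      have hnonneg : 0 ≤ transferOp q c (potential q c (trapezoid 1 0 (-1) E)) ω s := by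
        simpa using transferOp_pow_nonneg (c := c) hc.weight_nonneg 1
          (potential_nonneg hc.weight_nonneg hF.nonneg) ω s
      linarith
  have hle : 1 ≤ κ * (E - -1) := by
    refine ge_of_tendsto (hκ 1 0 (-1) E one_pos hg₀ (by linarith) ω₀) ?_
    filter_upwards [eventually_ge_atTop (E - E)] with s hs using hvisit ω₀ s hs
  exact pos_of_mul_pos_left (one_pos.trans_le hle) (by linarith)

theorem exists_forall_abs_potential_recentredIndicator_sub_le (hN : IsNonarithmetic c ρ C) :
    ∃ κ, 0 < κ ∧ ∀ W ε, 0 ≤ W → 0 < ε → ∃ T : ℝ, ∀ g, IsRecentring ρ C g →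
      ∀ I : Set ℝ, I.OrdConnected → I ⊆ Icc 0 W → ∀ ω s, T ≤ s →
        |potential q c (recentredIndicator g I) ω s - κ * volume.real I| ≤ ε := by
  obtain ⟨κ, hκ, hlim⟩ := hc.exists_pos_tendsto_potential_trapezoid hN
  refine ⟨κ, hκ, fun W ε hW hε => ?_⟩
  obtain ⟨δ, hδ, hκδ⟩ : ∃ δ, 0 < δ ∧ κ * δ = ε / 2 :=
    ⟨ε / 2 / κ, by positivity, mul_div_cancel₀ _ hκ.ne'⟩
  have hC := hc.C_nonneg
  obtain ⟨T, hT⟩ := hc.exists_forall_abs_potential_sub_limit_le (L := 2 / δ) (W := W + δ + C + δ) hN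
    (by positivity) (by positivity) (half_pos hε)
  refine ⟨T, fun g hg I hI hIW ω s hs => ?_⟩
  have htrap {α β : ℝ} (hα : -(W + δ) ≤ α) (hαβ : α < β) (hβ : β ≤ W + δ) :=
    abs_le.mp (hT _ (isTestFunction_trapezoid hg hδ hα hαβ.le hβ) ω _ (hlim δ g α β hδ hg hαβ ω)
      ω s hs)
  obtain ⟨α, β, hα, hαβ, hβ, hIoo, hIcc⟩ := exists_Ioo_subset_subset_Icc hI hW hIW
  rw [volume_real_eq_of_Ioo_subset hαβ hIoo hIcc]
  have hzero (ω : ℕ → ι) (s : ℝ) (hs : s < -(W + δ + C + δ)) : recentredIndicator g I ω s = 0 :=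
    recentredIndicator_of_lt hg (fun x hx => (hIW hx).1) ω s (by linarith)
  have hupper := hc.potential_mono hzero
    (isTestFunction_trapezoid (W := W + δ) hg hδ (by linarith) (by linarith)
      (by linarith)).eq_zero_of_lt (recentredIndicator_le_trapezoid g hδ hαβ hIcc) ω s
  refine abs_le.mpr ⟨?_, ?_⟩
  · rcases lt_or_ge α (β - δ) with h | h
    · have hlower := hc.potential_mono
        (isTestFunction_trapezoid (W := W + δ) hg hδ (by linarith) h.le
          (by linarith)).eq_zero_of_lt hzero (trapezoid_le_recentredIndicator g hδ hIoo) ω s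
      linarith [(htrap (by linarith) h (by linarith)).1]
    · have hnonneg : 0 ≤ potential q c (recentredIndicator g I) ω s :=
        potential_nonneg hc.weight_nonneg (recentredIndicator_nonneg g I) ω s
      linarith [mul_le_mul_of_nonneg_left (sub_le_comm.mp h) hκ.le]
  · linarith [(htrap (α := α - δ) (β := β) (by linarith) (by linarith) (by linarith)).2]

end IsRenewalCocycle

end Renewal

/-! ### Bernoulli measures -/

section Bernoulli

variable {ι : Type*} {q : ι → ℝ}

theorem prepend_mem_cylinder_succ {a : ι} {ω ξ : ℕ → ι} {m : ℕ} :
    prepend a ω ∈ PiNat.cylinder ξ (m + 1) ↔ a = ξ 0 ∧ ω ∈ PiNat.cylinder (shift ξ) m := by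
  simp only [PiNat.mem_cylinder_iff]
  exact Nat.forall_lt_succ_left

theorem isPiSystem_cylinder : IsPiSystem {s : Set (ℕ → ι) | ∃ ξ m, s = PiNat.cylinder ξ m} := by
  rintro - ⟨ξ, m, rfl⟩ - ⟨ξ', m', rfl⟩ ⟨ω, hω, hω'⟩
  rw [← PiNat.mem_cylinder_iff_eq.mp hω, ← PiNat.mem_cylinder_iff_eq.mp hω']
  rcases le_total m m' with h | h
  · exact ⟨ω, m', inter_eq_self_of_subset_right (PiNat.cylinder_anti ω h)⟩
  · exact ⟨ω, m, inter_eq_self_of_subset_left (PiNat.cylinder_anti ω h)⟩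

section Measurability

variable [MeasurableSpace ι]

theorem measurable_prepend (a : ι) : Measurable (prepend a) :=
  measurable_pi_iff.mpr fun i => match i with
    | 0 => measurable_const
    | j + 1 => measurable_pi_apply j

theorem measurable_shift : Measurable (shift : (ℕ → ι) → ℕ → ι) :=
  measurable_pi_iff.mpr fun i => measurable_pi_apply (i + 1)

theorem measurableSet_cylinder [MeasurableSingletonClass ι] (ξ : ℕ → ι) (m : ℕ) :
    MeasurableSet (PiNat.cylinder ξ m) := by
  rw [PiNat.cylinder_eq_pi]
  exact .pi (Finset.countable_toSet _) fun i _ => measurableSet_singleton _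

theorem generateFrom_cylinder [Finite ι] [MeasurableSingletonClass ι] :
    (MeasurableSpace.pi : MeasurableSpace (ℕ → ι)) =
      MeasurableSpace.generateFrom {s | ∃ ξ m, s = PiNat.cylinder ξ m} := by
  let : TopologicalSpace ι := ⊥
  have : DiscreteTopology ι := ⟨rfl⟩
  rw [BorelSpace.measurable_eq (α := ℕ → ι)]
  exact (PiNat.isTopologicalBasis_cylinders fun _ => ι).borel_eq_generateFrom

end Measurability

/-- The Bernoulli product measure on `ℕ → ι` whose letters have probabilities `q`, characterized by
its values on cylinders. -/
structure IsBernoulli [Fintype ι] [MeasurableSpace ι] (q : ι → ℝ) (P : Measure (ℕ → ι)) : Prop where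
  weight_pos : ∀ a, 0 < q a
  sum_weight : ∑ a, q a = 1
  measure_cylinder : ∀ ξ m, P (PiNat.cylinder ξ m) = ENNReal.ofReal (∏ i ∈ Finset.range m, q (ξ i))

/-- The operator `H ↦ ∑ₐ q a • H(a ·)` averaging over the preimages of the shift. -/
def averageOp [Fintype ι] (q : ι → ℝ) (H : (ℕ → ι) → ℝ) (ω : ℕ → ι) : ℝ :=
  ∑ a, q a * H (prepend a ω)

namespace IsBernoulli

variable [Fintype ι] [MeasurableSpace ι] [MeasurableSingletonClass ι] {P : Measure (ℕ → ι)}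
  {H : (ℕ → ι) → ℝ} (hP : IsBernoulli q P)
include hP

omit [MeasurableSingletonClass ι] in
theorem isProbabilityMeasure : IsProbabilityMeasure P where
  measure_univ := by
    have hne : Nonempty ι := by
      by_contra h
      rw [not_nonempty_iff] at h
      simpa using hP.sum_weight
    obtain ⟨ξ⟩ : Nonempty (ℕ → ι) := inferInstance
    simpa [PiNat.cylinder_zero] using hP.measure_cylinder ξ 0

omit [MeasurableSingletonClass ι] in
theorem measure_cylinder_pos (ξ : ℕ → ι) (m : ℕ) : 0 < P (PiNat.cylinder ξ m) := by
  rw [hP.measure_cylinder]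
  exact ENNReal.ofReal_pos.mpr (Finset.prod_pos fun i _ => hP.weight_pos (ξ i))

theorem eq_sum_map_prepend : P = ∑ a, ENNReal.ofReal (q a) • P.map (prepend a) := by
  have hprob := hP.isProbabilityMeasure
  have happly (s : Set (ℕ → ι)) (hs : MeasurableSet s) :
      (∑ a, ENNReal.ofReal (q a) • P.map (prepend a)) s =
        ∑ a, ENNReal.ofReal (q a) * P (prepend a ⁻¹' s) := by
    simp only [Measure.coe_finsetSum, Finset.sum_apply, Measure.smul_apply, smul_eq_mul,
      Measure.map_apply (measurable_prepend _) hs]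
  have hsum : ∑ a, ENNReal.ofReal (q a) = 1 := by
    rw [← ENNReal.ofReal_sum_of_nonneg fun a _ => (hP.weight_pos a).le, hP.sum_weight,
      ENNReal.ofReal_one]
  refine ext_of_generate_finite _ generateFrom_cylinder isPiSystem_cylinder ?_ ?_
  · rintro - ⟨ξ, m, rfl⟩
    rw [happly _ (measurableSet_cylinder ξ m)]
    cases m with
    | zero => simp [PiNat.cylinder_zero, hsum]
    | succ m =>
      have hpre (a : ι) (ha : a ≠ ξ 0) : prepend a ⁻¹' PiNat.cylinder ξ (m + 1) = ∅ :=
        eq_empty_of_forall_notMem fun ω h => ha (prepend_mem_cylinder_succ.mp h).1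
      have hpre' : prepend (ξ 0) ⁻¹' PiNat.cylinder ξ (m + 1) = PiNat.cylinder (shift ξ) m :=
        ext fun ω => prepend_mem_cylinder_succ.trans (and_iff_right rfl)
      rw [Finset.sum_eq_single (ξ 0) (fun a _ ha => by rw [hpre a ha, measure_empty, mul_zero])
        (fun h => absurd (Finset.mem_univ _) h), hpre', hP.measure_cylinder, hP.measure_cylinder,
        ← ENNReal.ofReal_mul (hP.weight_pos _).le, Finset.prod_range_succ', mul_comm]
      rfl
  · rw [happly _ MeasurableSet.univ]
    simp [hsum]

theorem integrable_map_prepend (hH : Integrable H P) (a : ι) :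
    Integrable H (P.map (prepend a)) := by
  rw [hP.eq_sum_map_prepend, integrable_finsetSum_measure] at hH
  exact (integrable_smul_measure (ENNReal.ofReal_pos.mpr (hP.weight_pos a)).ne'
    ENNReal.ofReal_ne_top).mp (hH a (Finset.mem_univ a))

theorem integrable_comp_prepend (hH : Integrable H P) (a : ι) :
    Integrable (fun ω => H (prepend a ω)) P :=
  (hP.integrable_map_prepend hH a).comp_measurable (measurable_prepend a)

theorem integrable_averageOp (hH : Integrable H P) : Integrable (averageOp q H) P :=
  integrable_finsetSum _ fun a _ => (hP.integrable_comp_prepend hH a).const_mul _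

theorem integral_averageOp (hH : Integrable H P) : ∫ ω, averageOp q H ω ∂P = ∫ ω, H ω ∂P := by
  have hmap (a : ι) := hP.integrable_map_prepend hH a
  conv_rhs => rw [hP.eq_sum_map_prepend]
  rw [integral_finsetSum_measure fun a _ => (hmap a).smul_measure ENNReal.ofReal_ne_top]
  unfold averageOp
  rw [integral_finsetSum _ fun a _ => (hP.integrable_comp_prepend hH a).const_mul _]
  refine Finset.sum_congr rfl fun a _ => ?_
  rw [integral_smul_measure, ENNReal.toReal_ofReal (hP.weight_pos a).le, smul_eq_mul,
    integral_map (measurable_prepend a).aemeasurable (hmap a).aestronglyMeasurable,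
    integral_const_mul]

theorem integrable_iterate_averageOp (hH : Integrable H P) (m : ℕ) :
    Integrable ((averageOp q)^[m] H) P := by
  induction m generalizing H with
  | zero => exact hH
  | succ _ ih => exact ih (hP.integrable_averageOp hH)

theorem integral_iterate_averageOp (hH : Integrable H P) (m : ℕ) :
    ∫ ω, (averageOp q)^[m] H ω ∂P = ∫ ω, H ω ∂P := by
  induction m generalizing H with
  | zero => rfl
  | succ _ ih => exact (ih (hP.integrable_averageOp hH)).trans (hP.integral_averageOp hH)

theorem integrable_comp_wordAppend (hH : Integrable H P) (u : List ι) :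
    Integrable (fun ω => H (wordAppend u ω)) P := by
  induction u generalizing H with
  | nil => exact hH
  | cons a _ ih => exact ih (hP.integrable_comp_prepend hH a)

theorem setIntegral_cylinder (hH : Integrable H P) (ξ : ℕ → ι) (m : ℕ) :
    ∫ ω in PiNat.cylinder ξ m, H ω ∂P =
      (∏ i ∈ Finset.range m, q (ξ i)) * ∫ ω, H (wordAppend (wordPrefix m ξ) ω) ∂P := by
  induction m generalizing ξ H with
  | zero => simp [PiNat.cylinder_zero, wordPrefix, wordAppend]
  | succ m ih =>
    have hcyl := measurableSet_cylinder ξ (m + 1)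
    have haverage : averageOp q ((PiNat.cylinder ξ (m + 1)).indicator H) =
        fun ω => q (ξ 0) *
          (PiNat.cylinder (shift ξ) m).indicator (fun ω => H (prepend (ξ 0) ω)) ω := by
      classical
      funext ω
      rw [averageOp, Finset.sum_eq_single (ξ 0)]
      · simp only [indicator_apply, prepend_mem_cylinder_succ, true_and]
      · intro a _ ha
        rw [indicator_of_notMem fun h => ha (prepend_mem_cylinder_succ.mp h).1, mul_zero]
      · exact fun h => absurd (Finset.mem_univ _) h
    rw [← integral_indicator hcyl, ← hP.integral_averageOp (hH.indicator hcyl), haverage,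
      integral_const_mul, integral_indicator (measurableSet_cylinder _ _),
      ih (hP.integrable_comp_prepend hH _), Finset.prod_range_succ', wordPrefix_succ, ← mul_assoc,
      mul_comm (q (ξ 0))]
    rfl

end IsBernoulli

theorem isBernoulli_of_finset [Fintype ι] [MeasurableSpace ι] {p : ι → ℝ≥0∞} {P : Measure (ℕ → ι)}
    (hp : ∀ i, 0 < p i) (hp1 : ∑ i, p i = 1)
    (hP : ∀ (s : Finset ℕ) (w : ℕ → ι), P {ω | ∀ i ∈ s, ω i = w i} = ∏ i ∈ s, p (w i)) :
    IsBernoulli (fun i => (p i).toReal) P := by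
  have hfin : ∀ i, p i ≠ ∞ := fun i =>
    ENNReal.sum_ne_top.mp (hp1 ▸ ENNReal.one_ne_top) i (Finset.mem_univ i)
  refine ⟨fun i => ENNReal.toReal_pos (hp i).ne' (hfin i), ?_, fun ξ m => ?_⟩
  · rw [← ENNReal.toReal_sum fun i _ => hfin i, hp1, ENNReal.toReal_one]
  · rw [← ENNReal.toReal_prod, ENNReal.ofReal_toReal (ENNReal.prod_ne_top fun i _ => hfin _), ← hP]
    simp only [PiNat.cylinder, Finset.mem_range]

end Bernoulli

/-! ### First passage of the forward walk -/

section Walk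

variable {ι : Type*} {q : ι → ℝ} {c : ι → (ℕ → ι) → ℝ} {D E ρ C t : ℝ} {ω : ℕ → ι}

/-- The first increment of the forward walk. -/
def firstStep (c : ι → (ℕ → ι) → ℝ) (ω : ℕ → ι) : ℝ := c (ω 0) (shift ω)

/-- The forward walk: the Birkhoff sums of the first increment along the shift. -/
def walk (c : ι → (ℕ → ι) → ℝ) (m : ℕ) : (ℕ → ι) → ℝ := birkhoffSum shift (firstStep c) m

/-- The first time at which the forward walk reaches the level `t`. -/
def passageTime (c : ι → (ℕ → ι) → ℝ) (t : ℝ) (ω : ℕ → ι) : ℕ := sInf {m : ℕ | t ≤ walk c m ω}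

/-- The event that the tail seen just before the walk reaches the level `t` belongs to `B`, and
that the walk lands in `J`. -/
def passageEvent (c : ι → (ℕ → ι) → ℝ) (t : ℝ) (B : Set (ℕ → ι)) (J : Set ℝ) : Set (ℕ → ι) :=
  {ω | shift^[passageTime c t ω - 1] ω ∈ B ∧ walk c (passageTime c t ω) ω ∈ J}

/-- The part of `passageEvent c t B J` on which the level `t` is reached at time `m + 1`. -/
def passageEventAt (c : ι → (ℕ → ι) → ℝ) (t : ℝ) (B : Set (ℕ → ι)) (J : Set ℝ) (m : ℕ) :
    Set (ℕ → ι) :=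
  passageEvent c t B J ∩ {ω | passageTime c t ω = m + 1}

/-- The distances below the level `t` from which a jump of size `x` crosses `t` and lands in `J`. -/
def gate (t x : ℝ) (J : Set ℝ) : Set ℝ := (t + x - ·) ⁻¹' (Ico t (t + x) ∩ J)

/-- The indicator that the walk along the word `u` followed by `ω`, whose last tail is `ζ`, crosses
the level `t` into `J` in its next step. The time variable is measured from the walk along `u`
followed by a reference tail `x`, for which the recentring corrects. -/
def crossingIndicator (c : ι → (ℕ → ι) → ℝ) (t : ℝ) (u : List ι) (x : ℕ → ι) (J : Set ℝ)
    (ζ : ℕ → ι) : (ℕ → ι) → ℝ → ℝ :=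
  recentredIndicator (fun ω => wordSum c u ω - wordSum c u x) (gate t (firstStep c ζ) J)

theorem walk_succ (c : ι → (ℕ → ι) → ℝ) (m : ℕ) (ω : ℕ → ι) :
    walk c (m + 1) ω = walk c m ω + firstStep c (shift^[m] ω) := birkhoffSum_succ _ _ _ _

theorem walk_succ_prepend (c : ι → (ℕ → ι) → ℝ) (m : ℕ) (a : ι) (ω : ℕ → ι) :
    walk c (m + 1) (prepend a ω) = c a ω + walk c m ω := birkhoffSum_succ' _ _ _ _

theorem walk_add_wordAppend_wordPrefix (c : ι → (ℕ → ι) → ℝ) (m j : ℕ) (ξ ω : ℕ → ι) :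
    walk c (m + j) (wordAppend (wordPrefix m ξ) ω) =
      wordSum c (wordPrefix m ξ) ω + walk c j ω := by
  induction m generalizing ξ with
  | zero => simp [wordPrefix, wordAppend, wordSum]
  | succ m ih =>
    rw [wordPrefix_succ, add_right_comm]
    exact (walk_succ_prepend c (m + j) (ξ 0) (wordAppend _ ω)).trans (by
      rw [ih, wordSum, add_assoc])

theorem iterate_shift_wordAppend_wordPrefix (m : ℕ) (ξ ω : ℕ → ι) :
    shift^[m] (wordAppend (wordPrefix m ξ) ω) = ω := by
  induction m generalizing ξ with
  | zero => rfl
  | succ m ih =>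
    rw [wordPrefix_succ, Function.iterate_succ_apply]
    exact ih (shift ξ)

theorem ordConnected_gate (t x : ℝ) {J : Set ℝ} (hJ : J.OrdConnected) :
    (gate t x J).OrdConnected :=
  (ordConnected_Ico.inter hJ).preimage_anti fun _ _ h => sub_le_sub_left h _

theorem gate_subset_Icc {x : ℝ} (hx : x ≤ E) (t : ℝ) (J : Set ℝ) : gate t x J ⊆ Icc 0 E :=
  fun d ⟨⟨h1, h2⟩, _⟩ => ⟨by linarith, by linarith⟩

theorem volume_real_gate (t x : ℝ) (J : Set ℝ) :
    volume.real (gate t x J) = volume.real (Icc t (t + x) ∩ J) := by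
  refine congrArg ENNReal.toReal ?_
  rw [gate, (Measure.measurePreserving_sub_left volume (t + x)).measure_preimage_emb
    (Homeomorph.subLeft (t + x)).measurableEmbedding]
  exact measure_congr (Ico_ae_eq_Icc.inter (ae_eq_refl J))

theorem iterate_averageOp_walk [Fintype ι] (F : (ℕ → ι) → (ℕ → ι) → ℝ → ℝ) (j : ℕ)
    (ω : ℕ → ι) (s : ℝ) :
    (averageOp q)^[j] (fun η => F (shift^[j] η) η (s - walk c j η)) ω =
      (transferOp q c ^ j) (F ω) ω s := by
  induction j generalizing F with
  | zero => simp [walk]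
  | succ j ih =>
    rw [pow_succ, Module.End.mul_apply, ← ih fun ζ => transferOp q c (F ζ),
      Function.iterate_succ_apply]
    refine congrFun (congrArg _ (funext fun η => ?_)) ω
    simp only [averageOp, transferOp_apply, walk_succ_prepend, sub_sub, add_comm (walk c j η)]
    rfl

namespace IsRenewalCocycle

variable [Fintype ι]

theorem walk_strictMono (hc : IsRenewalCocycle q c D E ρ C) (ω : ℕ → ι) :
    StrictMono fun m => walk c m ω :=
  strictMono_nat_of_lt_succ fun m => (lt_add_of_pos_right _
    (hc.D_pos.trans_le (hc.le_cocycle _ _))).trans_eq (walk_succ c m ω).symm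

theorem nat_mul_le_walk (hc : IsRenewalCocycle q c D E ρ C) (m : ℕ) (ω : ℕ → ι) :
    m * D ≤ walk c m ω := by
  simpa [walk, birkhoffSum] using Finset.card_nsmul_le_sum (Finset.range m)
    (fun i => firstStep c (shift^[i] ω)) D fun i _ => hc.le_cocycle _ _

theorem passageTime_le_iff (hc : IsRenewalCocycle q c D E ρ C) {m : ℕ} :
    passageTime c t ω ≤ m ↔ t ≤ walk c m ω := by
  refine ⟨fun h => ?_, fun h => Nat.sInf_le h⟩
  have hne : {m : ℕ | t ≤ walk c m ω}.Nonempty := by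
    obtain ⟨N, hN⟩ := hc.exists_lt_add_nat_mul 0 t
    exact ⟨N, (hN.le.trans_eq (zero_add _)).trans (hc.nat_mul_le_walk N ω)⟩
  exact (Nat.sInf_mem hne).trans ((hc.walk_strictMono ω).monotone h)

theorem sub_walk_mem_gate_iff (hc : IsRenewalCocycle q c D E ρ C) {m : ℕ} {J : Set ℝ} :
    t - walk c m ω ∈ gate t (firstStep c (shift^[m] ω)) J ↔
      passageTime c t ω = m + 1 ∧ walk c (m + 1) ω ∈ J := by
  have hland : t + firstStep c (shift^[m] ω) - (t - walk c m ω) = walk c (m + 1) ω := by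
    rw [walk_succ]
    ring
  have htime : passageTime c t ω = m + 1 ↔ t ≤ walk c (m + 1) ω ∧ walk c m ω < t := by
    rw [← hc.passageTime_le_iff, ← not_le, ← hc.passageTime_le_iff]
    omega
  rw [gate, mem_preimage, hland, htime, walk_succ, mem_inter_iff, mem_Ico, add_lt_add_iff_right]

theorem indicator_passageEventAt (hc : IsRenewalCocycle q c D E ρ C) {B : Set (ℕ → ι)}
    {J : Set ℝ} (m : ℕ) (ω : ℕ → ι) :
    (passageEventAt c t B J m).indicator (1 : (ℕ → ι) → ℝ) ω = B.indicator (fun ζ =>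
      (gate t (firstStep c ζ) J).indicator (1 : ℝ → ℝ) (t - walk c m ω)) (shift^[m] ω) := by
  classical
  have hmem : ω ∈ passageEventAt c t B J m ↔
      shift^[m] ω ∈ B ∧ t - walk c m ω ∈ gate t (firstStep c (shift^[m] ω)) J := by
    rw [hc.sub_walk_mem_gate_iff, passageEventAt, passageEvent, mem_inter_iff, mem_ofPred_eq,
      mem_ofPred_eq]
    constructor
    · rintro ⟨⟨hB, hJ⟩, h⟩
      rw [h] at hB hJ
      exact ⟨hB, h, hJ⟩
    · rintro ⟨hB, h, hJ⟩
      rw [h]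
      exact ⟨⟨hB, hJ⟩, rfl⟩
  simp only [indicator_apply, hmem, ite_and, Pi.one_apply]

theorem isRecentring_wordSum (hc : IsRenewalCocycle q c D E ρ C) (u : List ι) (x : ℕ → ι) :
    IsRecentring ρ C fun ω => wordSum c u ω - wordSum c u x where
  abs_le ω := (hc.abs_wordSum_sub_le u ω x).trans
    (mul_le_of_le_one_right hc.C_nonneg (dMet_le_one hc.ρ_pos.le hc.ρ_lt_one.le ω x))
  abs_sub_le ω ω' := by
    rw [sub_sub_sub_cancel_right]
    exact hc.abs_wordSum_sub_le u ω ω'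

end IsRenewalCocycle

end Walk

section Passage

variable {ι : Type*} {q : ι → ℝ} {c : ι → (ℕ → ι) → ℝ} {D E ρ C t : ℝ}
  {B : Set (ℕ → ι)} {J : Set ℝ}
  [Fintype ι] [MeasurableSpace ι] [MeasurableSingletonClass ι]

namespace IsRenewalCocycle

variable (hc : IsRenewalCocycle q c D E ρ C)
include hc

theorem measurable_cocycle (a : ι) : Measurable (c a) := by
  let : TopologicalSpace ι := ⊥
  have : DiscreteTopology ι := ⟨rfl⟩
  exact (continuous_of_abs_sub_le_dMet hc.ρ_pos.le hc.ρ_lt_one (hc.lipschitz a)).measurable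

theorem measurable_firstStep : Measurable (firstStep c) :=
  (measurable_from_prod_countable_right (f := fun x : ι × (ℕ → ι) => c x.1 x.2)
    hc.measurable_cocycle).comp ((measurable_pi_apply 0).prodMk measurable_shift)

theorem measurable_walk (m : ℕ) : Measurable (walk c m) :=
  Finset.measurable_fun_sum (Finset.range m) fun i _ =>
    hc.measurable_firstStep.comp (measurable_shift.iterate i)

theorem measurable_passageTime (t : ℝ) : Measurable (passageTime c t) :=
  measurable_of_Iic fun m => by
    simpa only [preimage, mem_Iic, hc.passageTime_le_iff] using
      measurableSet_le measurable_const (hc.measurable_walk m)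

theorem measurableSet_passageEventAt (hB : MeasurableSet B) (hJ : MeasurableSet J) (m : ℕ) :
    MeasurableSet (passageEventAt c t B J m) := by
  have heq : passageEventAt c t B J m =
      (shift^[m] ⁻¹' B ∩ walk c (m + 1) ⁻¹' J) ∩ passageTime c t ⁻¹' {m + 1} := by
    ext ω
    refine and_congr_left fun h => ?_
    rw [passageEvent, mem_ofPred_eq, h]
    rfl
  rw [heq]
  exact (((measurable_shift.iterate m) hB).inter (hc.measurable_walk _ hJ)).inter
    (hc.measurable_passageTime t (measurableSet_singleton _))

end IsRenewalCocycle

section Probability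

variable {P : Measure (ℕ → ι)} (hc : IsRenewalCocycle q c D E ρ C) (hP : IsBernoulli q P)
include hc

omit [MeasurableSpace ι] [MeasurableSingletonClass ι] in
theorem iterate_averageOp_passageEventAt (ξ x : ℕ → ι) (m j : ℕ) :
    (averageOp q)^[j] (fun η => (passageEventAt c t B J (m + j)).indicator (1 : (ℕ → ι) → ℝ)
        (wordAppend (wordPrefix m ξ) η)) =
      B.indicator fun ζ => (transferOp q c ^ j) (crossingIndicator c t (wordPrefix m ξ) x J ζ) ζ
        (t - wordSum c (wordPrefix m ξ) x) := by
  classical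
  have hcross (η : ℕ → ι) : (passageEventAt c t B J (m + j)).indicator (1 : (ℕ → ι) → ℝ)
      (wordAppend (wordPrefix m ξ) η) =
        (B.indicator (crossingIndicator c t (wordPrefix m ξ) x J) (shift^[j] η)) η
          (t - wordSum c (wordPrefix m ξ) x - walk c j η) := by
    rw [hc.indicator_passageEventAt, walk_add_wordAppend_wordPrefix, add_comm m j,
      Function.iterate_add_apply, iterate_shift_wordAppend_wordPrefix]
    by_cases hB : shift^[j] η ∈ B
    · rw [indicator_of_mem hB, indicator_of_mem hB, crossingIndicator, recentredIndicator]
      congr 1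
      ring
    · rw [indicator_of_notMem hB, indicator_of_notMem hB, Pi.zero_apply, Pi.zero_apply]
  funext ζ
  simp only [hcross]
  rw [iterate_averageOp_walk]
  by_cases hB : ζ ∈ B
  · rw [indicator_of_mem hB, indicator_of_mem hB]
  · rw [indicator_of_notMem hB, indicator_of_notMem hB, map_zero, Pi.zero_apply, Pi.zero_apply]

include hP

theorem integrable_passageEventAt (hB : MeasurableSet B) (hJ : MeasurableSet J) (m : ℕ) :
    Integrable ((passageEventAt c t B J m).indicator (1 : (ℕ → ι) → ℝ)) P := by
  have := hP.isProbabilityMeasure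
  exact (integrable_const 1).indicator (hc.measurableSet_passageEventAt hB hJ m)

theorem integrableOn_transferOp_pow_crossingIndicator (hB : MeasurableSet B)
    (hJ : MeasurableSet J) (ξ x : ℕ → ι) (m j : ℕ) :
    IntegrableOn (fun ζ => (transferOp q c ^ j) (crossingIndicator c t (wordPrefix m ξ) x J ζ) ζ
      (t - wordSum c (wordPrefix m ξ) x)) B P := by
  rw [← integrable_indicator_iff hB, ← iterate_averageOp_passageEventAt hc]
  exact hP.integrable_iterate_averageOp
    (hP.integrable_comp_wordAppend (integrable_passageEventAt hc hP hB hJ _) _) j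

theorem measureReal_cylinder_inter_passageEventAt (hB : MeasurableSet B) (hJ : MeasurableSet J)
    (ξ x : ℕ → ι) (m j : ℕ) :
    P.real (PiNat.cylinder ξ m ∩ passageEventAt c t B J (m + j)) =
      (∏ i ∈ Finset.range m, q (ξ i)) *
        ∫ ζ in B, (transferOp q c ^ j) (crossingIndicator c t (wordPrefix m ξ) x J ζ) ζ
          (t - wordSum c (wordPrefix m ξ) x) ∂P := by
  have hint := integrable_passageEventAt (t := t) hc hP hB hJ (m + j)
  have hmeas := hc.measurableSet_passageEventAt (t := t) hB hJ (m + j)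
  rw [← integral_indicator hB, ← iterate_averageOp_passageEventAt hc,
    hP.integral_iterate_averageOp (hP.integrable_comp_wordAppend hint _),
    ← hP.setIntegral_cylinder hint, setIntegral_indicator hmeas]
  simp

omit hP [MeasurableSpace ι] [MeasurableSingletonClass ι] in
theorem cylinder_inter_passageEvent (ξ x : ℕ → ι) (m : ℕ)
    (hC : C < t - wordSum c (wordPrefix m ξ) x) {N : ℕ}
    (hN : t - wordSum c (wordPrefix m ξ) x < -C + N * D) :
    PiNat.cylinder ξ m ∩ passageEvent c t B J =
      ⋃ j ∈ Finset.range N, PiNat.cylinder ξ m ∩ passageEventAt c t B J (m + j) := by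
  refine Subset.antisymm (fun ω ⟨hω, hev⟩ => ?_) (iUnion₂_subset fun j _ =>
    inter_subset_inter_right _ inter_subset_left)
  have hdecomp : wordAppend (wordPrefix m ξ) (shift^[m] ω) = ω := by
    rw [← wordPrefix_congr (PiNat.mem_cylinder_iff.mp hω), wordAppend_wordPrefix_shift]
  have hwalk (j : ℕ) : walk c (m + j) ω =
      wordSum c (wordPrefix m ξ) (shift^[m] ω) + walk c j (shift^[m] ω) := by
    rw [← walk_add_wordAppend_wordPrefix, hdecomp]
  have hdist := abs_le.mp ((hc.isRecentring_wordSum (wordPrefix m ξ) x).abs_le (shift^[m] ω))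
  have hlower : ¬ passageTime c t ω ≤ m := by
    rw [hc.passageTime_le_iff, ← add_zero m, hwalk, not_le]
    simp only [walk, birkhoffSum_zero]
    linarith
  have hupper : passageTime c t ω ≤ m + N := by
    rw [hc.passageTime_le_iff, hwalk]
    linarith [hc.nat_mul_le_walk N (shift^[m] ω)]
  obtain ⟨j, hj⟩ := Nat.exists_eq_add_of_lt (not_le.mp hlower)
  exact mem_biUnion (Finset.mem_coe.mpr (Finset.mem_range.mpr (by omega))) ⟨hω, hev, hj⟩

omit hP [MeasurableSpace ι] [MeasurableSingletonClass ι] in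
theorem exists_potential_crossingIndicator_eq_sum (u : List ι) (x : ℕ → ι) :
    ∃ N : ℕ, t - wordSum c u x < -C + N * D ∧ ∀ ζ J,
      potential q c (crossingIndicator c t u x J ζ) ζ (t - wordSum c u x) =
        ∑ j ∈ Finset.range N,
          (transferOp q c ^ j) (crossingIndicator c t u x J ζ) ζ (t - wordSum c u x) := by
  obtain ⟨N, hN⟩ := hc.exists_lt_add_nat_mul (-C) (t - wordSum c u x)
  exact ⟨N, hN, fun ζ J => hc.potential_eq_sum (recentredIndicator_of_lt
    (hc.isRecentring_wordSum u x) fun d hd => (gate_subset_Icc le_rfl _ _ hd).1) hN ζ⟩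

theorem integrableOn_potential_crossingIndicator (hB : MeasurableSet B) (hJ : MeasurableSet J)
    (ξ x : ℕ → ι) (m : ℕ) :
    IntegrableOn (fun ζ => potential q c (crossingIndicator c t (wordPrefix m ξ) x J ζ) ζ
      (t - wordSum c (wordPrefix m ξ) x)) B P := by
  obtain ⟨N, -, hsum⟩ := exists_potential_crossingIndicator_eq_sum (t := t) hc (wordPrefix m ξ) x
  simp only [hsum]
  exact integrable_finsetSum _ fun j _ =>
    integrableOn_transferOp_pow_crossingIndicator hc hP hB hJ ξ x m j

theorem measureReal_cylinder_inter_passageEvent (hB : MeasurableSet B) (hJ : MeasurableSet J)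
    (ξ x : ℕ → ι) (m : ℕ) (hC : C < t - wordSum c (wordPrefix m ξ) x) :
    P.real (PiNat.cylinder ξ m ∩ passageEvent c t B J) =
      (∏ i ∈ Finset.range m, q (ξ i)) *
        ∫ ζ in B, potential q c (crossingIndicator c t (wordPrefix m ξ) x J ζ) ζ
          (t - wordSum c (wordPrefix m ξ) x) ∂P := by
  have := hP.isProbabilityMeasure
  obtain ⟨N, hN, hsum⟩ := exists_potential_crossingIndicator_eq_sum (t := t) hc (wordPrefix m ξ) x
  have hdisj : (Finset.range N : Set ℕ).PairwiseDisjoint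
      fun j => PiNat.cylinder ξ m ∩ passageEventAt c t B J (m + j) := by
    refine fun i _ j _ hij => disjoint_left.mpr fun ω hi hj => hij ?_
    have htime : m + i + 1 = m + j + 1 := hi.2.2.symm.trans hj.2.2
    omega
  rw [cylinder_inter_passageEvent hc ξ x m hC hN, measureReal_biUnion_finset hdisj fun j _ =>
    (measurableSet_cylinder ξ m).inter (hc.measurableSet_passageEventAt hB hJ _)]
  simp only [hsum]
  rw [integral_finsetSum _ fun j _ =>
    integrableOn_transferOp_pow_crossingIndicator hc hP hB hJ ξ x m j, Finset.mul_sum]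
  exact Finset.sum_congr rfl fun j _ =>
    measureReal_cylinder_inter_passageEventAt hc hP hB hJ ξ x m j

end Probability

end Passage

/-! ### Limit distribution of the overshoot -/

section Overshoot

theorem abs_div_sub_div_le {N N₀ I I₀ κ η : ℝ} (hN : |N - κ * I| ≤ η) (hN₀ : |N₀ - κ * I₀| ≤ η)
    (hI : 0 ≤ I) (hII₀ : I ≤ I₀) (hI₀ : 0 < I₀) (hpos : 0 < N₀) :
    |N / N₀ - I / I₀| ≤ 2 * η / N₀ := by
  have hsplit : N / N₀ - I / I₀ = (N - κ * I - I / I₀ * (N₀ - κ * I₀)) / N₀ := by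
    field_simp
    ring
  have hratio : |I / I₀ * (N₀ - κ * I₀)| ≤ 1 * η := by
    rw [abs_mul, abs_of_nonneg (div_nonneg hI hI₀.le)]
    exact mul_le_mul (div_le_one_of_le₀ hII₀ hI₀.le) hN₀ (abs_nonneg _) zero_le_one
  rw [hsplit, abs_div, abs_of_pos hpos]
  refine div_le_div_of_nonneg_right ((abs_sub _ _).trans ?_) hpos.le
  linarith

theorem monotone_volume_real_Icc_inter (t : ℝ) (J : Set ℝ) :
    Monotone fun x => volume.real (Icc t (t + x) ∩ J) := fun _ _ h =>
  measureReal_mono (inter_subset_inter_left _ (Icc_subset_Icc_right (add_le_add_right h t)))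
    (measure_inter_lt_top_of_left_ne_top measure_Icc_lt_top.ne).ne

theorem volume_real_Icc_inter_le {x : ℝ} (hx : 0 ≤ x) (t : ℝ) (J : Set ℝ) :
    volume.real (Icc t (t + x) ∩ J) ≤ x := by
  refine (measureReal_mono inter_subset_left measure_Icc_lt_top.ne).trans_eq ?_
  rw [Real.volume_real_Icc_of_le (le_add_of_nonneg_right hx), add_sub_cancel_left]

variable {ι : Type*} [Fintype ι] [MeasurableSpace ι] [MeasurableSingletonClass ι] {q : ι → ℝ}
  {c : ι → (ℕ → ι) → ℝ} {D E ρ C : ℝ} {P : Measure (ℕ → ι)}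

namespace IsRenewalCocycle

theorem integrable_firstStep (hc : IsRenewalCocycle q c D E ρ C) [IsFiniteMeasure P] :
    Integrable (firstStep c) P :=
  .of_bound hc.measurable_firstStep.aestronglyMeasurable E <| .of_forall fun ω => by
    rw [firstStep, Real.norm_of_nonneg (hc.D_pos.le.trans (hc.le_cocycle _ _))]
    exact hc.cocycle_le _ _

theorem integrable_volume_real_Icc_inter (hc : IsRenewalCocycle q c D E ρ C) [IsFiniteMeasure P]
    (t : ℝ) (J : Set ℝ) :
    Integrable (fun ω => volume.real (Icc t (t + firstStep c ω) ∩ J)) P := by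
  have hmeas := (monotone_volume_real_Icc_inter t J).measurable.comp hc.measurable_firstStep
  refine hc.integrable_firstStep.mono' hmeas.aestronglyMeasurable (.of_forall fun ω => ?_)
  rw [Real.norm_of_nonneg measureReal_nonneg]
  exact volume_real_Icc_inter_le (hc.D_pos.le.trans (hc.le_cocycle _ _)) t J

theorem mul_measureReal_le_setIntegral_firstStep (hc : IsRenewalCocycle q c D E ρ C)
    [IsFiniteMeasure P] {B : Set (ℕ → ι)} (hB : MeasurableSet B) :
    D * P.real B ≤ ∫ ζ in B, firstStep c ζ ∂P := by
  have hconst := setIntegral_mono_on (integrable_const D).integrableOn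
    hc.integrable_firstStep.integrableOn (μ := P) hB fun ζ _ => hc.le_cocycle (ζ 0) (shift ζ)
  rwa [setIntegral_const, smul_eq_mul, mul_comm] at hconst

theorem exists_forall_abs_setIntegral_potential_sub_le (hc : IsRenewalCocycle q c D E ρ C)
    (hN : IsNonarithmetic c ρ C) (hP : IsBernoulli q P) :
    ∃ κ, 0 < κ ∧ ∀ ε, 0 < ε → ∃ T, ∀ t (ξ x : ℕ → ι) m (B : Set (ℕ → ι)), MeasurableSet B →
      T ≤ t - wordSum c (wordPrefix m ξ) x → ∀ J : Set ℝ, J.OrdConnected →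
        |(∫ ζ in B, potential q c (crossingIndicator c t (wordPrefix m ξ) x J ζ) ζ
            (t - wordSum c (wordPrefix m ξ) x) ∂P) -
          κ * ∫ ζ in B, volume.real (Icc t (t + firstStep c ζ) ∩ J) ∂P| ≤ ε * P.real B := by
  have := hP.isProbabilityMeasure
  have hE : 0 ≤ E := by
    obtain ⟨a⟩ := hc.nonempty
    exact hc.D_pos.le.trans ((hc.le_cocycle a fun _ => a).trans (hc.cocycle_le a _))
  obtain ⟨κ, hκ, hlim⟩ := hc.exists_forall_abs_potential_recentredIndicator_sub_le hN
  refine ⟨κ, hκ, fun ε hε => ?_⟩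
  obtain ⟨T, hT⟩ := hlim E ε hE hε
  refine ⟨T, fun t ξ x m B hB ht J hJ => ?_⟩
  rw [← integral_const_mul, ← integral_sub
    (integrableOn_potential_crossingIndicator hc hP hB hJ.measurableSet ξ x m)
    ((hc.integrable_volume_real_Icc_inter t J).const_mul κ).integrableOn, ← Real.norm_eq_abs]
  refine norm_setIntegral_le_of_norm_le_const (measure_lt_top P B) fun ζ _ => ?_
  rw [← volume_real_gate]
  exact hT _ (hc.isRecentring_wordSum _ x) _ (ordConnected_gate _ _ hJ)
    (gate_subset_Icc (hc.cocycle_le _ _) _ _) ζ _ ht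

theorem exists_forall_abs_passage_ratio_sub_le (hc : IsRenewalCocycle q c D E ρ C)
    (hN : IsNonarithmetic c ρ C) (hP : IsBernoulli q P) {ε : ℝ} (hε : 0 < ε) :
    ∃ T, ∀ t (ξ x : ℕ → ι) m (B : Set (ℕ → ι)), MeasurableSet B → 0 < P B →
      T ≤ t - wordSum c (wordPrefix m ξ) x →
        0 < P.real (PiNat.cylinder ξ m ∩ passageEvent c t B univ) ∧
        ∀ J : Set ℝ, J.OrdConnected →
          |P.real (PiNat.cylinder ξ m ∩ passageEvent c t B J) /
              P.real (PiNat.cylinder ξ m ∩ passageEvent c t B univ) -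
            (∫ ζ in B, volume.real (Icc t (t + firstStep c ζ) ∩ J) ∂P) /
              ∫ ζ in B, firstStep c ζ ∂P| ≤ ε := by
  have := hP.isProbabilityMeasure
  obtain ⟨κ, hκ, hlim⟩ := hc.exists_forall_abs_setIntegral_potential_sub_le hN hP
  have hκD : 0 < κ * D := mul_pos hκ hc.D_pos
  obtain ⟨T, hT⟩ := hlim (min (κ * D / 2) (ε * (κ * D) / 4)) (by positivity)
  refine ⟨max T (C + 1), fun t ξ x m B hB hPB ht => ?_⟩
  have hT' := hT t ξ x m B hB ((le_max_left _ _).trans ht)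
  have hC : C < t - wordSum c (wordPrefix m ξ) x :=
    (lt_add_one C).trans_le ((le_max_right _ _).trans ht)
  have hb : 0 < P.real B := ENNReal.toReal_pos hPB.ne' (measure_ne_top P B)
  have hstep := hc.mul_measureReal_le_setIntegral_firstStep (P := P) hB
  have hstep_nonneg (ζ : ℕ → ι) : 0 ≤ firstStep c ζ := hc.D_pos.le.trans (hc.le_cocycle _ _)
  have huniv := hT' univ ordConnected_univ
  simp only [inter_univ, Real.volume_real_Icc_of_le (le_add_of_nonneg_right (hstep_nonneg _)),
    add_sub_cancel_left] at huniv
  set N₀ := ∫ ζ in B, potential q c (crossingIndicator c t (wordPrefix m ξ) x univ ζ) ζ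
    (t - wordSum c (wordPrefix m ξ) x) ∂P
  have hN₀_lower : κ * D * P.real B / 2 ≤ N₀ := by
    have hκstep := mul_le_mul_of_nonneg_left hstep hκ.le
    have hη := mul_le_mul_of_nonneg_right (min_le_left (κ * D / 2) (ε * (κ * D) / 4)) hb.le
    linarith [(abs_le.mp huniv).1]
  have hN₀_pos : 0 < N₀ := lt_of_lt_of_le (by positivity) hN₀_lower
  have hQ : 0 < ∏ i ∈ Finset.range m, q (ξ i) := Finset.prod_pos fun i _ => hc.weight_pos _
  rw [measureReal_cylinder_inter_passageEvent hc hP hB MeasurableSet.univ ξ x m hC]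
  refine ⟨mul_pos hQ hN₀_pos, fun J hJ => ?_⟩
  rw [measureReal_cylinder_inter_passageEvent hc hP hB hJ.measurableSet ξ x m hC,
    mul_div_mul_left _ _ hQ.ne']
  refine (abs_div_sub_div_le (hT' J hJ) huniv (integral_nonneg fun _ => measureReal_nonneg)
    (integral_mono (hc.integrable_volume_real_Icc_inter t J).integrableOn
      hc.integrable_firstStep.integrableOn
      fun ζ => volume_real_Icc_inter_le (hstep_nonneg ζ) t J)
    (lt_of_lt_of_le (mul_pos hc.D_pos hb) hstep) hN₀_pos).trans ?_
  rw [div_le_iff₀ hN₀_pos]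
  have hη := mul_le_mul_of_nonneg_right (min_le_right (κ * D / 2) (ε * (κ * D) / 4)) hb.le
  linarith [mul_le_mul_of_nonneg_left hN₀_lower hε.le]

end IsRenewalCocycle

end Overshoot

/-! ### Smooth contracting iterated function systems -/

section IFS

variable {ι : Type*} {f : ι → ℝ → ℝ} {a b γ H c₀ r x y : ℝ} {xc : (ℕ → ι) → ℝ}

/-- A uniformly contracting `C^{1+γ}` iterated function system on `[a, b]`: the derivatives are
`γ`-Hölder with constant `H` and take values of modulus in `[c₀, r]`. Since `deriv` vanishes where
a function is not differentiable, `lower_le` makes the maps differentiable at all points of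
`[a, b]`. -/
structure IsContractingIFS (f : ι → ℝ → ℝ) (a b γ H c₀ r : ℝ) : Prop where
  le : a ≤ b
  γ_pos : 0 < γ
  mapsTo : ∀ i, MapsTo (f i) (Icc a b) (Icc a b)
  H_nonneg : 0 ≤ H
  holder : ∀ i, ∀ x ∈ Icc a b, ∀ y ∈ Icc a b, |deriv (f i) x - deriv (f i) y| ≤ H * |x - y| ^ γ
  c₀_pos : 0 < c₀
  r_pos : 0 < r
  r_lt_one : r < 1
  lower_le : ∀ i, ∀ x ∈ Icc a b, c₀ ≤ |deriv (f i) x|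
  le_upper : ∀ i, ∀ x ∈ Icc a b, |deriv (f i) x| ≤ r

/-- The distortion constant of an iterated function system: a bound, uniform in the word `u`, for
the oscillation of `log |f_u'|` on `[a, b]`. -/
def distortionConst (a b γ H c₀ r : ℝ) : ℝ := H / c₀ / (1 - r ^ γ) * (b - a) ^ γ

/-- The coding map `ω ↦ x_ω` of an iterated function system, characterized by its equivariance. -/
structure IsCodingMap (f : ι → ℝ → ℝ) (a b : ℝ) (xc : (ℕ → ι) → ℝ) : Prop where
  mem_Icc : ∀ ω, xc ω ∈ Icc a b
  apply_prepend : ∀ i ω, xc (prepend i ω) = f i (xc ω)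

theorem abs_log_sub_log_le {c u v : ℝ} (hc : 0 < c) (hu : c ≤ u) (hv : c ≤ v) :
    |Real.log u - Real.log v| ≤ |u - v| / c := by
  wlog huv : v ≤ u generalizing u v
  · rw [abs_sub_comm, abs_sub_comm u]
    exact this hv hu (le_of_not_ge huv)
  have hv₀ : 0 < v := hc.trans_le hv
  have hu₀ : 0 < u := hc.trans_le hu
  rw [abs_of_nonneg (sub_nonneg.mpr (Real.log_le_log hv₀ huv)),
    abs_of_nonneg (sub_nonneg.mpr huv), ← Real.log_div hu₀.ne' hv₀.ne']
  calc Real.log (u / v) ≤ u / v - 1 := Real.log_le_sub_one_of_pos (by positivity)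
    _ = (u - v) / v := by field_simp
    _ ≤ (u - v) / c := div_le_div_of_nonneg_left (sub_nonneg.mpr huv) hc hv

theorem wordComp_prepend (f : ι → ℝ → ℝ) (i : ι) (ω : ℕ → ι) (m : ℕ) (x : ℝ) :
    wordComp f (prepend i ω) (m + 1) x = f i (wordComp f ω m x) := by
  induction m generalizing x with
  | zero => rfl
  | succ m ih => exact ih (f (ω m) x)

theorem iterate_shift_apply_zero (m : ℕ) (ω : ℕ → ι) : shift^[m] ω 0 = ω m := by
  induction m generalizing ω with
  | zero => rfl
  | succ _ ih => exact ih (shift ω)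

namespace IsContractingIFS

theorem rpow_pos (hf : IsContractingIFS f a b γ H c₀ r) : 0 < r ^ γ :=
  Real.rpow_pos_of_pos hf.r_pos γ

theorem rpow_lt_one (hf : IsContractingIFS f a b γ H c₀ r) : r ^ γ < 1 :=
  Real.rpow_lt_one hf.r_pos.le hf.r_lt_one hf.γ_pos

theorem distortionConst_nonneg (hf : IsContractingIFS f a b γ H c₀ r) :
    0 ≤ distortionConst a b γ H c₀ r :=
  mul_nonneg (div_nonneg (div_nonneg hf.H_nonneg hf.c₀_pos.le) (sub_nonneg.mpr hf.rpow_lt_one.le))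
    (Real.rpow_nonneg (sub_nonneg.mpr hf.le) γ)

theorem abs_deriv_pos (hf : IsContractingIFS f a b γ H c₀ r) (i : ι) (hx : x ∈ Icc a b) :
    0 < |deriv (f i) x| := hf.c₀_pos.trans_le (hf.lower_le i x hx)

theorem differentiableAt (hf : IsContractingIFS f a b γ H c₀ r) (i : ι) (hx : x ∈ Icc a b) :
    DifferentiableAt ℝ (f i) x :=
  differentiableAt_of_deriv_ne_zero (abs_pos.mp (hf.abs_deriv_pos i hx))

theorem abs_sub_le (hf : IsContractingIFS f a b γ H c₀ r) (i : ι) (hx : x ∈ Icc a b)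
    (hy : y ∈ Icc a b) : |f i x - f i y| ≤ r * |x - y| :=
  (convex_Icc a b).norm_image_sub_le_of_norm_deriv_le (fun _ hz => hf.differentiableAt i hz)
    (hf.le_upper i) hy hx

theorem neg_log_abs_deriv_le (hf : IsContractingIFS f a b γ H c₀ r) (i : ι) (hx : x ∈ Icc a b) :
    -Real.log |deriv (f i) x| ≤ -Real.log c₀ :=
  neg_le_neg (Real.log_le_log hf.c₀_pos (hf.lower_le i x hx))

theorem le_neg_log_abs_deriv (hf : IsContractingIFS f a b γ H c₀ r) (i : ι) (hx : x ∈ Icc a b) :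
    -Real.log r ≤ -Real.log |deriv (f i) x| :=
  neg_le_neg (Real.log_le_log (hf.abs_deriv_pos i hx) (hf.le_upper i x hx))

theorem abs_log_abs_deriv_sub_le (hf : IsContractingIFS f a b γ H c₀ r) (i : ι)
    (hx : x ∈ Icc a b) (hy : y ∈ Icc a b) :
    |Real.log (|deriv (f i) x|) - Real.log (|deriv (f i) y|)| ≤ H / c₀ * |x - y| ^ γ := by
  have h0 := hf.c₀_pos
  calc |Real.log (|deriv (f i) x|) - Real.log (|deriv (f i) y|)|
      ≤ |(|deriv (f i) x| - |deriv (f i) y|)| / c₀ :=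
        abs_log_sub_log_le h0 (hf.lower_le i x hx) (hf.lower_le i y hy)
    _ ≤ H * |x - y| ^ γ / c₀ := by
        gcongr
        exact (abs_abs_sub_abs_le _ _).trans (hf.holder i x hx y hy)
    _ = H / c₀ * |x - y| ^ γ := by ring

theorem differentiableAt_wordComp (hf : IsContractingIFS f a b γ H c₀ r) (ω : ℕ → ι) (m : ℕ)
    (hx : x ∈ Icc a b) : DifferentiableAt ℝ (wordComp f ω m) x := by
  induction m generalizing x with
  | zero => exact differentiableAt_id
  | succ m ih => exact (ih (hf.mapsTo (ω m) hx)).comp x (hf.differentiableAt (ω m) hx)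

theorem abs_deriv_wordComp_succ (hf : IsContractingIFS f a b γ H c₀ r) (ω : ℕ → ι) (m : ℕ)
    (hx : x ∈ Icc a b) : |deriv (wordComp f ω (m + 1)) x| =
      |deriv (wordComp f ω m) (f (ω m) x)| * |deriv (f (ω m)) x| := by
  rw [← abs_mul]
  exact congrArg abs (deriv_comp x (hf.differentiableAt_wordComp ω m (hf.mapsTo (ω m) hx))
    (hf.differentiableAt (ω m) hx))

theorem abs_deriv_wordComp_pos (hf : IsContractingIFS f a b γ H c₀ r) (ω : ℕ → ι) (m : ℕ)
    (hx : x ∈ Icc a b) : 0 < |deriv (wordComp f ω m) x| := by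
  induction m generalizing x with
  | zero => simp [wordComp]
  | succ m ih =>
    rw [hf.abs_deriv_wordComp_succ ω m hx]
    exact mul_pos (ih (hf.mapsTo (ω m) hx)) (hf.abs_deriv_pos (ω m) hx)

theorem log_abs_deriv_wordComp_succ (hf : IsContractingIFS f a b γ H c₀ r) (ω : ℕ → ι) (m : ℕ)
    (hx : x ∈ Icc a b) : Real.log |deriv (wordComp f ω (m + 1)) x| =
      Real.log |deriv (wordComp f ω m) (f (ω m) x)| + Real.log |deriv (f (ω m)) x| := by
  rw [hf.abs_deriv_wordComp_succ ω m hx, Real.log_mul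
    (hf.abs_deriv_wordComp_pos ω m (hf.mapsTo (ω m) hx)).ne' (hf.abs_deriv_pos (ω m) hx).ne']

theorem abs_log_abs_deriv_wordComp_sub_le (hf : IsContractingIFS f a b γ H c₀ r) (ω : ℕ → ι)
    (m : ℕ) (hx : x ∈ Icc a b) (hy : y ∈ Icc a b) :
    |Real.log (|deriv (wordComp f ω m) x|) - Real.log (|deriv (wordComp f ω m) y|)| ≤
      H / c₀ / (1 - r ^ γ) * |x - y| ^ γ := by
  have h1 : 0 < 1 - r ^ γ := sub_pos.mpr hf.rpow_lt_one
  have hH := hf.H_nonneg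
  have h0 := hf.c₀_pos
  induction m generalizing x y with
  | zero =>
    simp only [wordComp, deriv_id', sub_self, abs_zero]
    positivity
  | succ m ih =>
    have hcontr : |f (ω m) x - f (ω m) y| ^ γ ≤ r ^ γ * |x - y| ^ γ := by
      rw [← Real.mul_rpow hf.r_pos.le (abs_nonneg _)]
      exact Real.rpow_le_rpow (abs_nonneg _) (hf.abs_sub_le (ω m) hx hy) hf.γ_pos.le
    rw [hf.log_abs_deriv_wordComp_succ ω m hx, hf.log_abs_deriv_wordComp_succ ω m hy,
      add_sub_add_comm]
    calc _ ≤ _ := abs_add_le _ _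
      _ ≤ H / c₀ / (1 - r ^ γ) * (r ^ γ * |x - y| ^ γ) + H / c₀ * |x - y| ^ γ :=
          add_le_add ((ih (hf.mapsTo (ω m) hx) (hf.mapsTo (ω m) hy)).trans (by gcongr))
            (hf.abs_log_abs_deriv_sub_le (ω m) hx hy)
      _ = H / c₀ / (1 - r ^ γ) * |x - y| ^ γ := by field_simp; ring

theorem abs_log_abs_deriv_wordComp_sub_le_distortionConst
    (hf : IsContractingIFS f a b γ H c₀ r) (ω : ℕ → ι) (m : ℕ) (hx : x ∈ Icc a b)
    (hy : y ∈ Icc a b) :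
    |Real.log (|deriv (wordComp f ω m) x|) - Real.log (|deriv (wordComp f ω m) y|)| ≤
      distortionConst a b γ H c₀ r :=
  (hf.abs_log_abs_deriv_wordComp_sub_le ω m hx hy).trans <| mul_le_mul_of_nonneg_left
    (Real.rpow_le_rpow (abs_nonneg _) (abs_sub_le_of_le_of_le hx.1 hx.2 hy.1 hy.2) hf.γ_pos.le)
    (div_nonneg (div_nonneg hf.H_nonneg hf.c₀_pos.le) (sub_nonneg.mpr hf.rpow_lt_one.le))

theorem neg_log_abs_deriv_wordComp_le_Swt (hf : IsContractingIFS f a b γ H c₀ r) (ω : ℕ → ι)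
    (m : ℕ) (hx : x ∈ Icc a b) : -Real.log |deriv (wordComp f ω m) x| ≤
      Swt f a b m ω + distortionConst a b γ H c₀ r := by
  set K := distortionConst a b γ H c₀ r
  have hub : ∀ s ∈ {s : ℝ | ∃ x ∈ Icc a b, s = |deriv (wordComp f ω m) x|},
      s ≤ Real.exp (Real.log |deriv (wordComp f ω m) x| + K) := by
    rintro s ⟨y, hy, rfl⟩
    rw [← Real.log_le_iff_le_exp (hf.abs_deriv_wordComp_pos ω m hy), ← sub_le_iff_le_add']
    exact (le_abs_self _).trans (hf.abs_log_abs_deriv_wordComp_sub_le_distortionConst ω m hy hx)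
  have hpos := (hf.abs_deriv_wordComp_pos ω m hx).trans_le (le_csSup ⟨_, hub⟩ ⟨x, hx, rfl⟩)
  have hlog := (Real.log_le_iff_le_exp hpos).mpr (csSup_le ⟨_, x, hx, rfl⟩ hub)
  unfold Swt
  linarith

theorem isCodingMap_of_tendsto (hf : IsContractingIFS f a b γ H c₀ r) (hx : x ∈ Icc a b)
    (hxc : ∀ ω, Tendsto (fun m => wordComp f ω m x) atTop (𝓝 (xc ω))) : IsCodingMap f a b xc := by
  have hmaps : ∀ ω m, MapsTo (wordComp f ω m) (Icc a b) (Icc a b) := by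
    intro ω m
    induction m with
    | zero => exact mapsTo_id _
    | succ m ih => exact ih.comp (hf.mapsTo (ω m))
  have hmem : ∀ ω, xc ω ∈ Icc a b := fun ω =>
    isClosed_Icc.mem_of_tendsto (hxc ω) (.of_forall fun m => hmaps ω m hx)
  refine ⟨hmem, fun i ω => tendsto_nhds_unique
    ((tendsto_add_atTop_iff_nat 1).mpr (hxc (prepend i ω))) ?_⟩
  simp only [wordComp_prepend]
  exact (hf.differentiableAt i (hmem ω)).continuousAt.tendsto.comp (hxc ω)

theorem abs_codingMap_sub_le (hf : IsContractingIFS f a b γ H c₀ r) (hxc : IsCodingMap f a b xc)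
    (m : ℕ) {ω ω' : ℕ → ι} (h : ∀ i < m, ω i = ω' i) : |xc ω - xc ω'| ≤ r ^ m * (b - a) := by
  induction m generalizing ω ω' with
  | zero =>
    rw [pow_zero, one_mul]
    exact abs_sub_le_of_le_of_le (hxc.mem_Icc ω).1 (hxc.mem_Icc ω).2 (hxc.mem_Icc ω').1
      (hxc.mem_Icc ω').2
  | succ m ih =>
    rw [← prepend_shift ω, ← prepend_shift ω', h 0 (Nat.succ_pos m), hxc.apply_prepend,
      hxc.apply_prepend, pow_succ', mul_assoc]
    exact (hf.abs_sub_le _ (hxc.mem_Icc _) (hxc.mem_Icc _)).trans <|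
      mul_le_mul_of_nonneg_left (ih fun i hi => h (i + 1) (Nat.succ_lt_succ hi)) hf.r_pos.le

theorem abs_codingMap_sub_rpow_le (hf : IsContractingIFS f a b γ H c₀ r)
    (hxc : IsCodingMap f a b xc) (ω ω' : ℕ → ι) :
    |xc ω - xc ω'| ^ γ ≤ (b - a) ^ γ * dMet (r ^ γ) ω ω' := by
  rcases eq_or_ne ω ω' with rfl | hne
  · simp [dMet_self, Real.zero_rpow hf.γ_pos.ne']
  · have h := hf.abs_codingMap_sub_le hxc (sInf {m | ω m ≠ ω' m}) (ω := ω) (ω' := ω')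
      fun i hi => not_not.mp (Nat.notMem_of_lt_sInf hi)
    rw [dMet_of_ne hne, mul_comm, Real.rpow_pow_comm hf.r_pos.le,
      ← Real.mul_rpow (pow_nonneg hf.r_pos.le _) (sub_nonneg.mpr hf.le)]
    exact Real.rpow_le_rpow (abs_nonneg _) h hf.γ_pos.le

/-! ### The derivative cocycle -/

theorem isRenewalCocycle [Fintype ι] {q : ι → ℝ} (hf : IsContractingIFS f a b γ H c₀ r)
    (hxc : IsCodingMap f a b xc) (hq : ∀ i, 0 < q i) (hq1 : ∑ i, q i = 1) :
    IsRenewalCocycle q (derivCocycle f xc) (-Real.log r) (-Real.log c₀) (r ^ γ)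
      (distortionConst a b γ H c₀ r) where
  weight_pos := hq
  sum_weight := hq1
  D_pos := neg_pos.mpr (Real.log_neg hf.r_pos hf.r_lt_one)
  le_cocycle i ω := hf.le_neg_log_abs_deriv i (hxc.mem_Icc ω)
  cocycle_le i ω := hf.neg_log_abs_deriv_le i (hxc.mem_Icc ω)
  ρ_pos := hf.rpow_pos
  ρ_lt_one := hf.rpow_lt_one
  C_nonneg := hf.distortionConst_nonneg
  lipschitz i ω ω' := by
    have h0 := hf.c₀_pos
    have hH := hf.H_nonneg
    have h1 : 1 - r ^ γ ≠ 0 := (sub_pos.mpr hf.rpow_lt_one).ne'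
    calc |derivCocycle f xc i ω - derivCocycle f xc i ω'|
        = |Real.log (|deriv (f i) (xc ω)|) - Real.log (|deriv (f i) (xc ω')|)| := by
          rw [derivCocycle, derivCocycle, neg_sub_neg, abs_sub_comm]
      _ ≤ H / c₀ * |xc ω - xc ω'| ^ γ :=
          hf.abs_log_abs_deriv_sub_le i (hxc.mem_Icc ω) (hxc.mem_Icc ω')
      _ ≤ H / c₀ * ((b - a) ^ γ * dMet (r ^ γ) ω ω') := by
          gcongr
          exact hf.abs_codingMap_sub_rpow_le hxc ω ω'
      _ = distortionConst a b γ H c₀ r * (1 - r ^ γ) * dMet (r ^ γ) ω ω' := by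
          unfold distortionConst
          field_simp

theorem Sw_eq_walk (hf : IsContractingIFS f a b γ H c₀ r) (hxc : IsCodingMap f a b xc) :
    Sw f xc = walk (derivCocycle f xc) := by
  funext m ω
  induction m with
  | zero => simp [Sw, wordComp, walk]
  | succ m ih =>
    have hstep : f (ω m) (xc (shift^[m + 1] ω)) = xc (shift^[m] ω) := by
      rw [← hxc.apply_prepend, ← iterate_shift_apply_zero m ω, Function.iterate_succ_apply',
        prepend_shift]
    rw [walk_succ, ← ih, firstStep, iterate_shift_apply_zero, Sw, Sw, derivCocycle,
      hf.log_abs_deriv_wordComp_succ ω m (hxc.mem_Icc _), hstep, neg_add,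
      Function.iterate_succ_apply']

theorem tauS_eq_passageTime (hf : IsContractingIFS f a b γ H c₀ r) (hxc : IsCodingMap f a b xc)
    (χ k : ℝ) : tauS f xc χ k = passageTime (derivCocycle f xc) (k * χ) := by
  funext ω
  rw [tauS, hf.Sw_eq_walk hxc, passageTime]

theorem cell2_inter_Sw_mem (hf : IsContractingIFS f a b γ H c₀ r) (hxc : IsCodingMap f a b xc)
    (χ k h h' : ℝ) (ξ : ℕ → ι) (J : Set ℝ) :
    cell2 f xc a b χ k h h' ξ ∩ {ω | Sw f xc (tauS f xc χ k ω) ω ∈ J} =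
      cellA f a b χ h ξ ∩ passageEvent (derivCocycle f xc) (k * χ)
        (cellA f a b χ h' (shift^[tauS f xc χ k ξ - 1] ξ)) J := by
  simp only [cell2, hf.tauS_eq_passageTime hxc, hf.Sw_eq_walk hxc]
  exact inter_assoc _ _ _

theorem walk_tauT_le (hf : IsContractingIFS f a b γ H c₀ r) (hxc : IsCodingMap f a b xc)
    {χ h : ℝ} (hh : 0 ≤ h * χ) (ω : ℕ → ι) :
    walk (derivCocycle f xc) (tauT f a b χ h ω) ω ≤
      h * χ + distortionConst a b γ H c₀ r - Real.log c₀ := by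
  have hK := hf.distortionConst_nonneg
  cases hm : tauT f a b χ h ω with
  | zero =>
    have hlog : Real.log c₀ ≤ 0 := Real.log_nonpos hf.c₀_pos.le
      ((hf.lower_le (ω 0) _ (hxc.mem_Icc ω)).trans
        ((hf.le_upper (ω 0) _ (hxc.mem_Icc ω)).trans hf.r_lt_one.le))
    simp only [walk, birkhoffSum_zero]
    linarith
  | succ m =>
    have hlt : Swt f a b m ω < h * χ := not_le.mp <|
      Nat.notMem_of_lt_sInf (s := {m | h * χ ≤ Swt f a b m ω}) (m.lt_succ_self.trans_eq hm.symm)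
    have hSw := hf.neg_log_abs_deriv_wordComp_le_Swt ω m (hxc.mem_Icc (shift^[m] ω))
    have hstep := hf.neg_log_abs_deriv_le (shift^[m] ω 0) (hxc.mem_Icc (shift (shift^[m] ω)))
    rw [walk_succ, ← hf.Sw_eq_walk hxc, Sw, firstStep, derivCocycle]
    linarith

end IsContractingIFS

theorem isHolderW_exp {ρ κ K : ℝ} (hρ₀ : 0 ≤ ρ) (hρ₁ : ρ ≤ 1) (hκ : κ ∈ Ioc (0 : ℝ) 1) (hK : 0 ≤ K)
    {ψ : (ℕ → ι) → ℝ} (hψ : ∀ y z, |ψ y - ψ z| ≤ K * dMet ρ y z) :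
    IsHolderW κ ρ fun y => Complex.exp (ψ y * Complex.I) := by
  refine ⟨K, fun y z => ?_⟩
  have hexp : Complex.exp (ψ y * Complex.I) - Complex.exp (ψ z * Complex.I) =
      Complex.exp (ψ z * Complex.I) * (Complex.exp (Complex.I * (ψ y - ψ z : ℝ)) - 1) := by
    rw [mul_sub, ← Complex.exp_add, mul_one]
    congr 2
    push_cast
    ring
  calc ‖Complex.exp (ψ y * Complex.I) - Complex.exp (ψ z * Complex.I)‖
      ≤ |ψ y - ψ z| := by
        rw [hexp, norm_mul, Complex.norm_exp_ofReal_mul_I, one_mul]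
        exact Real.norm_exp_I_mul_ofReal_sub_one_le
    _ ≤ K * dMet ρ y z := hψ y z
    _ ≤ K * dMet ρ y z ^ κ := mul_le_mul_of_nonneg_left
        (Real.self_le_rpow_of_le_one (dMet_nonneg hρ₀ y z) (dMet_le_one hρ₀ hρ₁ y z) hκ.2) hK

theorem two_pi_div_mem_LambdaC {ρ κ K t : ℝ} (hρ₀ : 0 ≤ ρ) (hρ₁ : ρ ≤ 1) (hκ : κ ∈ Ioc (0 : ℝ) 1)
    (hK : 0 ≤ K) (ht : t ≠ 0) {ψ : (ℕ → ι) → ℝ} (hψ : ∀ y z, |ψ y - ψ z| ≤ K * dMet ρ y z)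
    (hmem : ∀ i y, ψ (prepend i y) + derivCocycle f xc i y - ψ y ∈ AddSubgroup.zmultiples t) :
    2 * Real.pi / t ∈ LambdaC f xc ρ κ := by
  set θ := 2 * Real.pi / t with hθ
  refine ⟨fun y => Complex.exp ((θ * ψ y : ℝ) * Complex.I), 1,
    isHolderW_exp hρ₀ hρ₁ hκ (mul_nonneg (abs_nonneg θ) hK) fun y z => ?_,
    fun y => Complex.norm_exp_ofReal_mul_I _, norm_one, fun i y => ?_⟩
  · rw [← mul_sub, abs_mul, mul_assoc]
    exact mul_le_mul_of_nonneg_left (hψ y z) (abs_nonneg θ)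
  · obtain ⟨n, hn⟩ := AddSubgroup.mem_zmultiples_iff.mp (hmem i y)
    have hθn : θ * ψ (prepend i y) =
        -(θ * derivCocycle f xc i y) + θ * ψ y + n * (2 * Real.pi) := by
      rw [zsmul_eq_mul] at hn
      have : θ * (n * t) = n * (2 * Real.pi) := by rw [hθ]; field_simp
      linear_combination (-θ) * hn + this
    beta_reduce
    rw [one_mul, ← Complex.exp_add, hθn, ← mul_one (Complex.exp (_ + _)),
      ← Complex.exp_int_mul_two_pi_mul_I n, ← Complex.exp_add]
    push_cast
    ring_nf

theorem isNonarithmetic_of_LambdaC_subset {ρ κ K : ℝ} (hρ₀ : 0 ≤ ρ) (hρ₁ : ρ ≤ 1)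
    (hκ : κ ∈ Ioc (0 : ℝ) 1) (hK : 0 ≤ K) (hΛ : LambdaC f xc ρ κ ⊆ {0}) :
    IsNonarithmetic (derivCocycle f xc) ρ K := by
  intro t ψ hψ
  by_contra! hmem
  obtain ⟨s, hs, hst⟩ : ∃ s ≠ 0, AddSubgroup.zmultiples t ≤ AddSubgroup.zmultiples s := by
    rcases eq_or_ne t 0 with rfl | ht
    · exact ⟨1, one_ne_zero, by simp⟩
    · exact ⟨t, ht, le_rfl⟩
  have hθ := hΛ (two_pi_div_mem_LambdaC hρ₀ hρ₁ hκ hK hs hψ fun i y => hst (hmem i y))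
  exact div_ne_zero Real.two_pi_pos.ne' hs hθ

end IFS

theorem isContractingIFS_sSup {ι : Type*} [Nonempty ι] {f : ι → ℝ → ℝ} {a b γ H c₀ c₁ : ℝ}
    (hab : a ≤ b) (hγ : 0 < γ) (hmaps : ∀ i, MapsTo (f i) (Icc a b) (Icc a b)) (hH : 0 ≤ H)
    (hholder : ∀ i, ∀ x ∈ Icc a b, ∀ y ∈ Icc a b,
      |deriv (f i) x - deriv (f i) y| ≤ H * |x - y| ^ γ)
    (hc₀ : 0 < c₀) (hc₁ : c₁ < 1)
    (hcontr : ∀ i, ∀ x ∈ Icc a b, c₀ ≤ |deriv (f i) x| ∧ |deriv (f i) x| ≤ c₁) :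
    IsContractingIFS f a b γ H c₀ (sSup {s : ℝ | ∃ i, ∃ x ∈ Icc a b, s = |deriv (f i) x|}) := by
  have hub : ∀ s ∈ {s : ℝ | ∃ i, ∃ x ∈ Icc a b, s = |deriv (f i) x|}, s ≤ c₁ := by
    rintro s ⟨i, x, hx, rfl⟩
    exact (hcontr i x hx).2
  have hle : ∀ i, ∀ x ∈ Icc a b,
      |deriv (f i) x| ≤ sSup {s : ℝ | ∃ i, ∃ x ∈ Icc a b, s = |deriv (f i) x|} :=
    fun i x hx => le_csSup ⟨c₁, hub⟩ ⟨i, x, hx, rfl⟩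
  obtain ⟨i⟩ : Nonempty ι := inferInstance
  have ha : a ∈ Icc a b := left_mem_Icc.mpr hab
  exact ⟨hab, hγ, hmaps, hH, hholder, hc₀, hc₀.trans_le ((hcontr i a ha).1.trans (hle i a ha)),
    lt_of_le_of_lt (csSup_le ⟨_, i, a, ha, rfl⟩ hub) hc₁, fun i x hx => (hcontr i x hx).1, hle⟩

/-! ### Equidistribution of the overshoot within cells -/

theorem stmt9_general {ι : Type*} [Fintype ι] [MeasurableSpace ι] [MeasurableSingletonClass ι]
    {f : ι → ℝ → ℝ} {a b γ H c₀ r κ χ : ℝ} {xc : (ℕ → ι) → ℝ} {q : ι → ℝ}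
    {P : Measure (ℕ → ι)} (hf : IsContractingIFS f a b γ H c₀ r) (hxc : IsCodingMap f a b xc)
    (hκ : κ ∈ Ioc (0 : ℝ) 1) (hΛ : LambdaC f xc (r ^ γ) κ ⊆ {0}) (hP : IsBernoulli q P)
    (hχ : 0 < χ) {ε : ℝ} (hε : 0 < ε) :
    ∃ M : ℝ, ∀ k h h' : ℝ, 0 ≤ h → M ≤ k - h → ∀ ξ : ℕ → ι,
      0 < P (cell2 f xc a b χ k h h' ξ) ∧ ∀ J : Set ℝ, J.OrdConnected →
        |condP P (cell2 f xc a b χ k h h' ξ) {ω | Sw f xc (tauS f xc χ k ω) ω ∈ J} -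
          GammaVal P f xc (cellA f a b χ h' (shift^[tauS f xc χ k ξ - 1] ξ)) χ k J| ≤ ε := by
  have hc := hf.isRenewalCocycle hxc hP.weight_pos hP.sum_weight
  have hN := isNonarithmetic_of_LambdaC_subset hc.ρ_pos.le hc.ρ_lt_one.le hκ hc.C_nonneg hΛ
  obtain ⟨T, hT⟩ := hc.exists_forall_abs_passage_ratio_sub_le hN hP hε
  -- With this `M` the walk is still at distance at least `T` from the level `kχ` when it leaves
  -- the prefix of a cell of `𝒜^h`.
  refine ⟨(T + distortionConst a b γ H c₀ r - Real.log c₀) / χ, fun k h h' hh hM ξ => ?_⟩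
  set m := tauT f a b χ h ξ
  have hlevel : T ≤ k * χ -
      wordSum (derivCocycle f xc) (wordPrefix m ξ) (shift^[m] ξ) := by
    have hwalk := walk_add_wordAppend_wordPrefix (derivCocycle f xc) m 0 ξ (shift^[m] ξ)
    rw [wordAppend_wordPrefix_shift] at hwalk
    have := hf.walk_tauT_le hxc (mul_nonneg hh hχ.le) ξ
    rw [div_le_iff₀ hχ] at hM
    simp only [add_zero, walk, birkhoffSum_zero] at hwalk this
    linarith
  obtain ⟨hpos, hJ⟩ := hT (k * χ) ξ (shift^[m] ξ) m
    (cellA f a b χ h' (shift^[tauS f xc χ k ξ - 1] ξ)) (measurableSet_cylinder _ _)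
    (hP.measure_cylinder_pos _ _) hlevel
  have hcell := hf.cell2_inter_Sw_mem hxc χ k h h' ξ
  have hcell_univ : cell2 f xc a b χ k h h' ξ = _ := (inter_univ _).symm.trans (hcell univ)
  refine ⟨?_, fun J hJo => ?_⟩
  · rw [hcell_univ]
    exact ENNReal.toReal_pos_iff.mp hpos |>.1
  · rw [condP, hcell J, hcell_univ]
    exact hJ J hJo

theorem stmt9 {n : ℕ} (hn : 2 ≤ n) (f : Fin n → ℝ → ℝ) (a b : ℝ) (hab : a < b)
    (γ : ℝ) (hγ : 0 < γ)
    (hmaps : ∀ i, MapsTo (f i) (Icc a b) (Icc a b))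
    (hsmooth : ∀ i, ContDiff ℝ 1 (f i))
    (hHolder : ∃ C : ℝ, 0 < C ∧ ∀ i, ∀ x ∈ Icc a b, ∀ y ∈ Icc a b,
      |deriv (f i) x - deriv (f i) y| ≤ C * |x - y| ^ γ)
    (c0 c1 : ℝ) (hc0 : 0 < c0) (hc1 : c1 < 1)
    (hcontr : ∀ i, ∀ x ∈ Icc a b, c0 ≤ |deriv (f i) x| ∧ |deriv (f i) x| ≤ c1)
    (hfix : ∃ i j : Fin n, ∃ y ∈ Icc a b, ∃ z ∈ Icc a b, f i y = y ∧ f j z = z ∧ y ≠ z)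
    (x₀ : ℝ) (hx₀ : x₀ ∈ Icc a b)
    (xc : (ℕ → Fin n) → ℝ)
    (hxc : ∀ ω, Tendsto (fun m => wordComp f ω m x₀) atTop (nhds (xc ω)))
    (ρ : ℝ) (hρ : ρ = (sSup {s : ℝ | ∃ i, ∃ x ∈ Icc a b, s = |deriv (f i) x|}) ^ γ)
    (κ : ℝ) (hκ : κ ∈ Ioc (0 : ℝ) 1)
    (hΛ : LambdaC f xc ρ κ = {0})
    (p : Fin n → ℝ≥0∞) (hp : ∀ i, 0 < p i) (hp1 : ∑ i, p i = 1)
    (P : Measure (ℕ → Fin n)) (hPprob : IsProbabilityMeasure P)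
    (hBern : ∀ (s : Finset ℕ) (w : ℕ → Fin n),
      P {ω | ∀ i ∈ s, ω i = w i} = ∏ i ∈ s, p (w i))
    (χ : ℝ) (hχpos : 0 < χ)
    (hχ : ∀ᵐ ω ∂P, Tendsto (fun m : ℕ => Sw f xc m ω / m) atTop (nhds χ))
    (D D' : ℝ)
    (hD : D = sInf {s : ℝ | ∃ i, ∃ x ∈ Icc a b, s = -Real.log |deriv (f i) x|})
    (hD' : D' = sSup {s : ℝ | ∃ i, ∃ x ∈ Icc a b, s = -Real.log |deriv (f i) x|})
    :
    ∀ ε : ℝ, 0 < ε → ∃ M : ℝ, ∀ k h h' : ℝ, 0 < k → 0 < h → 0 < h' →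
      M ≤ h → M ≤ k - h → ∀ ξ₀ : ℕ → Fin n,
        ∃ A : Set (ℕ → Fin n), MeasurableSet A ∧ A ⊆ cellA f a b χ h ξ₀ ∧
          (1 - ε) * (P (cellA f a b χ h ξ₀)).toReal ≤ (P A).toReal ∧
          ∀ ξ ∈ A, 0 < P (cell2 f xc a b χ k h h' ξ) ∧
            ∀ J : Set ℝ, J ⊆ Icc (k * χ) (k * χ + D') → J.OrdConnected →
              |condP P (cell2 f xc a b χ k h h' ξ)
                  {ω | Sw f xc (tauS f xc χ k ω) ω ∈ J} -
                GammaVal P f xc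
                  (cellA f a b χ h' (shift^[tauS f xc χ k ξ - 1] ξ)) χ k J| ≤ ε := by
  obtain ⟨H, hH, hholder⟩ := hHolder
  have : Nonempty (Fin n) := ⟨⟨0, by omega⟩⟩
  have hf := isContractingIFS_sSup hab.le hγ hmaps hH.le hholder hc0 hc1 hcontr
  have hP := isBernoulli_of_finset hp hp1 hBern
  intro ε hε
  obtain ⟨M, hM⟩ := stmt9_general hf (hf.isCodingMap_of_tendsto hx₀ hxc) hκ (hρ ▸ hΛ.subset) hP
    hχpos hε
  refine ⟨M, fun k h h' _ hh _ _ hkh ξ₀ => ⟨cellA f a b χ h ξ₀, measurableSet_cylinder ξ₀ _,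
    Subset.rfl, mul_le_of_le_one_left ENNReal.toReal_nonneg (by linarith), fun ξ _ => ?_⟩⟩
  exact (hM k h h' hh.le hkh ξ).imp_right fun hJ J _ hJo => hJ J hJo
end
end

section
/- Let Φ be a finite family of differentiable self-maps of a compact interval I such that there are 0 < κ' ≤ κ < 1 with κ' ≤ |f'(x)| ≤ κ for all f ∈ Φ, x ∈ I, and such that each f' is γ-Hölder with constant C (γ ∈ (0,1), C > 0). Then for every β ∈ (0,γ) there exists ε ∈ (0,1) such that for every n ≥ 1, every map g that is a composition of n members of Φ, and all x, y ∈ I with |x−y| < ε: |g(x) − g(y) − g'(y)·(x−y)| ≤ |g'(y)|·|x−y|^{1+β}. -/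
/-!
Bounded distortion. For a word `w` put `g = compList f w`. The chain rule writes `g' z / g' y` as a
product of ratios of derivatives of single maps at points whose distance is at most
`κ ^ k * |z - y|`, `k = 0, 1, …`. Each ratio is within `K * (κ ^ γ) ^ k * |z - y| ^ γ` of `1`,
with `K = C / κ'`, and these errors form a convergent geometric series. Hence
`|g' z - g' y| ≤ (exp (A * |z - y| ^ γ) - 1) * |g' y|` with `A` independent of `w`. Since `β < γ`,
the factor is at most `|z - y| ^ β` once `|z - y|` is small, and the mean value inequality
for `z ↦ g z - g' y * z` gives the claim.
-/

open Set

noncomputable section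

/-- Composition of the maps of an IFS along a finite word:
`compList f [i₁, …, i_ℓ] = f i₁ ∘ ⋯ ∘ f i_ℓ`. -/
def compList {ι : Type*} (f : ι → ℝ → ℝ) : List ι → ℝ → ℝ
  | [] => id
  | i :: l => f i ∘ compList f l

theorem norm_image_sub_sub_smul_le {𝕜 E : Type*} [RCLike 𝕜] [NormedAddCommGroup E]
    [NormedSpace 𝕜 E] {g : 𝕜 → E} {s : Set 𝕜} {x y : 𝕜} {c : E} {η : ℝ} (hs : Convex ℝ s)
    (hg : ∀ z ∈ s, DifferentiableAt 𝕜 g z) (hη : ∀ z ∈ s, ‖deriv g z - c‖ ≤ η)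
    (hx : x ∈ s) (hy : y ∈ s) : ‖g x - g y - (x - y) • c‖ ≤ η * ‖x - y‖ := by
  have hderiv : ∀ z ∈ s, HasDerivWithinAt (fun z => g z - z • c) (deriv g z - c) s z := by
    intro z hz
    simpa only [one_smul] using
      ((hg z hz).hasDerivAt.fun_sub ((hasDerivAt_id' z).smul_const c)).hasDerivWithinAt
  have hmean := hs.norm_image_sub_le_of_norm_hasDerivWithin_le hderiv hη hy hx
  rwa [sub_sub_sub_comm, ← sub_smul] at hmean

theorem abs_mul_sub_mul_le {R : Type*} [CommRing R] [LinearOrder R] [IsStrictOrderedRing R]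
    {p q r s a b : R} (hpq : |p - q| ≤ a * |q|) (hrs : |r - s| ≤ b * |s|) :
    |p * r - q * s| ≤ ((1 + a) * (1 + b) - 1) * |q * s| := by
  have hr : |r| ≤ (1 + b) * |s| := by linarith [abs_sub_abs_le_abs_sub r s]
  have haq : 0 ≤ a * |q| := (abs_nonneg _).trans hpq
  calc |p * r - q * s| = |(p - q) * r + q * (r - s)| := by ring_nf
    _ ≤ |p - q| * |r| + |q| * |r - s| := by
      rw [← abs_mul, ← abs_mul]; exact abs_add_le _ _
    _ ≤ a * |q| * ((1 + b) * |s|) + |q| * (b * |s|) := by gcongr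
    _ = ((1 + a) * (1 + b) - 1) * |q * s| := by rw [abs_mul]; ring

theorem le_div_mul_mul_of_le {𝕜 : Type*} [Field 𝕜] [LinearOrder 𝕜] [IsStrictOrderedRing 𝕜]
    {u c m t r : 𝕜} (hm : 0 < m) (hmr : m ≤ r) (hu : 0 ≤ u) (h : u ≤ c * t) :
    u ≤ c / m * t * r := by
  calc u ≤ u * (r / m) := le_mul_of_one_le_right hu ((one_le_div hm).2 hmr)
    _ ≤ c * t * (r / m) := mul_le_mul_of_nonneg_right h (div_nonneg (hm.le.trans hmr) hm.le)
    _ = c / m * t * r := by ring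

theorem geom_sum_le_inv_one_sub {𝕜 : Type*} [Field 𝕜] [LinearOrder 𝕜] [IsStrictOrderedRing 𝕜]
    {r : 𝕜} (hr0 : 0 ≤ r) (hr1 : r < 1) (n : ℕ) : ∑ k ∈ Finset.range n, r ^ k ≤ (1 - r)⁻¹ := by
  rw [← one_div, le_div_iff₀ (sub_pos.2 hr1), geom_sum_mul_neg]
  exact sub_le_self 1 (pow_nonneg hr0 n)

section Asymptotics

open Asymptotics Filter Topology

theorem rpow_isLittleO_rpow_nhdsGT_zero {β γ : ℝ} (h : β < γ) :
    (fun t : ℝ => t ^ γ) =o[𝓝[>] 0] fun t => t ^ β := by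
  have hdiff : Tendsto (fun t : ℝ => t ^ (γ - β)) (𝓝[>] 0) (𝓝 0) := by
    have hcont := Real.continuousAt_rpow_const 0 (γ - β) (Or.inr (sub_pos.2 h).le)
    simpa only [Real.zero_rpow (sub_pos.2 h).ne'] using hcont.tendsto.mono_left nhdsWithin_le_nhds
  refine isLittleO_iff_exists_eq_mul.2 ⟨_, hdiff, ?_⟩
  filter_upwards [self_mem_nhdsWithin] with t ht
  rw [Pi.mul_apply, ← Real.rpow_add ht, sub_add_cancel]

theorem exp_mul_rpow_sub_one_isLittleO_rpow {β γ : ℝ} (hγ : 0 < γ) (h : β < γ) (A : ℝ) :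
    (fun t : ℝ => Real.exp (A * t ^ γ) - 1) =o[𝓝[>] 0] fun t => t ^ β := by
  have hzero : Tendsto (fun t : ℝ => A * t ^ γ) (𝓝[>] 0) (𝓝 0) := by
    have hcont := (Real.continuousAt_rpow_const 0 γ (Or.inr hγ.le)).const_mul A
    simpa only [Real.zero_rpow hγ.ne', mul_zero] using hcont.tendsto.mono_left nhdsWithin_le_nhds
  have hexp : (fun u : ℝ => Real.exp u - 1) =O[𝓝 0] fun u => u := by
    simpa only [Real.exp_zero, sub_zero] using (Real.hasDerivAt_exp 0).differentiableAt.isBigO_sub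
  exact (hexp.comp_tendsto hzero).trans_isLittleO
    ((rpow_isLittleO_rpow_nhdsGT_zero h).const_mul_left A)

theorem exists_forall_exp_mul_rpow_sub_one_le_rpow {β γ : ℝ} (hγ : 0 < γ) (h : β < γ) (A : ℝ) :
    ∃ ε : ℝ, 0 < ε ∧ ε < 1 ∧ ∀ t, 0 < t → t < ε → Real.exp (A * t ^ γ) - 1 ≤ t ^ β := by
  obtain ⟨δ, hδ, hle⟩ := mem_nhdsGT_iff_exists_Ioo_subset.1
    ((exp_mul_rpow_sub_one_isLittleO_rpow hγ h A).bound one_pos)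
  refine ⟨min δ (1 / 2), lt_min hδ one_half_pos, (min_le_right _ _).trans_lt one_half_lt_one,
    fun t ht htε => ?_⟩
  have hnorm : ‖Real.exp (A * t ^ γ) - 1‖ ≤ 1 * ‖t ^ β‖ := hle ⟨ht, htε.trans_le (min_le_left _ _)⟩
  rw [one_mul, Real.norm_of_nonneg (Real.rpow_nonneg ht.le β)] at hnorm
  exact (le_abs_self _).trans hnorm

end Asymptotics

section Words

variable {ι : Type*} {f : ι → ℝ → ℝ} {s : Set ℝ} {κ γ K : ℝ} {x y : ℝ}

theorem mapsTo_compList (hmaps : ∀ i, MapsTo (f i) s s) (w : List ι) :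
    MapsTo (compList f w) s s := by
  induction w with
  | nil => exact mapsTo_id s
  | cons i l ih => exact (hmaps i).comp ih

theorem differentiableAt_compList (hmaps : ∀ i, MapsTo (f i) s s)
    (hdiff : ∀ i, ∀ x ∈ s, DifferentiableAt ℝ (f i) x) (w : List ι) (hx : x ∈ s) :
    DifferentiableAt ℝ (compList f w) x := by
  induction w with
  | nil => exact differentiableAt_id
  | cons i l ih => exact (hdiff i _ (mapsTo_compList hmaps l hx)).comp x ih

theorem deriv_compList_cons (hmaps : ∀ i, MapsTo (f i) s s)
    (hdiff : ∀ i, ∀ x ∈ s, DifferentiableAt ℝ (f i) x) (i : ι) (l : List ι) (hx : x ∈ s) :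
    deriv (compList f (i :: l)) x = deriv (f i) (compList f l x) * deriv (compList f l) x :=
  deriv_comp x (hdiff i _ (mapsTo_compList hmaps l hx)) (differentiableAt_compList hmaps hdiff l hx)

theorem abs_compList_sub_le (hs : Convex ℝ s) (hκ : 0 ≤ κ) (hmaps : ∀ i, MapsTo (f i) s s)
    (hdiff : ∀ i, ∀ x ∈ s, DifferentiableAt ℝ (f i) x)
    (hbound : ∀ i, ∀ x ∈ s, |deriv (f i) x| ≤ κ) (w : List ι) (hx : x ∈ s) (hy : y ∈ s) :
    |compList f w x - compList f w y| ≤ κ ^ w.length * |x - y| := by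
  induction w with
  | nil => rw [List.length_nil, pow_zero, one_mul]; rfl
  | cons i l ih =>
    calc |compList f (i :: l) x - compList f (i :: l) y|
        ≤ κ * |compList f l x - compList f l y| :=
          hs.norm_image_sub_le_of_norm_deriv_le (hdiff i) (hbound i)
            (mapsTo_compList hmaps l hy) (mapsTo_compList hmaps l hx)
      _ ≤ κ * (κ ^ l.length * |x - y|) := by gcongr
      _ = κ ^ (i :: l).length * |x - y| := by rw [List.length_cons]; ring

theorem abs_compList_sub_rpow_le (hs : Convex ℝ s) (hκ : 0 ≤ κ) (hγ : 0 ≤ γ)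
    (hmaps : ∀ i, MapsTo (f i) s s) (hdiff : ∀ i, ∀ x ∈ s, DifferentiableAt ℝ (f i) x)
    (hbound : ∀ i, ∀ x ∈ s, |deriv (f i) x| ≤ κ) (w : List ι) (hx : x ∈ s) (hy : y ∈ s) :
    |compList f w x - compList f w y| ^ γ ≤ (κ ^ γ) ^ w.length * |x - y| ^ γ := by
  calc |compList f w x - compList f w y| ^ γ ≤ (κ ^ w.length * |x - y|) ^ γ := by
        gcongr; exact abs_compList_sub_le hs hκ hmaps hdiff hbound w hx hy
    _ = (κ ^ γ) ^ w.length * |x - y| ^ γ := by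
        rw [Real.mul_rpow (by positivity) (abs_nonneg _), Real.rpow_pow_comm hκ]

theorem abs_deriv_compList_sub_le_exp_sum (hs : Convex ℝ s) (hκ : 0 ≤ κ) (hγ : 0 ≤ γ) (hK : 0 ≤ K)
    (hmaps : ∀ i, MapsTo (f i) s s) (hdiff : ∀ i, ∀ x ∈ s, DifferentiableAt ℝ (f i) x)
    (hbound : ∀ i, ∀ x ∈ s, |deriv (f i) x| ≤ κ)
    (hHolder : ∀ i, ∀ x ∈ s, ∀ y ∈ s,
      |deriv (f i) x - deriv (f i) y| ≤ K * |x - y| ^ γ * |deriv (f i) y|)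
    (w : List ι) (hx : x ∈ s) (hy : y ∈ s) :
    |deriv (compList f w) x - deriv (compList f w) y| ≤
      (Real.exp (K * |x - y| ^ γ * ∑ k ∈ Finset.range w.length, (κ ^ γ) ^ k) - 1) *
        |deriv (compList f w) y| := by
  induction w with
  | nil => simp [compList]
  | cons i l ih =>
    rw [deriv_compList_cons hmaps hdiff i l hx, deriv_compList_cons hmaps hdiff i l hy,
      List.length_cons, Finset.sum_range_succ]
    set σ := ∑ k ∈ Finset.range l.length, (κ ^ γ) ^ k
    set a := K * |compList f l x - compList f l y| ^ γ
    have ha : a ≤ K * |x - y| ^ γ * (κ ^ γ) ^ l.length := by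
      rw [mul_assoc, mul_comm (|x - y| ^ γ)]
      exact mul_le_mul_of_nonneg_left
        (abs_compList_sub_rpow_le hs hκ hγ hmaps hdiff hbound l hx hy) hK
    refine (abs_mul_sub_mul_le (hHolder i _ (mapsTo_compList hmaps l hx) _
      (mapsTo_compList hmaps l hy)) ih).trans ?_
    gcongr
    calc (1 + a) * (1 + (Real.exp (K * |x - y| ^ γ * σ) - 1))
        = (a + 1) * Real.exp (K * |x - y| ^ γ * σ) := by ring
      _ ≤ Real.exp a * Real.exp (K * |x - y| ^ γ * σ) := by
          gcongr; exact Real.add_one_le_exp a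
      _ = Real.exp (K * |x - y| ^ γ * σ + a) := by rw [mul_comm, Real.exp_add]
      _ ≤ Real.exp (K * |x - y| ^ γ * (σ + (κ ^ γ) ^ l.length)) := by rw [mul_add]; gcongr

theorem abs_deriv_compList_sub_le_exp (hs : Convex ℝ s) (hκ0 : 0 ≤ κ) (hκ1 : κ < 1) (hγ : 0 < γ)
    (hK : 0 ≤ K) (hmaps : ∀ i, MapsTo (f i) s s)
    (hdiff : ∀ i, ∀ x ∈ s, DifferentiableAt ℝ (f i) x)
    (hbound : ∀ i, ∀ x ∈ s, |deriv (f i) x| ≤ κ)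
    (hHolder : ∀ i, ∀ x ∈ s, ∀ y ∈ s,
      |deriv (f i) x - deriv (f i) y| ≤ K * |x - y| ^ γ * |deriv (f i) y|)
    (w : List ι) (hx : x ∈ s) (hy : y ∈ s) :
    |deriv (compList f w) x - deriv (compList f w) y| ≤
      (Real.exp (K * (1 - κ ^ γ)⁻¹ * |x - y| ^ γ) - 1) * |deriv (compList f w) y| := by
  refine (abs_deriv_compList_sub_le_exp_sum hs hκ0 hγ.le hK hmaps hdiff hbound hHolder w
    hx hy).trans ?_
  rw [mul_right_comm K]
  gcongr
  exact geom_sum_le_inv_one_sub (Real.rpow_nonneg hκ0 γ) (Real.rpow_lt_one hκ0 hκ1 hγ) _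

end Words

theorem stmt10_general {ι : Type*} {f : ι → ℝ → ℝ} {s : Set ℝ} {κ γ K β : ℝ} (hs : Convex ℝ s)
    (hκ0 : 0 ≤ κ) (hκ1 : κ < 1) (hγ : 0 < γ) (hK : 0 ≤ K) (hmaps : ∀ i, MapsTo (f i) s s)
    (hdiff : ∀ i, ∀ x ∈ s, DifferentiableAt ℝ (f i) x)
    (hbound : ∀ i, ∀ x ∈ s, |deriv (f i) x| ≤ κ)
    (hHolder : ∀ i, ∀ x ∈ s, ∀ y ∈ s,
      |deriv (f i) x - deriv (f i) y| ≤ K * |x - y| ^ γ * |deriv (f i) y|)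
    (hβγ : β < γ) :
    ∃ ε : ℝ, 0 < ε ∧ ε < 1 ∧ ∀ w : List ι, ∀ x ∈ s, ∀ y ∈ s, |x - y| < ε →
      |compList f w x - compList f w y - deriv (compList f w) y * (x - y)|
        ≤ |deriv (compList f w) y| * |x - y| ^ (1 + β) := by
  set A := K * (1 - κ ^ γ)⁻¹
  have hA : 0 ≤ A :=
    mul_nonneg hK (inv_nonneg.2 (sub_nonneg.2 (Real.rpow_le_one hκ0 hκ1.le hγ.le)))
  obtain ⟨ε, hε0, hε1, hε⟩ := exists_forall_exp_mul_rpow_sub_one_le_rpow hγ hβγ A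
  refine ⟨ε, hε0, hε1, fun w x hx y hy hxy => ?_⟩
  rcases eq_or_ne x y with rfl | hne
  · rw [sub_self, sub_self, mul_zero, sub_zero, abs_zero]
    positivity
  have ht : 0 < |x - y| := abs_sub_pos.2 hne
  have hsub : uIcc y x ⊆ s := hs.ordConnected.uIcc_subset hy hx
  have hdist : ∀ z ∈ uIcc y x, |deriv (compList f w) z - deriv (compList f w) y| ≤
      |x - y| ^ β * |deriv (compList f w) y| := fun z hz =>
    calc |deriv (compList f w) z - deriv (compList f w) y|
        ≤ (Real.exp (A * |z - y| ^ γ) - 1) * |deriv (compList f w) y| :=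
          abs_deriv_compList_sub_le_exp hs hκ0 hκ1 hγ hK hmaps hdiff hbound hHolder w (hsub hz) hy
      _ ≤ (Real.exp (A * |x - y| ^ γ) - 1) * |deriv (compList f w) y| := by
          gcongr ?_ * _; gcongr Real.exp (A * ?_ ^ γ) - 1; exact abs_sub_left_of_mem_uIcc hz
      _ ≤ |x - y| ^ β * |deriv (compList f w) y| := by gcongr; exact hε _ ht hxy
  calc |compList f w x - compList f w y - deriv (compList f w) y * (x - y)|
      ≤ |x - y| ^ β * |deriv (compList f w) y| * |x - y| := by
        rw [mul_comm _ (x - y)]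
        exact norm_image_sub_sub_smul_le (convex_uIcc y x)
          (fun z hz => differentiableAt_compList hmaps hdiff w (hsub hz)) hdist
          right_mem_uIcc left_mem_uIcc
    _ = |deriv (compList f w) y| * |x - y| ^ (1 + β) := by
        rw [Real.rpow_add ht, Real.rpow_one]; ring

theorem stmt10 {ι : Type*} [Fintype ι] (f : ι → ℝ → ℝ) (a b : ℝ) (hab : a < b)
    (κ' κ : ℝ) (hκ'0 : 0 < κ') (hκ'κ : κ' ≤ κ) (hκ1 : κ < 1)
    (γ C : ℝ) (hγ0 : 0 < γ) (hγ1 : γ < 1) (hC : 0 < C)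
    (hmaps : ∀ i, MapsTo (f i) (Icc a b) (Icc a b))
    (hdiff : ∀ i, Differentiable ℝ (f i))
    (hbound : ∀ i, ∀ x ∈ Icc a b, κ' ≤ |deriv (f i) x| ∧ |deriv (f i) x| ≤ κ)
    (hHolder : ∀ i, ∀ x ∈ Icc a b, ∀ y ∈ Icc a b,
      |deriv (f i) x - deriv (f i) y| ≤ C * |x - y| ^ γ)
    (β : ℝ) (hβ0 : 0 < β) (hβγ : β < γ) :
    ∃ ε : ℝ, 0 < ε ∧ ε < 1 ∧ ∀ w : List ι, w ≠ [] →
      ∀ x ∈ Icc a b, ∀ y ∈ Icc a b, |x - y| < ε →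
        |compList f w x - compList f w y - deriv (compList f w) y * (x - y)|
          ≤ |deriv (compList f w) y| * |x - y| ^ (1 + β) := by
  obtain ⟨ε, hε0, hε1, hε⟩ := stmt10_general (convex_Icc a b) (hκ'0.le.trans hκ'κ) hκ1 hγ0
    (div_pos hC hκ'0).le hmaps (fun i x _ => hdiff i x) (fun i x hx => (hbound i x hx).2)
    (fun i x hx y hy => le_div_mul_mul_of_le hκ'0 (hbound i y hy).1 (abs_nonneg _)
      (hHolder i x hx y hy)) hβγ
  exact ⟨ε, hε0, hε1, fun w _ => hε w⟩
end
end

section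
/- Let (Ω, ℙ) be a probability space, let 0 < D ≤ D' be reals, let X : Ω → [D, D'] be measurable, let B ⊆ Ω be measurable with ℙ(B) > 0, and let a ∈ ℝ. Define, for Borel sets E ⊆ ℝ, Γ(E) = (∫_B λ([a, a+X(ω)] ∩ E) dℙ(ω)) / (∫_B X dℙ), where λ is Lebesgue measure. Then Γ is a Borel probability measure supported in [a, a+D'], Γ is absolutely continuous with respect to λ restricted to [a, a+D'], and its density is bounded almost everywhere by 1/D. -/
/-!
`Γ` is the law of the second coordinate of a point drawn uniformly from the region
`{(ω, x) | ω ∈ B, a ≤ x ≤ a + X ω}` of `Ω × ℝ`, with respect to `P × λ`. Integrating the region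
first in `x` gives the formula for `Γ E`; integrating first in `ω` gives its density at `x`, which
is the measure of a horizontal section divided by the measure of the whole region. That section
has measure at most `P B`, and the region has measure at least `D * P B` because each vertical
section has length `X ω ≥ D`.
-/

open MeasureTheory Set
open scoped ENNReal

noncomputable section

section Sections

variable {Ω α : Type*} [MeasurableSpace Ω] [MeasurableSpace α]

/-- The law of the second coordinate of a uniform random point of `S ⊆ Ω × α`, that is, the
normalized average over `ω` of the restrictions of `μ` to the vertical sections of `S`. It is the
zero measure when `S` has measure `0` or `∞`. -/
def sectionLaw (Q : Measure Ω) (μ : Measure α) (S : Set (Ω × α)) : Measure α :=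
  (ProbabilityTheory.cond (Q.prod μ) S).snd

/-- The density of `sectionLaw Q μ S` with respect to `μ`: the relative size of the horizontal
sections of `S`. -/
def sectionDensity (Q : Measure Ω) (μ : Measure α) (S : Set (Ω × α)) (x : α) : ℝ≥0∞ :=
  Q ((·, x) ⁻¹' S) / Q.prod μ S

variable {Q : Measure Ω} {μ : Measure α} {S : Set (Ω × α)} {E I : Set α}

theorem sectionLaw_apply (hE : MeasurableSet E) :
    sectionLaw Q μ S E = Q.prod μ (S ∩ Prod.snd ⁻¹' E) / Q.prod μ S := by
  rw [sectionLaw, Measure.snd_apply hE, ProbabilityTheory.cond_apply' (measurable_snd hE),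
    ENNReal.div_eq_inv_mul]

theorem isProbabilityMeasure_sectionLaw (h0 : Q.prod μ S ≠ 0) (htop : Q.prod μ S ≠ ∞) :
    IsProbabilityMeasure (sectionLaw Q μ S) :=
  have := ProbabilityTheory.cond_isProbabilityMeasure_of_finite h0 htop
  inferInstanceAs (IsProbabilityMeasure (ProbabilityTheory.cond (Q.prod μ) S).snd)

theorem sectionLaw_compl_eq_zero (hS : MeasurableSet S) (hI : MeasurableSet I)
    (hSI : ∀ᵐ ω ∂Q, Prod.mk ω ⁻¹' S ⊆ I) : sectionLaw Q μ S Iᶜ = 0 := by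
  have hnull : Q.prod μ (S ∩ Prod.snd ⁻¹' Iᶜ) = 0 := by
    refine Measure.measure_prod_null_of_ae_null (hS.inter (measurable_snd hI.compl)) ?_
    filter_upwards [hSI] with ω hω
    have hempty : Prod.mk ω ⁻¹' (S ∩ Prod.snd ⁻¹' Iᶜ) = ∅ :=
      (disjoint_compl_right_iff_subset.2 hω).inter_eq
    simp only [hempty, measure_empty, Pi.zero_apply]
  rw [sectionLaw_apply hI.compl, hnull, ENNReal.zero_div]

variable [SFinite μ]

theorem integral_toReal_measure_prodMk_left (hS : MeasurableSet S) (htop : Q.prod μ S ≠ ∞) :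
    ∫ ω, (μ (Prod.mk ω ⁻¹' S)).toReal ∂Q = (Q.prod μ S).toReal := by
  rw [integral_toReal (measurable_measure_prodMk_left hS).aemeasurable
    (Measure.ae_measure_lt_top hS htop), Measure.prod_apply hS]

theorem sectionLaw_apply_eq_ofReal_integral (hS : MeasurableSet S) (h0 : Q.prod μ S ≠ 0)
    (htop : Q.prod μ S ≠ ∞) (hE : MeasurableSet E) :
    sectionLaw Q μ S E = ENNReal.ofReal
      ((∫ ω, (μ (Prod.mk ω ⁻¹' S ∩ E)).toReal ∂Q) / ∫ ω, (μ (Prod.mk ω ⁻¹' S)).toReal ∂Q) := by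
  have htopE : Q.prod μ (S ∩ Prod.snd ⁻¹' E) ≠ ∞ := measure_ne_top_of_subset inter_subset_left htop
  have hnum : ∫ ω, (μ (Prod.mk ω ⁻¹' S ∩ E)).toReal ∂Q =
      (Q.prod μ (S ∩ Prod.snd ⁻¹' E)).toReal :=
    integral_toReal_measure_prodMk_left (hS.inter (measurable_snd hE)) htopE
  rw [hnum, integral_toReal_measure_prodMk_left hS htop, ← ENNReal.toReal_div,
    ENNReal.ofReal_toReal (ENNReal.div_ne_top htopE h0), sectionLaw_apply hE]

theorem mul_measure_univ_le_prod {d : ℝ≥0∞} (hS : MeasurableSet S)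
    (hd : ∀ᵐ ω ∂Q, d ≤ μ (Prod.mk ω ⁻¹' S)) : d * Q univ ≤ Q.prod μ S := by
  rw [Measure.prod_apply hS, ← lintegral_const]
  exact lintegral_mono_ae hd

theorem sectionDensity_le_inv {d : ℝ≥0∞} (hS : MeasurableSet S)
    (hd : ∀ᵐ ω ∂Q, d ≤ μ (Prod.mk ω ⁻¹' S)) (x : α) : sectionDensity Q μ S x ≤ d⁻¹ := by
  rw [ENNReal.le_inv_iff_mul_le]
  calc sectionDensity Q μ S x * d = d * Q ((·, x) ⁻¹' S) / Q.prod μ S := by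
        rw [sectionDensity, mul_comm, mul_div_assoc]
    _ ≤ d * Q univ / Q.prod μ S := by gcongr; exact subset_univ _
    _ ≤ Q.prod μ S / Q.prod μ S := by gcongr; exact mul_measure_univ_le_prod hS hd
    _ ≤ 1 := ENNReal.div_self_le_one

variable [SFinite Q]

theorem sectionLaw_eq_withDensity (hS : MeasurableSet S) :
    sectionLaw Q μ S = μ.withDensity (sectionDensity Q μ S) := by
  ext E hE
  have hslice (x : α) : Q ((·, x) ⁻¹' (S ∩ Prod.snd ⁻¹' E)) =
      E.indicator (fun x ↦ Q ((·, x) ⁻¹' S)) x := by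
    by_cases hx : x ∈ E <;> simp [hx, preimage_inter, preimage_preimage]
  simp only [sectionLaw_apply hE, withDensity_apply _ hE, sectionDensity, div_eq_mul_inv]
  rw [lintegral_mul_const _ (measurable_measure_prodMk_right hS),
    Measure.prod_apply_symm (hS.inter (measurable_snd hE)), lintegral_congr hslice,
    lintegral_indicator hE]

theorem sectionLaw_eq_withDensity_restrict (hS : MeasurableSet S) (hI : MeasurableSet I)
    (hSI : ∀ᵐ ω ∂Q, Prod.mk ω ⁻¹' S ⊆ I) :
    sectionLaw Q μ S = (μ.restrict I).withDensity (sectionDensity Q μ S) := by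
  rw [← restrict_withDensity hI, ← sectionLaw_eq_withDensity hS]
  exact (Measure.restrict_eq_self_of_ae_mem (sectionLaw_compl_eq_zero hS hI hSI)).symm

end Sections

section Intervals

variable {Ω : Type*}

/-- The region of `Ω × ℝ` whose vertical section over `ω` is the interval `[a, a + X ω]`. -/
def intervalRegion (a : ℝ) (X : Ω → ℝ) : Set (Ω × ℝ) :=
  {p | p.2 ∈ Icc a (a + X p.1)}

theorem volume_prodMk_preimage_intervalRegion (a : ℝ) (X : Ω → ℝ) (ω : Ω) :
    volume (Prod.mk ω ⁻¹' intervalRegion a X) = ENNReal.ofReal (X ω) := by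
  change volume (Icc a (a + X ω)) = _
  rw [Real.volume_Icc, add_sub_cancel_left]

variable [MeasurableSpace Ω] {X : Ω → ℝ}

theorem measurableSet_intervalRegion (hX : Measurable X) (a : ℝ) :
    MeasurableSet (intervalRegion a X) :=
  (measurableSet_le measurable_const measurable_snd).inter
    (measurableSet_le measurable_snd (by fun_prop))

theorem prod_volume_intervalRegion (Q : Measure Ω) (hX : Measurable X) (a : ℝ) :
    Q.prod volume (intervalRegion a X) = ∫⁻ ω, ENNReal.ofReal (X ω) ∂Q := by
  simp only [Measure.prod_apply (measurableSet_intervalRegion hX a),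
    volume_prodMk_preimage_intervalRegion]

end Intervals

theorem isFiniteMeasure_of_integrable_of_ae_le {Ω : Type*} [MeasurableSpace Ω] {Q : Measure Ω}
    {X : Ω → ℝ} {D : ℝ} (hD : 0 < D) (hX : Integrable X Q) (hDX : ∀ᵐ ω ∂Q, D ≤ X ω) :
    IsFiniteMeasure Q := by
  rw [← integrable_const_iff_isFiniteMeasure hD.ne']
  refine hX.mono' aestronglyMeasurable_const ?_
  filter_upwards [hDX] with ω hω
  rwa [Real.norm_of_nonneg hD.le]

theorem stmt13_general {Ω : Type*} [MeasurableSpace Ω] {Q : Measure Ω} (hQ : Q ≠ 0)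
    {D : ℝ} (hD : 0 < D) {X : Ω → ℝ} (hX : Measurable X) (hXint : Integrable X Q)
    (hDX : ∀ᵐ ω ∂Q, D ≤ X ω) (a : ℝ) {I : Set ℝ} (hI : MeasurableSet I)
    (hXI : ∀ᵐ ω ∂Q, Icc a (a + X ω) ⊆ I) :
    ∃ Γ : Measure ℝ, IsProbabilityMeasure Γ ∧
      (∀ E : Set ℝ, MeasurableSet E →
        Γ E = ENNReal.ofReal
          ((∫ ω, (volume (Icc a (a + X ω) ∩ E)).toReal ∂Q) / (∫ ω, X ω ∂Q))) ∧
      Γ Iᶜ = 0 ∧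
      Γ ≪ volume.restrict I ∧
      ∃ g : ℝ → ℝ≥0∞, Γ = (volume.restrict I).withDensity g ∧
        ∀ᵐ x ∂(volume : Measure ℝ), g x ≤ ENNReal.ofReal (1 / D) := by
  have := isFiniteMeasure_of_integrable_of_ae_le hD hXint hDX
  set S := intervalRegion a X
  have hS : MeasurableSet S := measurableSet_intervalRegion hX a
  have hd : ∀ᵐ ω ∂Q, ENNReal.ofReal D ≤ volume (Prod.mk ω ⁻¹' S) := by
    filter_upwards [hDX] with ω hω
    exact (ENNReal.ofReal_le_ofReal hω).trans_eq (volume_prodMk_preimage_intervalRegion a X ω).symm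
  have h0 : Q.prod volume S ≠ 0 := by
    have hpos : 0 < ENNReal.ofReal D * Q univ :=
      ENNReal.mul_pos (ENNReal.ofReal_pos.2 hD).ne' (Measure.measure_univ_ne_zero.2 hQ)
    exact (hpos.trans_le (mul_measure_univ_le_prod hS hd)).ne'
  have htop : Q.prod volume S ≠ ∞ :=
    prod_volume_intervalRegion Q hX a ▸ hXint.lintegral_lt_top.ne
  have hlength : ∫ ω, (volume (Prod.mk ω ⁻¹' S)).toReal ∂Q = ∫ ω, X ω ∂Q := by
    refine integral_congr_ae ?_
    filter_upwards [hDX] with ω hω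
    rw [volume_prodMk_preimage_intervalRegion, ENNReal.toReal_ofReal (hD.le.trans hω)]
  have hdensity := sectionLaw_eq_withDensity_restrict (μ := volume) hS hI hXI
  refine ⟨sectionLaw Q volume S, isProbabilityMeasure_sectionLaw h0 htop, fun E hE ↦ ?_,
    sectionLaw_compl_eq_zero hS hI hXI, ?_, sectionDensity Q volume S, hdensity,
    ae_of_all _ fun x ↦ ?_⟩
  · rw [← hlength]
    exact sectionLaw_apply_eq_ofReal_integral hS h0 htop hE
  · rw [hdensity]
    exact withDensity_absolutelyContinuous _ _
  · rw [one_div, ENNReal.ofReal_inv_of_pos hD]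
    exact sectionDensity_le_inv hS hd x

theorem stmt13 {Ω : Type*} [MeasurableSpace Ω] (P : Measure Ω) (hP : IsProbabilityMeasure P)
    (D D' : ℝ) (hD : 0 < D) (hDD' : D ≤ D')
    (X : Ω → ℝ) (hX : Measurable X) (hXr : ∀ ω, X ω ∈ Icc D D')
    (B : Set Ω) (hB : MeasurableSet B) (hBpos : 0 < P B) (a : ℝ) :
    ∃ Γ : Measure ℝ, IsProbabilityMeasure Γ ∧
      (∀ E : Set ℝ, MeasurableSet E →
        Γ E = ENNReal.ofReal
          ((∫ ω in B, (volume (Icc a (a + X ω) ∩ E)).toReal ∂P) / (∫ ω in B, X ω ∂P))) ∧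
      Γ (Icc a (a + D'))ᶜ = 0 ∧
      Γ ≪ volume.restrict (Icc a (a + D')) ∧
      ∃ g : ℝ → ℝ≥0∞, Γ = (volume.restrict (Icc a (a + D'))).withDensity g ∧
        ∀ᵐ x ∂(volume : Measure ℝ), g x ≤ ENNReal.ofReal (1 / D) :=
  stmt13_general (Measure.restrict_eq_zero.not.2 hBpos.ne') hD hX
    (.of_mem_Icc D D' hX.aemeasurable (ae_of_all _ hXr)) (ae_of_all _ fun ω ↦ (hXr ω).1) a
    measurableSet_Icc (ae_of_all _ fun ω ↦ Icc_subset_Icc_right (add_le_add_right (hXr ω).2 a))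
end
end
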